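/- arXiv:2404.15448 — 2 statements merged into one kernel-verified Lean document; each statement's English description precedes it below -/
import Mathlib

section
/- Let μ be a complex Poisson measure on ℝ^d, let E = ∪_n B(x_n, R_n) be a union of balls with R_n → ∞, and assume that for all distinct λ, λ' ∈ E ∩ supp μ one has |μ({λ})| ≥ c > 0 and |λ−λ'| ≥ β > 0, and that |μ̂|(B(0,r)) = O(r^d) as r → ∞. Then there exist N ∈ ℕ, points λ_1,…,λ_N ∈ supp μ, and nondegenerate (invertible) linear operators T_1,…,T_N on ℝ^d such that supp μ = ∪_{j=1}^N (T_j ℤ^d + λ_j) and μ = Σ_{j=1}^N Σ_{λ ∈ T_j ℤ^d + λ_j} Q_j(λ) δ_λ, where each Q_j is a Dirichlet series Q_j(x) = Σ_{ω ∈ Ω_j} q_ω^{(j)} e^{2πi x·ω} with q_ω^{(j)} ∈ ℂ, Σ_{ω ∈ Ω_j} |q_ω^{(j)}| < ∞, and Ω_j a bounded subset of ℝ^d. -/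
open MeasureTheory Metric Filter Topology Complex SchwartzMap Bornology
open scoped RealInnerProductSpace ENNReal

noncomputable section

/-- A continuous function `g` is *Bohr almost periodic* if for every `ε > 0` its set of
`ε`-almost periods is relatively dense. -/
def IsBohrAP {V : Type*} [SeminormedAddCommGroup V] (g : V → ℂ) : Prop :=
  Continuous g ∧ ∀ ε : ℝ, 0 < ε → ∃ L : ℝ, 0 < L ∧ ∀ x : V, ∃ τ : V,
    dist τ x < L ∧ ∀ y : V, ‖g (y + τ) - g y‖ < ε

/-- A pure point complex measure on `V`, described by its (countably supported) mass function. -/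
structure PPM (V : Type*) where
  mass : V → ℂ
  countable : (Function.support mass).Countable

namespace PPM

variable {V : Type*}

/-- The total variation of a pure point measure, evaluated on a set. -/
def var (μ : PPM V) (A : Set V) : ℝ≥0∞ := ∑' x : A, (‖μ.mass x‖₊ : ℝ≥0∞)

/-- Pairing of a pure point measure with a test function: `∫ φ dμ = Σ_x μ{x}·φ(x)`. -/
def pair (μ : PPM V) (φ : V → ℂ) : ℂ := ∑' x, μ.mass x * φ x

/-- Convolution `(μ ⋆ ψ)(t) = ∫ ψ(t - x) dμ(x)`. -/
def conv [SubtractionMonoid V] (μ : PPM V) (ψ : V → ℂ) (t : V) : ℂ :=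
  ∑' x, μ.mass x * ψ (t - x)

/-- A pure point measure is non-negative if each mass is a non-negative real number. -/
def Nonneg (μ : PPM V) : Prop := ∀ x, μ.mass x = (‖μ.mass x‖ : ℂ)

end PPM

/-- Euclidean space `ℝ^d`. -/
abbrev Ed (d : ℕ) := EuclideanSpace ℝ (Fin d)

variable {d : ℕ}

/-- Local finiteness: the total variation of every ball is finite. -/
def PPM.locFinite (μ : PPM (Ed d)) : Prop := ∀ r : ℝ, μ.var (ball 0 r) < ⊤

/-- The measure is a temperate distribution: it pairs (absolutely) with every Schwartz
function. -/
def PPM.temperate (μ : PPM (Ed d)) : Prop :=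
  ∀ φ : SchwartzMap (Ed d) ℂ, Summable fun x => μ.mass x * φ x

/-- `ν` is the distributional Fourier transform of `μ`: `μ(φ̂) = ν(φ)` on test functions. -/
def IsFT (μ ν : PPM (Ed d)) : Prop :=
  ∀ φ : SchwartzMap (Ed d) ℂ, HasCompactSupport φ →
    μ.pair ⇑(FourierTransform.fourierCLE ℂ (SchwartzMap (Ed d) ℂ) φ) = ν.pair ⇑φ

/-- A Poisson measure: a pure point measure which is a temperate distribution and whose
distributional Fourier transform is a pure point measure. -/
def IsPoisson (μ : PPM (Ed d)) : Prop :=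
  μ.locFinite ∧ μ.temperate ∧ ∃ ν : PPM (Ed d), ν.locFinite ∧ IsFT μ ν


/-- The shifted lattice `T ℤ^d + l`, where `T` is an invertible linear operator on `ℝ^d`. -/
def latt {d : ℕ} (T : Ed d ≃ₗ[ℝ] Ed d) (l : Ed d) : Set (Ed d) :=
  {x : Ed d | ∃ m : Fin d → ℤ, x = T ((WithLp.equiv 2 (Fin d → ℝ)).symm fun i => (m i : ℝ)) + l}

/-- The value at `x` of the Dirichlet series `Σ_ω q_ω e^{2πi x·ω}`. -/
def dser {d : ℕ} (q : ℕ → ℂ) (ω : ℕ → Ed d) (x : Ed d) : ℂ :=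
  ∑' i : ℕ, q i * Complex.exp (((2 * Real.pi * ⟪x, ω i⟫ : ℝ) : ℂ) * Complex.I)

/-!
Smooth `μ` at scale `ε`. The growth `|μ̂|(B(0, r)) = O(r ^ d)` makes the `ℓ¹`-norm of the Fourier
coefficients of the smoothings bounded uniformly in `ε`, so that in the limit the mass function
`m t = μ {t}` becomes a Fourier–Stieltjes function on `ℝ^d` with the discrete topology. Each
smoothing is also Bohr almost periodic; translating by common almost periods into the large balls
of `E` shows that the lower bounds `c` and `β` hold on the whole support.

Separation and almost periodicity force every double limit of translates
`lim_k lim_j m (s k - s j + t)` to be `0` or `m t`, which replaces the equation `m ^ 2 = m` in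
Cohen's idempotent theorem. Host's argument then writes `m` as a finite sum of functions whose
supports are finite unions of cosets of subgroups of `ℝ^d`, and so the support of `m` is such a
union too. A coset whose subgroup does not span `ℝ^d` is absorbed by the others, because an almost
periodic set cannot be approximated far away from finitely many proper subspaces. The remaining
subgroups are lattices, which by separation are commensurable as soon as their cosets meet and can
hence be refined to disjoint shifted lattices. On each of these `m` coincides with a smoothing,
whose frequencies may be reduced modulo the dual lattice.
-/

open scoped Real ComplexConjugate FourierTransform Pointwise

/-! ### Hilbert's inequality -/

section HilbertInequality

variable {κ : Type*} (s : Finset κ) (a : κ → ℤ) (z : κ → ℂ)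

lemma integral_mul_norm_sq_trigSum {w : ℝ → ℂ} (hw : Continuous w) :
    ∫ x in (0 : ℝ)..1, w x * (‖∑ k ∈ s, z k * exp (2 * π * I * a k * x)‖ ^ 2 : ℝ) =
      ∑ j ∈ s, ∑ k ∈ s, z k * conj (z j) * fourierCoeffOn zero_lt_one w (a j - a k) := by
  have hexpand (x : ℝ) : w x * (‖∑ k ∈ s, z k * exp (2 * π * I * a k * x)‖ ^ 2 : ℝ) =
      ∑ j ∈ s, ∑ k ∈ s, z k * conj (z j) *
        (exp (2 * π * I * ((-(a j - a k) : ℤ) : ℂ) * x) * w x) := by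
    rw [← normSq_eq_norm_sq, normSq_eq_conj_mul_self, map_sum, Finset.sum_mul_sum, Finset.mul_sum]
    refine Finset.sum_congr rfl fun j _ => ?_
    rw [Finset.mul_sum]
    refine Finset.sum_congr rfl fun k _ => ?_
    have hexp : exp (2 * π * I * ((-(a j - a k) : ℤ) : ℂ) * x) =
        conj (exp (2 * π * I * a j * x)) * exp (2 * π * I * a k * x) := by
      rw [← exp_conj, ← exp_add]
      simp only [map_mul, map_ofNat, conj_ofReal, conj_I, map_intCast]
      push_cast
      ring_nf
    rw [hexp, map_mul]
    ring
  have hint (j k : κ) : IntervalIntegrable (fun x : ℝ => z k * conj (z j) *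
      (exp (2 * π * I * ((-(a j - a k) : ℤ) : ℂ) * x) * w x)) volume 0 1 :=
    Continuous.intervalIntegrable (by fun_prop) _ _
  simp_rw [hexpand]
  rw [intervalIntegral.integral_finsetSum
    fun j _ => Continuous.intervalIntegrable (by fun_prop) _ _]
  refine Finset.sum_congr rfl fun j _ => ?_
  rw [intervalIntegral.integral_finsetSum fun k _ => hint j k]
  refine Finset.sum_congr rfl fun k _ => ?_
  rw [intervalIntegral.integral_const_mul, fourierCoeffOn_eq_integral]
  simp only [sub_zero, div_one, one_smul, fourier_coe_apply, ofReal_one, smul_eq_mul]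

lemma fourierCoeffOn_one (n : ℤ) :
    fourierCoeffOn zero_lt_one (fun _ : ℝ => (1 : ℂ)) n = if n = 0 then 1 else 0 := by
  rw [fourierCoeffOn_eq_integral]
  simp only [sub_zero, div_one, one_smul, fourier_coe_apply, ofReal_one, smul_eq_mul, mul_one]
  split_ifs with hn
  · simp [hn]
  · have hn' : 2 * π * I * ((-n : ℤ) : ℂ) ≠ 0 := by
      simp [Real.pi_ne_zero, hn]
    rw [integral_exp_mul_complex hn', ofReal_one, mul_one, mul_comm, exp_int_mul_two_pi_mul_I]
    simp

variable {s a}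

lemma integral_norm_sq_trigSum (ha : Set.InjOn a s) :
    ∫ x in (0 : ℝ)..1, ‖∑ k ∈ s, z k * exp (2 * π * I * a k * x)‖ ^ 2 = ∑ k ∈ s, ‖z k‖ ^ 2 := by
  have h := integral_mul_norm_sq_trigSum s a z (continuous_const (y := (1 : ℂ)))
  simp only [one_mul, intervalIntegral.integral_ofReal, fourierCoeffOn_one] at h
  have hdiag : ∀ j ∈ s, ∑ k ∈ s, z k * conj (z j) * (if a j - a k = 0 then 1 else 0) =
      ((‖z j‖ ^ 2 : ℝ) : ℂ) := fun j hj => by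
    rw [Finset.sum_eq_single_of_mem j hj fun k hk hkj => ?_]
    · simp [mul_conj, normSq_eq_norm_sq]
    · rw [if_neg (sub_ne_zero.2 fun h => hkj (ha hk hj h.symm)), mul_zero]
  rw [Finset.sum_congr rfl hdiag] at h
  exact_mod_cast h

/-- The kernel `(m - n)⁻¹` is the sequence of Fourier coefficients of the first Bernoulli
polynomial `x - 1/2`, which is bounded by `1/2` on `[0, 1]`. -/
theorem hilbert_inequality (ha : Set.InjOn a s) :
    ‖∑ j ∈ s, ∑ k ∈ s, ((a k : ℂ) - a j)⁻¹ * (z k * conj (z j))‖ ≤ π * ∑ k ∈ s, ‖z k‖ ^ 2 := by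
  set S := ∑ j ∈ s, ∑ k ∈ s, ((a k : ℂ) - a j)⁻¹ * (z k * conj (z j)) with hS
  have hcont : Continuous fun x : ℝ => bernoulliFun 1 x := Polynomial.continuous _
  have hint : ∫ x in (0 : ℝ)..1, (bernoulliFun 1 x : ℂ) *
      (‖∑ k ∈ s, z k * exp (2 * π * I * a k * x)‖ ^ 2 : ℝ) = (2 * π * I)⁻¹ * S := by
    rw [integral_mul_norm_sq_trigSum s a z (w := fun x => (bernoulliFun 1 x : ℂ))
      (continuous_ofReal.comp hcont), hS, Finset.mul_sum]
    refine Finset.sum_congr rfl fun j _ => ?_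
    rw [Finset.mul_sum]
    refine Finset.sum_congr rfl fun k _ => ?_
    have hcoeff := bernoulliFourierCoeff_eq one_ne_zero (a j - a k)
    rw [bernoulliFourierCoeff] at hcoeff
    rw [hcoeff, Nat.factorial_one, pow_one, Int.cast_sub, ← neg_sub (a k : ℂ), mul_neg,
      neg_div_neg_eq, Nat.cast_one, one_div, mul_inv]
    ring
  have hbound : ‖(2 * π * I)⁻¹ * S‖ ≤
      ∫ x in (0 : ℝ)..1, 2⁻¹ * ‖∑ k ∈ s, z k * exp (2 * π * I * a k * x)‖ ^ 2 := by
    rw [← hint]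
    refine intervalIntegral.norm_integral_le_of_norm_le zero_le_one
      (Eventually.of_forall fun x hx => ?_) (Continuous.intervalIntegrable (by fun_prop) _ _)
    rw [norm_mul, norm_real, norm_real, Real.norm_of_nonneg (sq_nonneg _)]
    gcongr
    rw [bernoulliFun, Polynomial.bernoulli_one, Real.norm_eq_abs, abs_le]
    simp only [Polynomial.map_sub, Polynomial.map_X, Polynomial.map_C, Polynomial.eval_sub,
      Polynomial.eval_X, Polynomial.eval_C, eq_ratCast, Rat.cast_inv, Rat.cast_ofNat]
    constructor <;> linarith [hx.1, hx.2]
  rw [intervalIntegral.integral_const_mul, integral_norm_sq_trigSum z ha, norm_mul, norm_inv,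
    norm_mul, norm_mul, norm_I, norm_real, Real.norm_of_nonneg Real.pi_pos.le, mul_one,
    Complex.norm_ofNat, inv_mul_le_iff₀ (by positivity)] at hbound
  linarith

end HilbertInequality

section TriangularSums

lemma sum_range_sum_range_of_diag_eq_zero {M : Type*} [AddCommMonoid M] {f : ℕ → ℕ → M}
    (hf : ∀ j, f j j = 0) (N : ℕ) :
    ∑ j ∈ Finset.range N, ∑ k ∈ Finset.range N, f j k =
      ∑ k ∈ Finset.range N, ∑ j ∈ Finset.range k, (f j k + f k j) := by
  induction N with
  | zero => simp
  | succ N ih =>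
    rw [Finset.sum_range_succ (fun k => ∑ j ∈ Finset.range k, (f j k + f k j)), ← ih]
    simp only [Finset.sum_range_succ, Finset.sum_add_distrib, hf, add_zero]
    abel

lemma sum_range_inv_sub (k : ℕ) :
    ∑ j ∈ Finset.range k, ((k : ℝ) - j)⁻¹ = ∑ i ∈ Finset.range k, 1 / ((i : ℝ) + 1) := by
  rw [← Finset.sum_range_reflect]
  refine Finset.sum_congr rfl fun j hj => ?_
  have hj' := Finset.mem_range.1 hj
  rw [one_div, Nat.sub_sub, Nat.cast_sub (by omega)]
  push_cast
  ring_nf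

lemma mul_sum_one_div_le_sum_sum_inv_sub (M : ℕ) :
    M * ∑ i ∈ Finset.range M, 1 / ((i : ℝ) + 1) ≤
      ∑ k ∈ Finset.range (2 * M), ∑ j ∈ Finset.range k, ((k : ℝ) - j)⁻¹ := by
  simp only [sum_range_inv_sub]
  calc M * ∑ i ∈ Finset.range M, 1 / ((i : ℝ) + 1)
      = ∑ k ∈ Finset.Ico M (2 * M), ∑ i ∈ Finset.range M, 1 / ((i : ℝ) + 1) := by
        rw [Finset.sum_const, Nat.card_Ico, two_mul, Nat.add_sub_cancel, nsmul_eq_mul]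
    _ ≤ ∑ k ∈ Finset.Ico M (2 * M), ∑ i ∈ Finset.range k, 1 / ((i : ℝ) + 1) := by
        refine Finset.sum_le_sum fun k hk => Finset.sum_le_sum_of_subset_of_nonneg ?_ ?_
        · exact Finset.range_mono (Finset.mem_Ico.1 hk).1
        · exact fun _ _ _ => by positivity
    _ ≤ ∑ k ∈ Finset.range (2 * M), ∑ i ∈ Finset.range k, 1 / ((i : ℝ) + 1) := by
        rw [Finset.range_eq_Ico]
        exact Finset.sum_le_sum_of_subset_of_nonneg
          (Finset.Ico_subset_Ico_left (Nat.zero_le M)) fun _ _ _ => by positivity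

lemma norm_sum_sum_inv_sub_mul_sub_le {g : ℕ → ℕ → ℂ} {c : ℂ} {δ : ℝ}
    (hg : ∀ j k, j < k → ‖g j k - g k j - c‖ ≤ δ) (N : ℕ) :
    ‖((∑ k ∈ Finset.range N, ∑ j ∈ Finset.range k, ((k : ℝ) - j)⁻¹ : ℝ) : ℂ) * c -
        ∑ k ∈ Finset.range N, ∑ j ∈ Finset.range k,
          (((k : ℂ) - j)⁻¹ * g j k + ((j : ℂ) - k)⁻¹ * g k j)‖ ≤
      (∑ k ∈ Finset.range N, ∑ j ∈ Finset.range k, ((k : ℝ) - j)⁻¹) * δ := by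
  push_cast
  simp only [Finset.sum_mul, ← Finset.sum_sub_distrib]
  refine norm_sum_le_of_le _ fun k _ => norm_sum_le_of_le _ fun j hj => ?_
  have hjk : j < k := Finset.mem_range.1 hj
  have hpos : (0 : ℝ) < k - j := sub_pos.2 (Nat.cast_lt.2 hjk)
  calc ‖((k : ℂ) - j)⁻¹ * c - (((k : ℂ) - j)⁻¹ * g j k + ((j : ℂ) - k)⁻¹ * g k j)‖
      = ‖(((k - j : ℝ)⁻¹ : ℝ) : ℂ) * (g j k - g k j - c)‖ := by
        rw [← neg_sub (k : ℂ) j, inv_neg, ← norm_neg]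
        push_cast
        ring_nf
    _ ≤ ((k : ℝ) - j)⁻¹ * δ := by
        rw [norm_mul, norm_real, Real.norm_of_nonneg (inv_pos.2 hpos).le]
        gcongr
        exact hg j k hjk

/-- The triangular truncation of the Hilbert kernel has sums of order `N log N`, so an array whose
full Hilbert sums are `O(N)` cannot jump across the diagonal. -/
lemma norm_sub_le_of_hilbert_sum_le {g : ℕ → ℕ → ℂ} {a b : ℂ} {ε K : ℝ}
    (hupper : ∀ j k, j < k → ‖g j k - b‖ ≤ ε) (hlower : ∀ j k, j < k → ‖g k j - a‖ ≤ ε)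
    (hK : ∀ N : ℕ, ‖∑ j ∈ Finset.range N, ∑ k ∈ Finset.range N,
      ((k : ℂ) - j)⁻¹ * g j k‖ ≤ K * N) :
    ‖b - a‖ ≤ 2 * ε := by
  have hdiff (j k : ℕ) (hjk : j < k) : ‖g j k - g k j - (b - a)‖ ≤ 2 * ε := by
    calc ‖g j k - g k j - (b - a)‖ = ‖(g j k - b) - (g k j - a)‖ := by congr 1; ring
      _ ≤ 2 * ε := (norm_sub_le _ _).trans (by linarith [hupper j k hjk, hlower j k hjk])
  have hsum (N : ℕ) : (∑ k ∈ Finset.range N, ∑ j ∈ Finset.range k, ((k : ℝ) - j)⁻¹) *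
      (‖b - a‖ - 2 * ε) ≤ K * N := by
    refine le_trans ?_ (hK N)
    rw [sum_range_sum_range_of_diag_eq_zero (by simp)]
    have hdev := norm_sum_sum_inv_sub_mul_sub_le hdiff N
    set S := ∑ k ∈ Finset.range N, ∑ j ∈ Finset.range k, ((k : ℝ) - j)⁻¹
    have hSnonneg : 0 ≤ S := Finset.sum_nonneg fun k _ => Finset.sum_nonneg fun j hj =>
      inv_nonneg.2 (sub_nonneg.2 (Nat.cast_le.2 (Finset.mem_range.1 hj).le))
    have htri := (norm_sub_norm_le _ _).trans hdev
    rw [norm_mul, norm_real, Real.norm_of_nonneg hSnonneg] at htri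
    linarith
  by_contra! hlt
  obtain ⟨M, hM0, hM⟩ := ((eventually_gt_atTop 0).and
    (Real.tendsto_sum_range_one_div_nat_succ_atTop.eventually_gt_atTop
      (2 * K / (‖b - a‖ - 2 * ε)))).exists
  rw [div_lt_iff₀ (sub_pos.2 hlt)] at hM
  have hM' : (0 : ℝ) < M := Nat.cast_pos.2 hM0
  have hmain := (mul_le_mul_of_nonneg_right (mul_sum_one_div_le_sum_sum_inv_sub M)
    (sub_pos.2 hlt).le).trans (hsum (2 * M))
  push_cast at hmain
  nlinarith

end TriangularSums

/-! ### Fourier–Stieltjes functions -/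

section FourierStieltjes

open AddMonoidAlgebra

variable {V ι : Type*}

/-- The pairing of a function on `V` with trigonometric polynomials: `single t a ↦ a * n t`. -/
def coeffPairing (n : V → ℂ) : ℂ[V] →ₗ[ℂ] ℂ :=
  Finsupp.linearCombination ℂ n ∘ₗ (AddMonoidAlgebra.coeffLinearEquiv ℂ).toLinearMap

lemma coeffPairing_single (n : V → ℂ) (t : V) (a : ℂ) :
    coeffPairing n (single t a) = a * n t := by
  simp [coeffPairing]

lemma coeffPairing_zero (P : ℂ[V]) : coeffPairing 0 P = 0 := by
  induction P using AddMonoidAlgebra.induction_linear with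
  | zero => exact map_zero _
  | add P Q hP hQ => rw [map_add, hP, hQ, add_zero]
  | single t a => rw [coeffPairing_single, Pi.zero_apply, mul_zero]

lemma coeffPairing_sub (n n' : V → ℂ) (P : ℂ[V]) :
    coeffPairing (n - n') P = coeffPairing n P - coeffPairing n' P := by
  induction P using AddMonoidAlgebra.induction_linear with
  | zero => simp only [map_zero, sub_zero]
  | add P Q hP hQ => rw [map_add, map_add, map_add, hP, hQ]; ring
  | single t a => simp only [coeffPairing_single, Pi.sub_apply, mul_sub]

variable [AddCommGroup V]

/-- The value at a character `ψ` of an element of `ℂ[V]`, seen as a trigonometric polynomial on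
the dual group: the monomial `t` takes the value `ψ t`. -/
def charEval (ψ : AddChar V Circle) : ℂ[V] →ₐ[ℂ] ℂ :=
  AddMonoidAlgebra.lift ℂ ℂ V (Circle.coeHom.comp ψ.toMonoidHom)

lemma charEval_single (ψ : AddChar V Circle) (t : V) (a : ℂ) :
    charEval ψ (single t a) = a * ψ t := by
  rw [charEval, lift_single, smul_eq_mul]
  rfl

lemma norm_charEval_single_one (ψ : AddChar V Circle) (t : V) :
    ‖charEval ψ (single t 1)‖ = 1 := by
  rw [charEval_single, one_mul, Circle.norm_coe]

lemma charEval_single_neg (ψ : AddChar V Circle) (t : V) :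
    charEval ψ (single (-t) 1) = conj (charEval ψ (single t 1)) := by
  rw [charEval_single, charEval_single, one_mul, one_mul, AddChar.map_neg_eq_inv,
    Circle.coe_inv_eq_conj]

/-- `n` pairs with trigonometric polynomials with norm at most `C`, relative to the supremum over
the characters `χ i`. For the family of all characters this says that `n` is the Fourier–Stieltjes
transform of a measure of total mass at most `C` on the Bohr compactification of the dual. -/
def HasFSBound (χ : ι → AddChar V Circle) (n : V → ℂ) (C : ℝ) : Prop :=
  0 ≤ C ∧ ∀ P : ℂ[V], (∀ i, ‖charEval (χ i) P‖ ≤ 1) → ‖coeffPairing n P‖ ≤ C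

/-- The Fourier–Stieltjes norm: the least `C` with `HasFSBound χ n C`, and `0` if there is none. -/
def fsNorm (χ : ι → AddChar V Circle) (n : V → ℂ) : ℝ := sInf {C | HasFSBound χ n C}

variable {χ : ι → AddChar V Circle} {n n' : V → ℂ} {C C' : ℝ}

lemma HasFSBound.norm_coeffPairing_le (h : HasFSBound χ n C) {K : ℝ} (hK : 0 < K) {P : ℂ[V]}
    (hP : ∀ i, ‖charEval (χ i) P‖ ≤ K) : ‖coeffPairing n P‖ ≤ C * K := by
  have hscale := h.2 ((K : ℂ)⁻¹ • P) fun i => by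
    rw [map_smul, norm_smul, norm_inv, norm_real, Real.norm_of_nonneg hK.le,
      inv_mul_le_iff₀ hK, mul_one]
    exact hP i
  rwa [map_smul, norm_smul, norm_inv, norm_real, Real.norm_of_nonneg hK.le, inv_mul_le_iff₀ hK,
    mul_comm K] at hscale

lemma HasFSBound.norm_apply_le (h : HasFSBound χ n C) (t : V) : ‖n t‖ ≤ C := by
  simpa [coeffPairing_single] using
    h.2 (single t 1) fun i => (norm_charEval_single_one (χ i) t).le

lemma HasFSBound.sub (h : HasFSBound χ n C) (h' : HasFSBound χ n' C') :
    HasFSBound χ (n - n') (C + C') := by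
  refine ⟨add_nonneg h.1 h'.1, fun P hP => ?_⟩
  rw [coeffPairing_sub]
  exact (norm_sub_le _ _).trans (add_le_add (h.2 P hP) (h'.2 P hP))

lemma fsNorm_nonneg (χ : ι → AddChar V Circle) (n : V → ℂ) : 0 ≤ fsNorm χ n :=
  Real.sInf_nonneg fun _ h => h.1

lemma HasFSBound.fsNorm_le (h : HasFSBound χ n C) : fsNorm χ n ≤ C :=
  csInf_le ⟨0, fun _ h => h.1⟩ h

lemma HasFSBound.hasFSBound_fsNorm (h : HasFSBound χ n C) : HasFSBound χ n (fsNorm χ n) :=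
  ⟨fsNorm_nonneg χ n, fun P hP => le_csInf ⟨C, h⟩ fun _ hb => hb.2 P hP⟩

lemma exists_fsNorm_sub_lt_re (χ : ι → AddChar V Circle) (n : V → ℂ) {δ : ℝ} (hδ : 0 < δ) :
    ∃ P : ℂ[V], (∀ i, ‖charEval (χ i) P‖ ≤ 1) ∧ fsNorm χ n - δ < (coeffPairing n P).re := by
  obtain ⟨P, hP, hlt⟩ : ∃ P : ℂ[V], (∀ i, ‖charEval (χ i) P‖ ≤ 1) ∧
      fsNorm χ n - δ < ‖coeffPairing n P‖ := by
    rcases lt_or_ge (fsNorm χ n - δ) 0 with hneg | hnonneg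
    · exact ⟨0, by simp, by simpa using hneg⟩
    · by_contra! hcon
      linarith [HasFSBound.fsNorm_le (χ := χ) (n := n) ⟨hnonneg, hcon⟩]
  obtain ⟨ζ, hζ, hrot⟩ := exists_norm_eq_mul_self (coeffPairing n P)
  refine ⟨ζ • P, fun i => ?_, ?_⟩
  · rw [map_smul, norm_smul, hζ, one_mul]
    exact hP i
  · rwa [map_smul, smul_eq_mul, ← hrot, ofReal_re]

end FourierStieltjes

section LimitTranslates

open AddMonoidAlgebra

variable {V ι : Type*} [AddCommGroup V]

/-- The limit along a fixed free ultrafilter on `ℕ`; meaningful for bounded sequences. -/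
def ultraLim (f : ℕ → ℂ) : ℂ := limUnder (hyperfilter ℕ : Filter ℕ) f

lemma tendsto_ultraLim {f : ℕ → ℂ} {C : ℝ} (h : ∀ k, ‖f k‖ ≤ C) :
    Tendsto f (hyperfilter ℕ : Filter ℕ) (𝓝 (ultraLim f)) := by
  have hball : f ⁻¹' closedBall 0 C ∈ hyperfilter ℕ :=
    Filter.univ_mem' fun k => mem_closedBall_zero_iff.2 (h k)
  obtain ⟨x, -, hx⟩ := (isCompact_closedBall (0 : ℂ) C).ultrafilter_le_nhds
    ((hyperfilter ℕ).map f) (le_principal_iff.2 hball)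
  exact tendsto_nhds_limUnder ⟨x, hx⟩

/-- The limit of the translates `n (s k + ·)`. If `n` is the transform of a measure `ν`, this is
the transform of `u ν`, where `u` is the weak-* limit in `L^∞(ν)` of the characters `s k`. -/
def limitTranslate (n : V → ℂ) (s : ℕ → V) (t : V) : ℂ := ultraLim fun k => n (s k + t)

/-- The double limit of `n (s j - s k + ·)`, which multiplies the underlying measure by `|u|²` with
`u` as in `limitTranslate`. -/
def limitDifference (n : V → ℂ) (s : ℕ → V) : V → ℂ :=
  limitTranslate (limitTranslate n fun k => -s k) s

variable {χ : ι → AddChar V Circle} {n : V → ℂ} {C : ℝ}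

lemma tendsto_limitTranslate (h : ∀ t, ‖n t‖ ≤ C) (s : ℕ → V) (t : V) :
    Tendsto (fun k => n (s k + t)) (hyperfilter ℕ : Filter ℕ) (𝓝 (limitTranslate n s t)) :=
  tendsto_ultraLim fun _ => h _

lemma norm_limitTranslate_le (h : ∀ t, ‖n t‖ ≤ C) (s : ℕ → V) (t : V) :
    ‖limitTranslate n s t‖ ≤ C :=
  le_of_tendsto (tendsto_limitTranslate h s t).norm (Eventually.of_forall fun _ => h _)

lemma tendsto_coeffPairing_limitTranslate (h : ∀ t, ‖n t‖ ≤ C) (s : ℕ → V) (P : ℂ[V]) :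
    Tendsto (fun k => coeffPairing n (single (s k) 1 * P)) (hyperfilter ℕ : Filter ℕ)
      (𝓝 (coeffPairing (limitTranslate n s) P)) := by
  induction P using AddMonoidAlgebra.induction_linear with
  | zero => simp only [mul_zero, map_zero, tendsto_const_nhds]
  | add P Q hP hQ => simp only [mul_add, map_add]; exact hP.add hQ
  | single t a =>
    simp only [single_mul_single, one_mul, coeffPairing_single]
    exact (tendsto_limitTranslate h s t).const_mul a

lemma hasFSBound_limitTranslate (h : HasFSBound χ n C) (s : ℕ → V) :
    HasFSBound χ (limitTranslate n s) C := by
  refine ⟨h.1, fun P hP => ?_⟩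
  refine le_of_tendsto (tendsto_coeffPairing_limitTranslate h.norm_apply_le s P).norm
    (Eventually.of_forall fun k => h.2 _ fun i => ?_)
  rw [map_mul, norm_mul, norm_charEval_single_one, one_mul]
  exact hP i

lemma hasFSBound_limitDifference (h : HasFSBound χ n C) (s : ℕ → V) :
    HasFSBound χ (limitDifference n s) C :=
  hasFSBound_limitTranslate (hasFSBound_limitTranslate h _) s

lemma eventually_eventually_norm_coeffPairing_sub_lt (h : ∀ t, ‖n t‖ ≤ C) (s : ℕ → V) (P : ℂ[V])
    {δ : ℝ} (hδ : 0 < δ) :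
    ∀ᶠ j in (hyperfilter ℕ : Filter ℕ), ∀ᶠ k in (hyperfilter ℕ : Filter ℕ),
      ‖coeffPairing n (single (s j - s k) 1 * P) - coeffPairing (limitDifference n s) P‖ < δ := by
  have houter := (tendsto_coeffPairing_limitTranslate
    (norm_limitTranslate_le h fun k => -s k) s P).eventually (ball_mem_nhds _ hδ)
  filter_upwards [houter] with j hj
  have hinner := tendsto_coeffPairing_limitTranslate h (fun k => -s k) (single (s j) 1 * P)
  simp only [← mul_assoc, single_mul_single, one_mul, neg_add_eq_sub] at hinner
  filter_upwards [hinner.eventually (isOpen_ball.mem_nhds (mem_ball.2 hj))] with k hk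
  exact mem_ball_iff_norm.1 hk

lemma exists_seq_forall_lt_of_eventually_eventually {F : Filter ℕ} [NeBot F] {p : ℕ → Prop}
    (hp : ∀ᶠ j in F, p j) {r : ℕ → ℕ → Prop} (hr : ∀ᶠ j in F, ∀ᶠ k in F, r j k) :
    ∃ i : ℕ → ℕ, (∀ j, p (i j)) ∧ ∀ j k, j < k → r (i j) (i k) := by
  obtain ⟨i, hi, hlt⟩ := exists_seq_of_forall_finset_exists (fun j => p j ∧ ∀ᶠ k in F, r j k) r
    fun s hs => by
      obtain ⟨y, hy, hys⟩ := ((hp.and hr).and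
        ((Filter.eventually_all_finset s).2 fun x hx => (hs x hx).2)).exists
      exact ⟨y, hy, hys⟩
  exact ⟨i, fun j => (hi j).1, hlt⟩

lemma HasFSBound.norm_hilbert_sum_le (h : HasFSBound χ n C) (s : ℕ → V) (t : V) (N : ℕ) :
    ‖∑ j ∈ Finset.range N, ∑ k ∈ Finset.range N, ((k : ℂ) - j)⁻¹ * n (s k - s j + t)‖ ≤
      C * π * N := by
  rcases N.eq_zero_or_pos with rfl | hN
  · simp
  set G : ℂ[V] := ∑ j ∈ Finset.range N, ∑ k ∈ Finset.range N,
    ((k : ℂ) - j)⁻¹ • (single (s k) 1 * single (-s j) 1 * single t 1) with hG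
  have hpair : coeffPairing n G = ∑ j ∈ Finset.range N, ∑ k ∈ Finset.range N,
      ((k : ℂ) - j)⁻¹ * n (s k - s j + t) := by
    simp only [hG, map_sum, map_smul, single_mul_single, mul_one, coeffPairing_single, one_mul,
      smul_eq_mul, sub_eq_add_neg]
  have hsup (i : ι) : ‖charEval (χ i) G‖ ≤ π * N := by
    have heval : charEval (χ i) G = (∑ j ∈ Finset.range N, ∑ k ∈ Finset.range N,
        ((k : ℂ) - j)⁻¹ * ((χ i (s k) : ℂ) * conj (χ i (s j) : ℂ))) * χ i t := by
      simp only [hG, map_sum, map_smul, map_mul, charEval_single, one_mul,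
        AddChar.map_neg_eq_inv, Circle.coe_inv_eq_conj, smul_eq_mul, Finset.sum_mul, mul_assoc]
    have hhilbert := hilbert_inequality (s := Finset.range N) (a := Nat.cast)
      (fun k => (χ i (s k) : ℂ)) Nat.cast_injective.injOn
    rw [heval, norm_mul, Circle.norm_coe, mul_one]
    simpa only [Int.cast_natCast, Circle.norm_coe, one_pow, Finset.sum_const, Finset.card_range,
      nsmul_eq_mul, mul_one] using hhilbert
  rw [← hpair, mul_assoc]
  exact h.norm_coeffPairing_le (by positivity) hsup

lemma limitDifference_neg (h : HasFSBound χ n C) (s : ℕ → V) :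
    limitDifference n (fun k => -s k) = limitDifference n s := by
  funext t
  refine eq_of_forall_dist_le fun ε hε => ?_
  have hdiff := eventually_eventually_norm_coeffPairing_sub_lt h.norm_apply_le s (single t 1)
    (half_pos hε)
  have hdiff_neg := eventually_eventually_norm_coeffPairing_sub_lt h.norm_apply_le (fun k => -s k)
    (single t 1) (half_pos hε)
  simp only [single_mul_single, mul_one, coeffPairing_single, one_mul, neg_sub_neg]
    at hdiff hdiff_neg
  obtain ⟨i, -, hi⟩ := exists_seq_forall_lt_of_eventually_eventually
    (p := fun _ => True) (Eventually.of_forall fun _ => trivial)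
    (hdiff.mp (hdiff_neg.mono fun j hj hj' => hj'.and hj))
  have hjump := norm_sub_le_of_hilbert_sum_le (g := fun j k => n (s (i k) - s (i j) + t))
    (fun j k hjk => (hi j k hjk).2.le) (fun j k hjk => (hi j k hjk).1.le)
    (h.norm_hilbert_sum_le (fun j => s (i j)) t)
  rwa [mul_div_cancel₀ ε two_ne_zero, ← dist_eq_norm] at hjump

end LimitTranslates

section Averages

open AddMonoidAlgebra

/-- The average of the first `N` monomials `s 0, …, s (N - 1)`. -/
def monomialAverage {V : Type*} (s : ℕ → V) (N : ℕ) : ℂ[V] :=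
  (N : ℂ)⁻¹ • ∑ j ∈ Finset.range N, single (s j) 1

lemma norm_average_sub_le {g : ℕ → ℂ} {a : ℂ} {b : ℕ → ℝ} {N : ℕ} (hN : 0 < N)
    (hg : ∀ j, ‖g j - a‖ ≤ b j) :
    ‖(N : ℂ)⁻¹ * ∑ j ∈ Finset.range N, g j - a‖ ≤ (N : ℝ)⁻¹ * ∑ j ∈ Finset.range N, b j := by
  have hsub : (N : ℂ)⁻¹ * ∑ j ∈ Finset.range N, g j - a =
      (N : ℂ)⁻¹ * ∑ j ∈ Finset.range N, (g j - a) := by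
    rw [Finset.sum_sub_distrib, Finset.sum_const, Finset.card_range, nsmul_eq_mul, mul_sub,
      inv_mul_cancel_left₀ (Nat.cast_ne_zero.2 hN.ne')]
  rw [hsub, norm_mul, norm_inv, norm_natCast]
  exact mul_le_mul_of_nonneg_left (norm_sum_le_of_le _ fun j _ => hg j) (by positivity)

lemma norm_average_sub_le_const {g : ℕ → ℂ} {a : ℂ} {b : ℝ} {N : ℕ} (hN : 0 < N)
    (hg : ∀ j, ‖g j - a‖ ≤ b) : ‖(N : ℂ)⁻¹ * ∑ j ∈ Finset.range N, g j - a‖ ≤ b := by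
  refine (norm_average_sub_le hN hg).trans_eq ?_
  rw [Finset.sum_const, Finset.card_range, nsmul_eq_mul,
    inv_mul_cancel_left₀ (Nat.cast_ne_zero.2 hN.ne')]

lemma norm_double_average_sub_le {g : ℕ → ℕ → ℂ} {a : ℂ} {η D : ℝ} {N : ℕ} (hN : 0 < N)
    (hoff : ∀ j k, j ≠ k → ‖g j k - a‖ ≤ η) (hdiag : ∀ j, ‖g j j - a‖ ≤ D) (hη : 0 ≤ η) :
    ‖(N : ℂ)⁻¹ * ∑ j ∈ Finset.range N, (N : ℂ)⁻¹ * ∑ k ∈ Finset.range N, g j k - a‖ ≤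
      η + D / N := by
  refine norm_average_sub_le_const hN fun j => ?_
  have hrow (k : ℕ) : ‖g j k - a‖ ≤ η + if k = j then D else 0 := by
    rcases eq_or_ne k j with rfl | hkj
    · rw [if_pos rfl]; exact (hdiag k).trans (le_add_of_nonneg_left hη)
    · rw [if_neg hkj, add_zero]; exact hoff j k hkj.symm
  have hone : ∑ k ∈ Finset.range N, (if k = j then D else 0) ≤ D := by
    rw [Finset.sum_ite_eq']
    split_ifs
    exacts [le_rfl, (norm_nonneg _).trans (hdiag j)]
  refine (norm_average_sub_le hN hrow).trans ?_
  rw [Finset.sum_add_distrib, Finset.sum_const, Finset.card_range, nsmul_eq_mul, mul_add,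
    inv_mul_cancel_left₀ (Nat.cast_ne_zero.2 hN.ne'), ← div_eq_inv_mul]
  gcongr

variable {V ι : Type*} [AddCommGroup V]

lemma norm_charEval_monomialAverage_le (ψ : AddChar V Circle) (s : ℕ → V) (N : ℕ) :
    ‖charEval ψ (monomialAverage s N)‖ ≤ 1 := by
  rw [monomialAverage, map_smul, map_sum, norm_smul, norm_inv, norm_natCast]
  refine inv_mul_le_one_of_le₀ ?_ (Nat.cast_nonneg N)
  simpa using norm_sum_le_of_le (Finset.range N) fun j _ => (norm_charEval_single_one ψ (s j)).le

lemma charEval_monomialAverage_neg (ψ : AddChar V Circle) (s : ℕ → V) (N : ℕ) :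
    charEval ψ (monomialAverage (fun k => -s k) N) = conj (charEval ψ (monomialAverage s N)) := by
  simp only [monomialAverage, map_smul, map_sum, charEval_single_neg, smul_eq_mul, map_mul,
    map_inv₀, map_natCast]

lemma coeffPairing_monomialAverage_mul (n : V → ℂ) (s : ℕ → V) (N : ℕ) (P : ℂ[V]) :
    coeffPairing n (monomialAverage s N * P) =
      (N : ℂ)⁻¹ * ∑ j ∈ Finset.range N, coeffPairing n (single (s j) 1 * P) := by
  rw [monomialAverage, smul_mul_assoc, map_smul, smul_eq_mul, Finset.sum_mul, map_sum]

lemma coeffPairing_monomialAverage_mul_neg_mul (n : V → ℂ) (s : ℕ → V) (N : ℕ) (P : ℂ[V]) :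
    coeffPairing n (monomialAverage s N * monomialAverage (fun k => -s k) N * P) =
      (N : ℂ)⁻¹ * ∑ j ∈ Finset.range N, (N : ℂ)⁻¹ * ∑ k ∈ Finset.range N,
        coeffPairing n (single (s j - s k) 1 * P) := by
  rw [mul_assoc, coeffPairing_monomialAverage_mul]
  refine congrArg _ (Finset.sum_congr rfl fun j _ => ?_)
  rw [mul_left_comm, coeffPairing_monomialAverage_mul]
  simp only [← mul_assoc, single_mul_single, one_mul, neg_add_eq_sub]

variable {χ : ι → AddChar V Circle} {n : V → ℂ} {C : ℝ}

lemma exists_seq_norm_coeffPairing_sub_lt (h : HasFSBound χ n C) (s : ℕ → V) (S : Finset ℂ[V])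
    {δ : ℝ} (hδ : 0 < δ) :
    ∃ i : ℕ → ℕ, ∀ P ∈ S,
      (∀ j, ‖coeffPairing n (single (s (i j)) 1 * P) - coeffPairing (limitTranslate n s) P‖ < δ) ∧
      ∀ j k, j ≠ k → ‖coeffPairing n (single (s (i j) - s (i k)) 1 * P) -
        coeffPairing (limitDifference n s) P‖ < δ := by
  have htranslate (P : ℂ[V]) := Metric.tendsto_nhds.1
    (tendsto_coeffPairing_limitTranslate h.norm_apply_le s P) δ hδ
  have hdiff (P : ℂ[V]) :=
    eventually_eventually_norm_coeffPairing_sub_lt h.norm_apply_le s P hδ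
  have hdiff_neg (P : ℂ[V]) :=
    eventually_eventually_norm_coeffPairing_sub_lt h.norm_apply_le (fun k => -s k) P hδ
  simp only [limitDifference_neg h, neg_sub_neg] at hdiff_neg
  simp only [dist_eq_norm] at htranslate
  have hboth : ∀ᶠ j in (hyperfilter ℕ : Filter ℕ), ∀ P ∈ S,
      ∀ᶠ k in (hyperfilter ℕ : Filter ℕ), _ ∧ _ :=
    (eventually_all_finset S).2 fun P _ => (hdiff P).mp <| (hdiff_neg P).mono
      fun j hj hj' => hj'.and hj
  obtain ⟨i, hi, hlt⟩ := exists_seq_forall_lt_of_eventually_eventually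
    ((eventually_all_finset S).2 fun P _ => htranslate P)
    (hboth.mono fun j hj => (eventually_all_finset S).2 hj)
  refine ⟨i, fun P hP => ⟨fun j => hi j P hP, fun j k hjk => ?_⟩⟩
  rcases hjk.lt_or_gt with hjk | hkj
  · exact (hlt j k hjk P hP).1
  · exact (hlt k j hkj P hP).2

/-- In terms of the measure `ν` behind `n`, the average `w` approximates the weak-* limit `u` of the
characters `s k`, and the products of the two averages approximate `|u|²`. -/
lemma exists_average_norm_coeffPairing_sub_lt (h : HasFSBound χ n C) (s : ℕ → V) (S : Finset ℂ[V])
    {δ : ℝ} (hδ : 0 < δ) :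
    ∃ w w' : ℂ[V], (∀ i, charEval (χ i) w' = conj (charEval (χ i) w)) ∧
      (∀ i, ‖charEval (χ i) w‖ ≤ 1) ∧
      ∀ P ∈ S, ‖coeffPairing n (w * P) - coeffPairing (limitTranslate n s) P‖ < δ ∧
        ‖coeffPairing n (w * w' * P) - coeffPairing (limitDifference n s) P‖ < δ := by
  obtain ⟨i, hi⟩ := exists_seq_norm_coeffPairing_sub_lt h s S (half_pos hδ)
  obtain ⟨N, hND, hN⟩ : ∃ N : ℕ, (∀ P ∈ S,
      ‖coeffPairing n P - coeffPairing (limitDifference n s) P‖ / N < δ / 2) ∧ 0 < N :=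
    (((eventually_all_finset S).2 fun P _ => (tendsto_const_div_atTop_nhds_zero_nat _).eventually
      (gt_mem_nhds (half_pos hδ))).and (eventually_gt_atTop 0)).exists
  refine ⟨monomialAverage (s ∘ i) N, monomialAverage (fun k => -(s ∘ i) k) N,
    fun _ => charEval_monomialAverage_neg _ _ _,
    fun _ => norm_charEval_monomialAverage_le _ _ _, fun P hP => ⟨?_, ?_⟩⟩
  · rw [coeffPairing_monomialAverage_mul]
    exact (norm_average_sub_le_const hN fun j => ((hi P hP).1 j).le).trans_lt (half_lt_self hδ)
  · rw [coeffPairing_monomialAverage_mul_neg_mul]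
    calc _ ≤ δ / 2 + ‖coeffPairing n P - coeffPairing (limitDifference n s) P‖ / N :=
          norm_double_average_sub_le hN (fun j k hjk => ((hi P hP).2 j k hjk).le)
            (fun j => by rw [sub_self, ← one_def, one_mul]) (half_pos hδ).le
      _ < δ := by linarith [hND P hP]

lemma charEval_mul_mul_add_sub (ψ : AddChar V Circle) {w w' : ℂ[V]}
    (hconj : charEval ψ w' = conj (charEval ψ w)) (P Q : ℂ[V]) :
    charEval ψ (w * w' * P + (Q - w * w' * Q)) =
      ((‖charEval ψ w‖ ^ 2 : ℝ) : ℂ) * charEval ψ P +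
        ((1 - ‖charEval ψ w‖ ^ 2 : ℝ) : ℂ) * charEval ψ Q := by
  simp only [map_add, map_sub, map_mul, hconj, mul_conj, normSq_eq_norm_sq]
  push_cast
  ring

end Averages

section NormInequalities

open AddMonoidAlgebra

variable {V ι : Type*} [AddCommGroup V] {χ : ι → AddChar V Circle} {n : V → ℂ} {C : ℝ}

/-- With `u` the weak-* limit of the characters `s k`, this is additivity of the total variation:
`‖ |u|² ν ‖ + ‖ (1 - |u|²) ν ‖ = ‖ν‖`. -/
lemma fsNorm_limitDifference_add_fsNorm_sub_le (h : HasFSBound χ n C) (s : ℕ → V) :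
    fsNorm χ (limitDifference n s) + fsNorm χ (n - limitDifference n s) ≤ fsNorm χ n := by
  classical
  refine le_of_forall_pos_le_add fun ε hε => ?_
  have hδ : 0 < ε / 4 := by positivity
  obtain ⟨P, hP, hPnorm⟩ := exists_fsNorm_sub_lt_re χ (limitDifference n s) hδ
  obtain ⟨Q, hQ, hQnorm⟩ := exists_fsNorm_sub_lt_re χ (n - limitDifference n s) hδ
  obtain ⟨w, w', hconj, hw, hlim⟩ := exists_average_norm_coeffPairing_sub_lt h s {P, Q} hδ
  have htest := h.hasFSBound_fsNorm.2 (w * w' * P + (Q - w * w' * Q)) fun i => by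
    have hw1 : ‖charEval (χ i) w‖ ^ 2 ≤ 1 := pow_le_one₀ (norm_nonneg _) (hw i)
    rw [charEval_mul_mul_add_sub _ (hconj i)]
    refine (norm_add_le _ _).trans ?_
    rw [norm_mul, norm_mul, norm_real, norm_real, Real.norm_of_nonneg (by positivity),
      Real.norm_of_nonneg (sub_nonneg.2 hw1)]
    nlinarith [hP i, hQ i, sq_nonneg ‖charEval (χ i) w‖]
  have hre := (re_le_norm _).trans htest
  have hPlim := (abs_lt.1 ((abs_re_le_norm _).trans_lt (hlim P (by simp)).2)).1
  have hQlim := (abs_lt.1 ((abs_re_le_norm _).trans_lt (hlim Q (by simp)).2)).2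
  rw [coeffPairing_sub] at hQnorm
  simp only [map_add, map_sub, add_re, sub_re] at hre hQnorm hPlim hQlim
  linarith

lemma mul_norm_limitTranslate_le (h : HasFSBound χ n C) {s : ℕ → V} (h0 : limitDifference n s = 0)
    (t : V) {η δ : ℝ} (hη : 0 ≤ η) (hδ : 0 < δ) :
    η * ‖limitTranslate n s t‖ ≤ fsNorm χ n * (η ^ 2 / 4) + (η + 2) * δ := by
  classical
  obtain ⟨ζ, hζ, hrot⟩ := exists_norm_eq_mul_self (limitTranslate n s t)
  obtain ⟨Q, hQ, hQnorm⟩ := exists_fsNorm_sub_lt_re χ n hδ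
  obtain ⟨w, w', hconj, hw, hlim⟩ := exists_average_norm_coeffPairing_sub_lt h s {Q, single t ζ} hδ
  have htest := h.hasFSBound_fsNorm.norm_coeffPairing_le (K := 1 + η ^ 2 / 4)
    (P := w * w' * 0 + (Q - w * w' * Q) + (η : ℂ) • (w * single t ζ)) (by positivity) fun i => by
    have hw1 : ‖charEval (χ i) w‖ ^ 2 ≤ 1 := pow_le_one₀ (norm_nonneg _) (hw i)
    rw [map_add, charEval_mul_mul_add_sub _ (hconj i), map_zero, mul_zero, zero_add, map_smul,
      map_mul, charEval_single, smul_eq_mul]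
    refine (norm_add_le _ _).trans ?_
    rw [norm_mul, norm_mul, norm_mul, norm_mul, hζ, Circle.norm_coe, norm_real, norm_real,
      Real.norm_of_nonneg hη, Real.norm_of_nonneg (sub_nonneg.2 hw1)]
    nlinarith [hQ i, sq_nonneg (‖charEval (χ i) w‖ - η / 2)]
  have hre := (re_le_norm _).trans htest
  have hQlim := (abs_lt.1 ((abs_re_le_norm _).trans_lt (hlim Q (by simp)).2)).2
  have htlim := (abs_lt.1 ((abs_re_le_norm _).trans_lt (hlim (single t ζ) (by simp)).1)).1
  rw [h0, coeffPairing_zero, sub_zero] at hQlim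
  rw [coeffPairing_single, ← hrot, sub_re, ofReal_re] at htlim
  rw [mul_zero, zero_add, map_add, map_sub, map_smul, smul_eq_mul, add_re, sub_re,
    re_ofReal_mul] at hre
  nlinarith

lemma limitTranslate_eq_zero (h : HasFSBound χ n C) {s : ℕ → V} (h0 : limitDifference n s = 0) :
    limitTranslate n s = 0 := by
  have hM := fsNorm_nonneg χ n
  have hquad (t : V) {η : ℝ} (hη : 0 < η) :
      η * ‖limitTranslate n s t‖ ≤ fsNorm χ n * (η ^ 2 / 4) :=
    le_of_forall_pos_le_add fun ε hε => by
      simpa [mul_div_cancel₀ ε (by positivity : η + 2 ≠ 0)] using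
        mul_norm_limitTranslate_le h h0 t hη.le (δ := ε / (η + 2)) (by positivity)
  funext t
  refine norm_le_zero_iff.1 (le_of_forall_pos_le_add fun ε hε => ?_)
  have hη : 0 < ε / (fsNorm χ n + 1) := by positivity
  rw [zero_add]
  refine le_of_mul_le_mul_left ((hquad t hη).trans ?_) hη
  rw [sq, mul_div_assoc, mul_left_comm]
  gcongr
  rw [← mul_div_assoc, ← mul_div_assoc, div_div, div_le_iff₀ (by positivity)]
  nlinarith

/-- The unitary perturbation `½ (a + b) P + ½ η (a - b) ζ t` of a norming polynomial `P` has values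
at most `1 + η² / 2` by the parallelogram law, because the monomials `a` and `b` are unimodular. -/
lemma mul_norm_apply_sub_apply_le (h : HasFSBound χ n C) {P : ℂ[V]} {a b : V} {δ : ℝ}
    (hP : ∀ i, ‖charEval (χ i) P‖ ≤ 1)
    (ha : fsNorm χ n - δ ≤ (coeffPairing n (single a 1 * P)).re)
    (hb : fsNorm χ n - δ ≤ (coeffPairing n (single b 1 * P)).re) (t : V) {η : ℝ} (hη : 0 ≤ η) :
    η / 2 * ‖n (a + t) - n (b + t)‖ ≤ fsNorm χ n * (η ^ 2 / 2) + δ := by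
  obtain ⟨ζ, hζ, hrot⟩ := exists_norm_eq_mul_self (n (a + t) - n (b + t))
  have htest := h.hasFSBound_fsNorm.norm_coeffPairing_le (K := 1 + η ^ 2 / 2)
    (P := ((1 / 2 : ℝ) : ℂ) • (single a 1 * P + single b 1 * P) +
      ((η / 2 : ℝ) : ℂ) • ((single a 1 - single b 1) * single t ζ)) (by positivity) fun i => by
    set A := charEval (χ i) (single a 1) with hA
    set B := charEval (χ i) (single b 1) with hB
    have hpar := parallelogram_law_with_norm ℝ A B
    rw [norm_charEval_single_one, norm_charEval_single_one] at hpar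
    rw [← add_mul, map_add, map_smul, map_smul, map_mul, map_mul, map_add, map_sub, ← hA, ← hB]
    refine (norm_add_le _ _).trans ?_
    rw [norm_smul, norm_smul, norm_mul, norm_mul, charEval_single, norm_mul, hζ, Circle.norm_coe,
      norm_real, norm_real, Real.norm_of_nonneg (by positivity : 0 ≤ η / 2),
      Real.norm_of_nonneg (by positivity : (0 : ℝ) ≤ 1 / 2), one_mul, mul_one]
    have hsq : (‖A + B‖ / 2 + η / 2 * ‖A - B‖) ^ 2 ≤ (1 + η ^ 2 / 2) ^ 2 := by
      nlinarith [sq_nonneg (η * ‖A + B‖ - ‖A - B‖), sq_nonneg (η ^ 2)]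
    have hsum := abs_le_of_sq_le_sq hsq (by positivity)
    have hPA : ‖A + B‖ * ‖charEval (χ i) P‖ ≤ ‖A + B‖ :=
      mul_le_of_le_one_right (norm_nonneg _) (hP i)
    linarith [le_of_abs_le hsum]
  have hre := (re_le_norm _).trans htest
  rw [map_add, map_smul, map_smul, map_add, sub_mul, map_sub, single_mul_single, single_mul_single,
    one_mul, coeffPairing_single, coeffPairing_single, ← mul_sub, ← hrot, smul_eq_mul, smul_eq_mul,
    add_re, re_ofReal_mul, re_ofReal_mul, add_re, ofReal_re] at hre
  linarith

lemma exists_lt_forall_norm_sub_le (h : HasFSBound χ n C) {s : ℕ → V}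
    (hnorm : fsNorm χ (limitTranslate n s) = fsNorm χ n) {ε : ℝ} (hε : 0 < ε) :
    ∃ j k, j < k ∧ ∀ t, ‖n (s j + t) - n (s k + t)‖ ≤ ε := by
  have hM := fsNorm_nonneg χ n
  set η := ε / (2 * (fsNorm χ n + 1)) with hη
  have hηpos : 0 < η := by positivity
  have hηM : η * fsNorm χ n ≤ ε / 2 := by
    rw [hη, div_mul_eq_mul_div, div_le_iff₀ (by positivity)]
    nlinarith
  set δ := η * ε / 4 with hδ
  obtain ⟨P, hP, hPnorm⟩ := exists_fsNorm_sub_lt_re χ (limitTranslate n s) (δ := δ) (by positivity)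
  rw [hnorm] at hPnorm
  have hnorming : ∀ᶠ k in (hyperfilter ℕ : Filter ℕ),
      fsNorm χ n - δ < (coeffPairing n (single (s k) 1 * P)).re :=
    ((continuous_re.tendsto _).comp
      (tendsto_coeffPairing_limitTranslate h.norm_apply_le s P)).eventually (lt_mem_nhds hPnorm)
  obtain ⟨j, hj⟩ := hnorming.exists
  obtain ⟨k, hk, hjk⟩ := (hnorming.and (Nat.hyperfilter_le_atTop (eventually_gt_atTop j))).exists
  refine ⟨j, k, hjk, fun t => le_of_mul_le_mul_left ?_ hηpos⟩
  have := mul_norm_apply_sub_apply_le h hP hj.le hk.le t hηpos.le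
  nlinarith

end NormInequalities

/-! ### Decomposition of Fourier–Stieltjes functions with almost idempotent limits -/

section IdempotentDecomposition

variable {V ι : Type*} [AddCommGroup V] {χ : ι → AddChar V Circle} {m n n' : V → ℂ} {C C' c : ℝ}

/-- `n` is a Fourier–Stieltjes function which is pointwise an integer multiple of `m`. When `m` is
idempotent these are the integer-valued functions of the Cohen–Host theorem on the support of
`m`. -/
def IsFSMultiple (χ : ι → AddChar V Circle) (m n : V → ℂ) : Prop :=
  (∃ C, HasFSBound χ n C) ∧ ∀ t, ∃ k : ℤ, n t = k * m t

lemma isClosed_setOf_exists_intCast_mul (K : ℕ) :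
    IsClosed {p : ℂ × ℂ | ∃ k : ℤ, |k| ≤ K ∧ p.1 = k * p.2} := by
  have hunion : {p : ℂ × ℂ | ∃ k : ℤ, |k| ≤ K ∧ p.1 = k * p.2} =
      ⋃ k ∈ Finset.Icc (-(K : ℤ)) K, {p : ℂ × ℂ | p.1 = k * p.2} := by
    ext p
    simp [abs_le, and_assoc]
  rw [hunion]
  exact isClosed_biUnion_finset fun k _ => isClosed_eq (by fun_prop) (by fun_prop)

lemma exists_intCast_mul_limitTranslate (hn : ∀ t, ‖n t‖ ≤ C) (hm : ∀ t, ‖m t‖ ≤ C') {K : ℕ}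
    (h : ∀ t, ∃ k : ℤ, |k| ≤ K ∧ n t = k * m t) (s : ℕ → V) (t : V) :
    ∃ k : ℤ, |k| ≤ K ∧ limitTranslate n s t = k * limitTranslate m s t :=
  (isClosed_setOf_exists_intCast_mul K).mem_of_tendsto
    ((tendsto_limitTranslate hn s t).prodMk_nhds (tendsto_limitTranslate hm s t))
    (Eventually.of_forall fun _ => h _)

lemma IsFSMultiple.apply_eq_zero_of_eq_zero (hn : IsFSMultiple χ m n) {t : V} (ht : m t = 0) :
    n t = 0 := by
  obtain ⟨k, hk⟩ := hn.2 t
  rw [hk, ht, mul_zero]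

lemma IsFSMultiple.eq_zero_or_le_norm (hm : ∀ t, m t = 0 ∨ c ≤ ‖m t‖) (hn : IsFSMultiple χ m n)
    (t : V) : n t = 0 ∨ c ≤ ‖n t‖ := by
  refine or_iff_not_imp_left.2 fun hnt => ?_
  obtain ⟨k, hk⟩ := hn.2 t
  obtain ⟨hk0, hmt⟩ := mul_ne_zero_iff.1 (hk ▸ hnt)
  have hk1 : (1 : ℝ) ≤ |(k : ℝ)| := by exact_mod_cast Int.one_le_abs (Int.cast_ne_zero.1 hk0)
  rw [hk, norm_mul, norm_intCast]
  exact ((hm t).resolve_left hmt).trans (le_mul_of_one_le_left (norm_nonneg _) hk1)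

lemma IsFSMultiple.le_fsNorm (hm : ∀ t, m t = 0 ∨ c ≤ ‖m t‖) (hn : IsFSMultiple χ m n)
    (h0 : n ≠ 0) : c ≤ fsNorm χ n := by
  obtain ⟨t, ht⟩ := Function.ne_iff.1 h0
  obtain ⟨C, hC⟩ := hn.1
  exact ((hn.eq_zero_or_le_norm hm t).resolve_left ht).trans (hC.hasFSBound_fsNorm.norm_apply_le t)

lemma IsFSMultiple.sub (hn : IsFSMultiple χ m n) (hn' : IsFSMultiple χ m n') :
    IsFSMultiple χ m (n - n') := by
  obtain ⟨⟨C, hC⟩, hk⟩ := hn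
  obtain ⟨⟨C', hC'⟩, hk'⟩ := hn'
  refine ⟨⟨_, hC.sub hC'⟩, fun t => ?_⟩
  obtain ⟨k, hk⟩ := hk t
  obtain ⟨k', hk'⟩ := hk' t
  exact ⟨k - k', by rw [Pi.sub_apply, hk, hk', Int.cast_sub, sub_mul]⟩

lemma isFSMultiple_limitDifference (hC : HasFSBound χ m C) (hc : 0 < c)
    (hm : ∀ t, m t = 0 ∨ c ≤ ‖m t‖)
    (hdiff : ∀ s t, limitDifference m s t = 0 ∨ limitDifference m s t = m t)
    (hn : IsFSMultiple χ m n) (s : ℕ → V) : IsFSMultiple χ m (limitDifference n s) := by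
  obtain ⟨⟨C', hC'⟩, hmul⟩ := hn
  obtain ⟨K, hK⟩ := exists_nat_ge (C' / c)
  have hbounded (t : V) : ∃ k : ℤ, |k| ≤ K ∧ n t = k * m t := by
    obtain ⟨k, hk⟩ := hmul t
    rcases hm t with h0 | hlower
    · exact ⟨0, by simp, by rw [hk, h0, mul_zero, mul_zero]⟩
    · have hnt := hC'.norm_apply_le t
      rw [hk, norm_mul, norm_intCast] at hnt
      have hkK : |(k : ℝ)| ≤ K := ((le_div_iff₀ hc).2
        ((mul_le_mul_of_nonneg_left hlower (abs_nonneg _)).trans hnt)).trans hK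
      exact ⟨k, by exact_mod_cast hkK, hk⟩
  refine ⟨⟨C', hasFSBound_limitDifference hC' s⟩, fun t => ?_⟩
  obtain ⟨k, -, hk⟩ := exists_intCast_mul_limitTranslate
    (norm_limitTranslate_le hC'.norm_apply_le _) (norm_limitTranslate_le hC.norm_apply_le _)
    (exists_intCast_mul_limitTranslate hC'.norm_apply_le hC.norm_apply_le hbounded
      fun k => -s k) s t
  rcases hdiff s t with h | h
  · refine ⟨0, hk.trans ?_⟩
    rw [← limitDifference, h, mul_zero, Int.cast_zero, zero_mul]
  · exact ⟨k, hk.trans (by rw [← limitDifference, h])⟩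

/-- Splitting `n` into `limitDifference n s` and its complement divides the norm, and every nonzero
piece costs at least `c`, so the splitting stops. -/
lemma exists_list_sum_eq_of_fsNorm_lt (hC : HasFSBound χ m C) (hc : 0 < c)
    (hm : ∀ t, m t = 0 ∨ c ≤ ‖m t‖)
    (hdiff : ∀ s t, limitDifference m s t = 0 ∨ limitDifference m s t = m t) (N : ℕ) :
    ∀ n, IsFSMultiple χ m n → fsNorm χ n < (N + 1) * c → ∃ l : List (V → ℂ), l.sum = n ∧
      ∀ f ∈ l, IsFSMultiple χ m f ∧ ∀ s, limitDifference f s = 0 ∨ limitDifference f s = f := by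
  induction N with
  | zero =>
    intro n hn hlt
    have hn0 : n = 0 := by
      by_contra h
      linarith [hn.le_fsNorm hm h, (by simpa using hlt : fsNorm χ n < c)]
    exact ⟨[], by rw [hn0, List.sum_nil], by simp⟩
  | succ N ih =>
    intro n hn hlt
    by_cases hind : ∀ s, limitDifference n s = 0 ∨ limitDifference n s = n
    · exact ⟨[n], List.sum_singleton, by simpa using ⟨hn, hind⟩⟩
    push Not at hind
    obtain ⟨s, hne0, hne⟩ := hind
    have hpart := isFSMultiple_limitDifference hC hc hm hdiff hn s
    have hcompl := hn.sub hpart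
    have hpart_le := hpart.le_fsNorm hm hne0
    have hcompl_le := hcompl.le_fsNorm hm (sub_ne_zero.2 hne.symm)
    obtain ⟨C', hC'⟩ := hn.1
    have hadd := fsNorm_limitDifference_add_fsNorm_sub_le hC' s
    push_cast at hlt
    obtain ⟨l, hl, hlmem⟩ := ih _ hpart (by linarith)
    obtain ⟨l', hl', hlmem'⟩ := ih _ hcompl (by linarith)
    refine ⟨l ++ l', by rw [List.sum_append, hl, hl', add_sub_cancel], fun f hf => ?_⟩
    exact (List.mem_append.1 hf).elim (hlmem f) (hlmem' f)

lemma fsNorm_limitTranslate_neg_eq (h : HasFSBound χ n C) {s : ℕ → V}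
    (hs : limitDifference n s = n) : fsNorm χ (limitTranslate n fun k => -s k) = fsNorm χ n := by
  have hle := hasFSBound_limitTranslate h.hasFSBound_fsNorm fun k => -s k
  refine le_antisymm hle.fsNorm_le ?_
  conv_lhs => rw [← hs]
  exact (hasFSBound_limitTranslate hle.hasFSBound_fsNorm s).fsNorm_le

lemma exists_lt_sub_mem_stabilizer_support (hc : 0 < c) (h : HasFSBound χ n C)
    (hn : ∀ t, n t = 0 ∨ c ≤ ‖n t‖) {s : ℕ → V}
    (hs : ∀ k, s k ∈ Function.support n)
    (hdiff : limitDifference n s = 0 ∨ limitDifference n s = n) :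
    ∃ j k, j < k ∧ s k - s j ∈ AddAction.stabilizer V (Function.support n) := by
  have htranslate : limitTranslate n s 0 ≠ 0 := by
    refine norm_pos_iff.1 (hc.trans_le (ge_of_tendsto
      (tendsto_limitTranslate h.norm_apply_le s 0).norm (Eventually.of_forall fun k => ?_)))
    rw [add_zero]
    exact (hn (s k)).resolve_left (hs k)
  have hinvariant : limitDifference n s = n :=
    hdiff.resolve_left fun h0 => htranslate (congrFun (limitTranslate_eq_zero h h0) 0)
  obtain ⟨j, k, hjk, hclose⟩ :=
    exists_lt_forall_norm_sub_le h (fsNorm_limitTranslate_neg_eq h hinvariant) (half_pos hc)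
  refine ⟨j, k, hjk, AddAction.mem_stabilizer_set.2 fun t => not_congr ?_⟩
  have ht := hclose (t + s k)
  rw [neg_add_cancel_comm_assoc, show -s j + (t + s k) = s k - s j + t by abel] at ht
  rw [vadd_eq_add]
  constructor <;> intro h0
  · rw [h0, zero_sub, norm_neg] at ht
    exact (hn t).resolve_right fun hct => by linarith
  · rw [h0, sub_zero] at ht
    exact (hn _).resolve_right fun hct => by linarith

theorem exists_list_sum_eq_forall_sub_mem_stabilizer_support (hC : HasFSBound χ m C) (hc : 0 < c)
    (hm : ∀ t, m t = 0 ∨ c ≤ ‖m t‖)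
    (hdiff : ∀ s t, limitDifference m s t = 0 ∨ limitDifference m s t = m t) :
    ∃ l : List (V → ℂ), l.sum = m ∧ ∀ f ∈ l, Function.support f ⊆ Function.support m ∧
      ∀ s : ℕ → V, (∀ k, s k ∈ Function.support f) →
        ∃ j k, j < k ∧ s k - s j ∈ AddAction.stabilizer V (Function.support f) := by
  obtain ⟨N, hN⟩ := exists_nat_gt (fsNorm χ m / c)
  rw [div_lt_iff₀ hc] at hN
  obtain ⟨l, hsum, hl⟩ := exists_list_sum_eq_of_fsNorm_lt hC hc hm hdiff N m
    ⟨⟨C, hC⟩, fun t => ⟨1, by rw [Int.cast_one, one_mul]⟩⟩ (by linarith)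
  refine ⟨l, hsum, fun f hf => ?_⟩
  obtain ⟨hmul, hdich⟩ := hl f hf
  obtain ⟨C', hC'⟩ := hmul.1
  exact ⟨fun t ht hmt => ht (hmul.apply_eq_zero_of_eq_zero hmt), fun s hs =>
    exists_lt_sub_mem_stabilizer_support hc hC' (hmul.eq_zero_or_le_norm hm) hs (hdich s)⟩

end IdempotentDecomposition

/-! ### Absolutely convergent Fourier series and the Bohr topology -/

section BohrTopology

open AddMonoidAlgebra

variable {V ι : Type*} [AddCommGroup V]

/-- The neighbourhood filter of `0` in the Bohr topology on `V` induced by the characters `χ`, that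
is, in the topology of pointwise convergence of all `χ i`. -/
def bohrNhdsZero (χ : ι → AddChar V Circle) : Filter V :=
  comap (fun t i => χ i t) (𝓝 (1 : ι → Circle))

/-- `f` is the sum of a Fourier series in the characters `χ` whose coefficients have `ℓ¹`-norm at
most `C`. -/
def IsFourierSeries (χ : ι → AddChar V Circle) (f : V → ℂ) (C : ℝ) : Prop :=
  ∃ a : ι → ℂ, (Summable fun i => ‖a i‖) ∧ ∑' i, ‖a i‖ ≤ C ∧ ∀ t, f t = ∑' i, a i * χ i t

variable {χ : ι → AddChar V Circle} {f m : V → ℂ} {C : ℝ}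

lemma tendsto_neg_bohrNhdsZero : Tendsto Neg.neg (bohrNhdsZero χ) (bohrNhdsZero χ) := by
  refine tendsto_comap_iff.2 ?_
  have h : Tendsto (fun t : V => (fun i => χ i t)⁻¹) (bohrNhdsZero χ) (𝓝 1⁻¹) := tendsto_comap.inv
  rw [inv_one] at h
  exact h.congr fun t => funext fun i => (AddChar.map_neg_eq_inv (χ i) t).symm

/-- The images of `s k` in the compact group of all functions `ι → Circle` converge along an
ultrafilter. -/
lemma eventually_eventually_sub_mem_of_mem_bohrNhdsZero {U : Set V} (hU : U ∈ bohrNhdsZero χ)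
    (s : ℕ → V) :
    ∀ᶠ k in (hyperfilter ℕ : Filter ℕ), ∀ᶠ j in (hyperfilter ℕ : Filter ℕ), s k - s j ∈ U := by
  obtain ⟨W, hW, hWU⟩ := hU
  obtain ⟨W', hW'W, hW'open, h1⟩ := mem_nhds_iff.1 hW
  set b : V → ι → Circle := fun t i => χ i t
  obtain ⟨w, hw⟩ : ∃ w, Tendsto (fun k => b (s k)) (hyperfilter ℕ : Filter ℕ) (𝓝 w) :=
    ⟨_, Ultrafilter.le_nhds_lim ((hyperfilter ℕ).map fun k => b (s k))⟩
  have hdiv : Tendsto (fun k => b (s k) / w) (hyperfilter ℕ : Filter ℕ) (𝓝 1) := by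
    simpa only [div_self'] using hw.div_const' w
  filter_upwards [hdiv.eventually (hW'open.mem_nhds h1)] with k hk
  have hdivk := hw.const_div' (b (s k))
  filter_upwards [hdivk.eventually (hW'open.mem_nhds hk)] with j hj
  refine hWU (hW'W ?_)
  have hsub : b (s k - s j) = b (s k) / b (s j) :=
    funext fun i => AddChar.map_sub_eq_div (χ i) _ _
  change b (s k - s j) ∈ W'
  rwa [hsub]

lemma exists_finite_forall_sub_mem_of_mem_bohrNhdsZero {U : Set V} (hU : U ∈ bohrNhdsZero χ) :
    ∃ X : Set V, X.Finite ∧ ∀ x, ∃ y ∈ X, x - y ∈ U := by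
  by_contra! hcon
  obtain ⟨s, -, hs⟩ := exists_seq_of_forall_finset_exists (fun _ => True)
    (fun y x => x - y ∉ U) fun X _ => (hcon X X.finite_toSet).imp fun x hx => ⟨trivial, hx⟩
  obtain ⟨j, hj⟩ := (eventually_eventually_sub_mem_of_mem_bohrNhdsZero
    ((tendsto_neg_bohrNhdsZero (χ := χ)) hU) s).exists
  obtain ⟨k, hjk, hk⟩ :=
    (((eventually_gt_atTop j).filter_mono Nat.hyperfilter_le_atTop).and hj).exists
  refine hs j k hjk ?_
  simpa only [Set.mem_preimage, neg_sub] using hk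

lemma IsFourierSeries.eventually_forall_dist_lt (h : IsFourierSeries χ f C) {δ : ℝ} (hδ : 0 < δ) :
    ∀ᶠ s in bohrNhdsZero χ, ∀ t, dist (f (t + s)) (f t) < δ := by
  obtain ⟨a, ha, -, hf⟩ := h
  have hcont : Continuous fun w : ι → Circle => ∑' i, ‖a i * ((w i : ℂ) - 1)‖ := by
    refine continuous_tsum (u := fun i => ‖a i‖ * 2) (fun i => by fun_prop) (ha.mul_right 2)
      fun i w => ?_
    rw [norm_norm, norm_mul]
    gcongr
    exact (norm_sub_le _ _).trans_eq (by rw [Circle.norm_coe, norm_one]; norm_num)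
  have hsmall := hcont.tendsto 1
  simp only [Pi.one_apply, Circle.coe_one, sub_self, mul_zero, norm_zero, tsum_zero] at hsmall
  filter_upwards [tendsto_comap.eventually (hsmall.eventually (gt_mem_nhds hδ))] with s hs t
  have hsum (u : V) : Summable fun i => a i * χ i u :=
    Summable.of_norm (by simpa only [norm_mul, Circle.norm_coe, mul_one] using ha)
  have hdiff : f (t + s) - f t = ∑' i, a i * ((χ i s : ℂ) - 1) * χ i t := by
    rw [hf, hf, ← (hsum _).tsum_sub (hsum _)]
    refine tsum_congr fun i => ?_
    rw [AddChar.map_add_eq_mul, Circle.coe_mul]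
    ring
  have hnorm : Summable fun i => ‖a i * ((χ i s : ℂ) - 1) * χ i t‖ := by
    refine ((hsum (t + s)).sub (hsum t)).norm.congr fun i => ?_
    rw [AddChar.map_add_eq_mul, Circle.coe_mul]
    ring_nf
  rw [dist_eq_norm, hdiff]
  refine (norm_tsum_le_tsum_norm hnorm).trans_lt ?_
  simpa only [norm_mul, Circle.norm_coe, mul_one] using hs

lemma IsFourierSeries.norm_coeffPairing_le (h : IsFourierSeries χ f C) {P : ℂ[V]}
    (hP : ∀ i, ‖charEval (χ i) P‖ ≤ 1) : ‖coeffPairing f P‖ ≤ C := by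
  obtain ⟨a, ha, haC, hf⟩ := h
  have hsum (t : V) : Summable fun i => a i * χ i t :=
    Summable.of_norm (by simpa only [norm_mul, Circle.norm_coe, mul_one] using ha)
  have hpair : HasSum (fun i => a i * charEval (χ i) P) (coeffPairing f P) := by
    clear hP
    induction P using AddMonoidAlgebra.induction_linear with
    | zero => simpa only [map_zero, mul_zero] using hasSum_zero
    | add P Q hP hQ => simpa only [map_add, mul_add] using hP.add hQ
    | single t b =>
      simp only [coeffPairing_single, charEval_single, hf t]
      exact ((hsum t).hasSum.mul_left b).congr_fun fun i => by ring
  rw [← hpair.tsum_eq]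
  refine (tsum_of_norm_bounded ha.hasSum fun i => ?_).trans haC
  rw [norm_mul]
  exact mul_le_of_le_one_right (norm_nonneg _) (hP i)

lemma hasFSBound_of_tendsto {α : Type*} {l : Filter α} [l.NeBot] {F : α → V → ℂ} (hC : 0 ≤ C)
    (hF : ∀ᶠ ε in l, IsFourierSeries χ (F ε) C)
    (hlim : ∀ t, Tendsto (fun ε => F ε t) l (𝓝 (m t))) : HasFSBound χ m C := by
  refine ⟨hC, fun P hP => ?_⟩
  have hpair : Tendsto (fun ε => coeffPairing (F ε) P) l (𝓝 (coeffPairing m P)) := by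
    clear hP
    induction P using AddMonoidAlgebra.induction_linear with
    | zero => simpa only [map_zero] using tendsto_const_nhds
    | add P Q hP hQ => simpa only [map_add] using hP.add hQ
    | single t b => simpa only [coeffPairing_single] using (hlim t).const_mul b
  exact le_of_tendsto hpair.norm (hF.mono fun ε h => h.norm_coeffPairing_le hP)

end BohrTopology

/-! ### Growth of the total variation -/

namespace PPM

variable {V : Type*}

lemma var_eq_tsum_indicator (μ : PPM V) (A : Set V) :
    μ.var A = ∑' x, A.indicator (fun x => (‖μ.mass x‖₊ : ℝ≥0∞)) x :=
  tsum_subtype A fun x => (‖μ.mass x‖₊ : ℝ≥0∞)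

lemma var_mono (μ : PPM V) {A B : Set V} (h : A ⊆ B) : μ.var A ≤ μ.var B := by
  rw [var_eq_tsum_indicator, var_eq_tsum_indicator]
  exact ENNReal.tsum_le_tsum fun x => Set.indicator_le_indicator_of_subset h (fun _ => zero_le) x

variable [SeminormedAddGroup V] {μ : PPM V} {M : ℕ} {C : ℝ}

/-- Polynomial growth of the total variation: `|μ|(B(0, r)) ≤ C r ^ M` for all `r ≥ 1`. -/
def HasGrowth (μ : PPM V) (M : ℕ) (C : ℝ) : Prop :=
  0 ≤ C ∧ ∀ r, 1 ≤ r → μ.var (ball 0 r) ≤ ENNReal.ofReal (C * r ^ M)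

lemma exists_hasGrowth (hμ : ∀ r, μ.var (ball 0 r) < ⊤)
    (h : ∀ᶠ r in atTop, μ.var (ball 0 r) ≤ ENNReal.ofReal (C * r ^ M)) :
    ∃ C', μ.HasGrowth M C' := by
  obtain ⟨r₀, hr₀⟩ := eventually_atTop.1 h
  set v := (μ.var (ball 0 r₀)).toReal
  have hv0 : 0 ≤ v := ENNReal.toReal_nonneg
  refine ⟨max C v, le_max_of_le_right hv0, fun r hr => ?_⟩
  rcases le_total r₀ r with hrr | hrr
  · refine (hr₀ r hrr).trans (ENNReal.ofReal_le_ofReal ?_)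
    gcongr
    exact le_max_left C v
  · calc μ.var (ball 0 r) ≤ μ.var (ball 0 r₀) := μ.var_mono (ball_subset_ball hrr)
      _ = ENNReal.ofReal v := (ENNReal.ofReal_toReal (hμ r₀).ne).symm
      _ ≤ ENNReal.ofReal (max C v * r ^ M) := by
        gcongr
        exact (le_max_right C v).trans
          (le_mul_of_one_le_right (le_max_of_le_right hv0) (one_le_pow₀ hr))

variable {ε : ℝ}

/-- Dyadic decomposition into the shells `2 ^ k ≤ 1 + ε ‖x‖ < 2 ^ (k + 1)`. -/
lemma HasGrowth.tsum_weighted_le (h : μ.HasGrowth M C) (hε : 0 < ε) (hε1 : ε ≤ 1) :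
    ∑' x, (‖μ.mass x‖₊ : ℝ≥0∞) * ENNReal.ofReal (((1 + ε * ‖x‖) ^ (M + 1))⁻¹) ≤
      ENNReal.ofReal (2 ^ (M + 1) * C * (ε ^ M)⁻¹) := by
  have hC := h.1
  calc _ ≤ ∑' x, ∑' k : ℕ, ENNReal.ofReal (((2 ^ k) ^ (M + 1))⁻¹) *
        (ball (0 : V) (2 ^ (k + 1) / ε)).indicator (fun x => (‖μ.mass x‖₊ : ℝ≥0∞)) x := by
        refine ENNReal.tsum_le_tsum fun x => ?_
        obtain ⟨k, hk, hk'⟩ := exists_nat_pow_near (x := 1 + ε * ‖x‖)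
          (le_add_of_nonneg_right (by positivity)) one_lt_two
        refine le_trans ?_ (ENNReal.le_tsum k)
        have hx : x ∈ ball (0 : V) (2 ^ (k + 1) / ε) := by
          rw [mem_ball_zero_iff, lt_div_iff₀ hε]
          linarith
        rw [Set.indicator_of_mem hx, mul_comm]
        gcongr
    _ = ∑' k : ℕ, ENNReal.ofReal (((2 ^ k) ^ (M + 1))⁻¹) * μ.var (ball 0 (2 ^ (k + 1) / ε)) := by
        rw [ENNReal.tsum_comm]
        exact tsum_congr fun k => by rw [ENNReal.tsum_mul_left, var_eq_tsum_indicator]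
    _ ≤ ∑' k : ℕ, ENNReal.ofReal (2 ^ M * C * (ε ^ M)⁻¹ * (1 / 2) ^ k) := by
        refine ENNReal.tsum_le_tsum fun k => ?_
        have hr : 1 ≤ 2 ^ (k + 1) / ε := by
          rw [le_div_iff₀ hε, one_mul]
          exact hε1.trans (one_le_pow₀ one_le_two)
        refine (mul_le_mul_right (h.2 _ hr) _).trans ?_
        rw [← ENNReal.ofReal_mul (by positivity)]
        refine ENNReal.ofReal_le_ofReal (le_of_eq ?_)
        rw [pow_succ (2 : ℝ) k, pow_succ (2 ^ k : ℝ) M, div_pow, mul_pow, one_div, inv_pow]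
        field_simp
    _ = _ := by
        have hsum := hasSum_geometric_two.mul_left (2 ^ M * C * (ε ^ M)⁻¹)
        rw [← ENNReal.ofReal_tsum_of_nonneg (fun k => by positivity) hsum.summable, hsum.tsum_eq]
        congr 1
        ring

lemma HasGrowth.summable_weighted (h : μ.HasGrowth M C) (hε : 0 < ε) (hε1 : ε ≤ 1) :
    Summable (fun x => ‖μ.mass x‖ * ((1 + ε * ‖x‖) ^ (M + 1))⁻¹) ∧
      ∑' x, ‖μ.mass x‖ * ((1 + ε * ‖x‖) ^ (M + 1))⁻¹ ≤ 2 ^ (M + 1) * C * (ε ^ M)⁻¹ := by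
  have hC := h.1
  have hle := h.tsum_weighted_le hε hε1
  have hterm (x : V) : (‖μ.mass x‖₊ : ℝ≥0∞) * ENNReal.ofReal (((1 + ε * ‖x‖) ^ (M + 1))⁻¹) =
      ENNReal.ofReal (‖μ.mass x‖ * ((1 + ε * ‖x‖) ^ (M + 1))⁻¹) := by
    rw [ENNReal.ofReal_mul (norm_nonneg _), ofReal_norm, enorm_eq_nnnorm]
  simp only [hterm] at hle
  have hsum : Summable fun x => ‖μ.mass x‖ * ((1 + ε * ‖x‖) ^ (M + 1))⁻¹ :=
    (ENNReal.summable_toReal (hle.trans_lt ENNReal.ofReal_lt_top).ne).congr fun x =>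
      ENNReal.toReal_ofReal (by positivity)
  rw [← ENNReal.ofReal_tsum_of_nonneg (fun x => by positivity) hsum] at hle
  exact ⟨hsum, (ENNReal.ofReal_le_ofReal_iff (by positivity)).1 hle⟩

end PPM

/-! ### Cutoff functions and the growth of temperate measures -/

section Cutoff

variable {V : Type*} [NormedAddCommGroup V] [NormedSpace ℝ V] [FiniteDimensional ℝ V] {r : ℝ}

/-- A smooth function with values in `[0, 1]` (regarded as a subset of `ℂ`) which equals `1` on
`closedBall 0 (r / 2)` and vanishes outside `ball 0 r`, obtained by dilating one fixed function. -/
def cutoff (r : ℝ) (x : V) : ℂ :=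
  ((⟨1 / 2, 1, by norm_num, by norm_num⟩ : ContDiffBump (0 : V)) (r⁻¹ • x) : ℝ)

open scoped ContDiff in
lemma contDiff_cutoff (r : ℝ) : ContDiff ℝ ∞ (cutoff r : V → ℂ) :=
  ofRealCLM.contDiff.comp ((ContDiffBump.contDiff _).comp (contDiff_const_smul r⁻¹))

lemma ofReal_norm_cutoff (r : ℝ) (x : V) : (‖cutoff r x‖ : ℂ) = cutoff r x := by
  rw [cutoff, norm_real, Real.norm_of_nonneg (ContDiffBump.nonneg _)]

lemma norm_cutoff_le_one (r : ℝ) (x : V) : ‖cutoff r x‖ ≤ 1 := by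
  rw [cutoff, norm_real, Real.norm_of_nonneg (ContDiffBump.nonneg _)]
  exact ContDiffBump.le_one _

lemma cutoff_eq_one (hr : 0 < r) {x : V} (hx : ‖x‖ ≤ r / 2) : cutoff r x = 1 := by
  rw [cutoff, ContDiffBump.one_of_mem_closedBall, ofReal_one]
  rw [mem_closedBall_zero_iff, norm_smul, norm_inv, Real.norm_of_nonneg hr.le,
    inv_mul_le_iff₀ hr]
  linarith

lemma cutoff_eq_zero (hr : 0 < r) {x : V} (hx : r ≤ ‖x‖) : cutoff r x = 0 := by
  rw [cutoff, ContDiffBump.zero_of_le_dist, ofReal_zero]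
  rw [dist_zero_right, norm_smul, norm_inv, Real.norm_of_nonneg hr.le, le_inv_mul_iff₀ hr]
  linarith

lemma tsupport_cutoff_subset (hr : 0 < r) : tsupport (cutoff r : V → ℂ) ⊆ closedBall 0 r := by
  refine closure_minimal (fun x hx => ?_) isClosed_closedBall
  rw [mem_closedBall_zero_iff]
  exact le_of_not_ge fun h => hx (cutoff_eq_zero hr h)

lemma hasCompactSupport_cutoff (hr : 0 < r) : HasCompactSupport (cutoff r : V → ℂ) :=
  (isCompact_closedBall 0 r).of_isClosed_subset (isClosed_tsupport _) (tsupport_cutoff_subset hr)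

lemma exists_norm_iteratedFDeriv_cutoff_le (V : Type*) [NormedAddCommGroup V] [NormedSpace ℝ V]
    [FiniteDimensional ℝ V] (n : ℕ) :
    ∃ K, ∀ r : ℝ, 1 ≤ r → ∀ x : V, ‖iteratedFDeriv ℝ n (cutoff r) x‖ ≤ K := by
  set Φ : 𝓢(V, ℂ) := (hasCompactSupport_cutoff one_pos).toSchwartzMap (contDiff_cutoff 1)
  refine ⟨SchwartzMap.seminorm ℝ 0 n Φ, fun r hr x => ?_⟩
  have hdilate : cutoff r = fun x : V => cutoff 1 (r⁻¹ • x) := by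
    funext x
    simp only [cutoff, inv_one, one_smul]
  rw [hdilate, iteratedFDeriv_comp_const_smul _ ((contDiff_cutoff 1).of_le (mod_cast le_top)),
    norm_smul, norm_pow, norm_inv, Real.norm_of_nonneg (by positivity)]
  exact (mul_le_of_le_one_left (norm_nonneg _)
    (pow_le_one₀ (by positivity) (inv_le_one_of_one_le₀ hr))).trans
    (SchwartzMap.norm_iteratedFDeriv_le_seminorm ℝ Φ n _)

/-- `cutoff r` as a Schwartz function. -/
def schwartzCutoff (hr : 0 < r) : 𝓢(V, ℂ) :=
  (hasCompactSupport_cutoff hr).toSchwartzMap (contDiff_cutoff r)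

@[simp]
lemma coe_schwartzCutoff (hr : 0 < r) : ⇑(schwartzCutoff hr : 𝓢(V, ℂ)) = cutoff r := rfl

lemma exists_seminorm_schwartzCutoff_le (V : Type*) [NormedAddCommGroup V] [NormedSpace ℝ V]
    [FiniteDimensional ℝ V] (p n : ℕ) : ∃ K, ∀ r : ℝ, ∀ hr : 1 ≤ r,
      SchwartzMap.seminorm ℝ p n (schwartzCutoff (one_pos.trans_le hr) : 𝓢(V, ℂ)) ≤ r ^ p * K := by
  obtain ⟨K, hK⟩ := exists_norm_iteratedFDeriv_cutoff_le V n
  refine ⟨K, fun r hr => ?_⟩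
  have hK0 : 0 ≤ K := (norm_nonneg _).trans (hK r hr 0)
  refine SchwartzMap.seminorm_le_bound ℝ p n _ (by positivity) fun x => ?_
  by_cases hx : ‖x‖ ≤ r
  · gcongr
    exact hK r hr x
  · have hzero : iteratedFDeriv ℝ n (cutoff r) x = 0 := by
      by_contra hne
      exact hx (mem_closedBall_zero_iff.1 (tsupport_cutoff_subset (one_pos.trans_le hr)
        (support_iteratedFDeriv_subset n hne)))
    rw [coe_schwartzCutoff, hzero, norm_zero, mul_zero]
    positivity

end Cutoff

section Schwartz

variable {V F : Type*} [NormedAddCommGroup V] [NormedSpace ℝ V] [NormedAddCommGroup F]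
  [NormedSpace ℝ F] [CompleteSpace F]

open scoped ContDiff in
lemma exists_schwartzMap_eq_tsum {g : ℕ → 𝓢(V, F)}
    (h : ∀ p n, Summable fun j => SchwartzMap.seminorm ℝ p n (g j)) :
    ∃ Φ : 𝓢(V, F), ∀ x, Φ x = ∑' j, g j x := by
  have hbound (n : ℕ) (j : ℕ) (x : V) :
      ‖iteratedFDeriv ℝ n (g j) x‖ ≤ SchwartzMap.seminorm ℝ 0 n (g j) :=
    SchwartzMap.norm_iteratedFDeriv_le_seminorm ℝ (g j) n x
  have hsmooth (j : ℕ) : ContDiff ℝ ∞ (g j) := (g j).smooth ⊤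
  refine ⟨⟨fun x => ∑' j, g j x,
    contDiff_tsum hsmooth (fun n _ => h 0 n) fun n j x _ => hbound n j x, fun p n => ?_⟩,
    fun x => rfl⟩
  refine ⟨∑' j, SchwartzMap.seminorm ℝ p n (g j), fun x => ?_⟩
  rw [iteratedFDeriv_tsum_apply hsmooth (fun n _ => h 0 n) (fun n j x _ => hbound n j x) le_top x]
  have hsum : Summable fun j => ‖iteratedFDeriv ℝ n (g j) x‖ :=
    (h 0 n).of_nonneg_of_le (fun _ => norm_nonneg _) fun j => hbound n j x
  calc _ ≤ ‖x‖ ^ p * ∑' j, ‖iteratedFDeriv ℝ n (g j) x‖ := by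
        gcongr
        exact norm_tsum_le_tsum_norm hsum
    _ = ∑' j, ‖x‖ ^ p * ‖iteratedFDeriv ℝ n (g j) x‖ := tsum_mul_left.symm
    _ ≤ _ := (hsum.mul_left _).tsum_le_tsum (fun j => SchwartzMap.le_seminorm ℝ p n (g j) x) (h p n)

variable [FiniteDimensional ℝ V]

lemma exists_schwartzMap_forall_le_norm {r c : ℕ → ℝ} (hr : ∀ j, 1 ≤ r j) (hc : ∀ j, 0 ≤ c j)
    (hsum : ∀ p : ℕ, Summable fun j => c j * r j ^ p) :
    ∃ Φ : 𝓢(V, ℂ), ∀ j x, ‖x‖ ≤ r j → c j ≤ ‖Φ x‖ := by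
  have hr2 (j : ℕ) : 1 ≤ 2 * r j := by linarith [hr j]
  obtain ⟨Φ, hΦ⟩ := exists_schwartzMap_eq_tsum
    (g := fun j => c j • (schwartzCutoff (one_pos.trans_le (hr2 j)) : 𝓢(V, ℂ))) fun p n => by
      obtain ⟨K, hK⟩ := exists_seminorm_schwartzCutoff_le V p n
      refine ((hsum p).mul_right (2 ^ p * K)).of_nonneg_of_le (fun j => apply_nonneg _ _)
        fun j => ?_
      rw [map_smul_eq_mul, Real.norm_of_nonneg (hc j)]
      exact (mul_le_mul_of_nonneg_left (hK _ (hr2 j)) (hc j)).trans_eq (by ring)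
  have hterm (j : ℕ) (x : V) : (c j • (schwartzCutoff (one_pos.trans_le (hr2 j)) : 𝓢(V, ℂ))) x =
      ((c j * ‖cutoff (2 * r j) x‖ : ℝ) : ℂ) := by
    rw [smul_apply, coe_schwartzCutoff, ofReal_mul, ofReal_norm_cutoff, real_smul]
  refine ⟨Φ, fun j x hx => ?_⟩
  have hsummable : Summable fun j => c j * ‖cutoff (2 * r j) x‖ :=
    (hsum 0).of_nonneg_of_le (fun j => mul_nonneg (hc j) (norm_nonneg _)) fun j => by
      simpa only [pow_zero] using mul_le_mul_of_nonneg_left (norm_cutoff_le_one _ x) (hc j)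
  simp only [hΦ, hterm, ← ofReal_tsum, norm_real]
  calc c j = c j * ‖cutoff (2 * r j) x‖ := by
        rw [cutoff_eq_one (one_pos.trans_le (hr2 j)) (by linarith), norm_one, mul_one]
    _ ≤ ∑' j, c j * ‖cutoff (2 * r j) x‖ :=
        hsummable.le_tsum j fun i _ => mul_nonneg (hc i) (norm_nonneg _)
    _ ≤ _ := Real.le_norm_self _

end Schwartz

section TemperateGrowth

variable {V : Type*}

lemma PPM.mul_var_le_tsum (μ : PPM V) {φ : V → ℂ} {A : Set V} {c : ℝ}
    (hsum : Summable fun x => μ.mass x * φ x) (hc : ∀ x ∈ A, c ≤ ‖φ x‖) :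
    ENNReal.ofReal c * μ.var A ≤ ENNReal.ofReal (∑' x, ‖μ.mass x * φ x‖) := by
  rw [ENNReal.ofReal_tsum_of_nonneg (fun x => norm_nonneg _) hsum.norm,
    PPM.var_eq_tsum_indicator, ← ENNReal.tsum_mul_left]
  refine ENNReal.tsum_le_tsum fun x => ?_
  by_cases hx : x ∈ A
  · rw [Set.indicator_of_mem hx, mul_comm, norm_mul, ENNReal.ofReal_mul (norm_nonneg _),
      ofReal_norm, enorm_eq_nnnorm]
    gcongr
    exact hc x hx
  · rw [Set.indicator_of_notMem hx, mul_zero]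
    exact zero_le

lemma summable_inv_pow_mul_pow {r : ℕ → ℝ} (hr : ∀ j, 2 ^ j ≤ r j) (p : ℕ) :
    Summable fun j => (r j ^ j)⁻¹ * r j ^ p := by
  rw [← summable_nat_add_iff (p + 1)]
  have hr1 (j : ℕ) : 1 ≤ r j := (one_le_pow₀ one_le_two).trans (hr j)
  refine summable_geometric_two.of_nonneg_of_le
    (fun j => by have := hr1 (j + (p + 1)); positivity) fun j => ?_
  set ρ := r (j + (p + 1))
  have hρ : 1 ≤ ρ := hr1 _
  have hρj : 2 ^ j ≤ ρ := (pow_le_pow_right₀ one_le_two (Nat.le_add_right _ _)).trans (hr _)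
  calc (ρ ^ (j + (p + 1)))⁻¹ * ρ ^ p ≤ (ρ ^ (p + 1))⁻¹ * ρ ^ p := by
        gcongr ?_⁻¹ * _
        exact pow_le_pow_right₀ hρ (Nat.le_add_left _ _)
    _ = ρ⁻¹ := by
        rw [pow_succ]
        field_simp
    _ ≤ (2 ^ j)⁻¹ := by gcongr
    _ = (1 / 2) ^ j := by rw [one_div, inv_pow]

/-- Otherwise `|μ|(B(0, r j)) > j * r j ^ j` for suitable radii `r j ≥ 2 ^ j`, and then `μ` does not
integrate a Schwartz function which is at least `(r j ^ j)⁻¹` on `B(0, r j)` for all `j`. -/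
lemma PPM.temperate.exists_hasGrowth {μ : PPM (Ed d)} (ht : μ.temperate) (hμ : μ.locFinite) :
    ∃ M C, μ.HasGrowth M C := by
  by_contra! hcon
  have hlarge (j : ℕ) :
      ∃ r : ℝ, 2 ^ j ≤ r ∧ ENNReal.ofReal (j * r ^ j) < μ.var (ball 0 r) := by
    by_contra! hsmall
    obtain ⟨C, hC⟩ := PPM.exists_hasGrowth hμ ((eventually_ge_atTop (2 ^ j)).mono hsmall)
    exact hcon j C hC
  choose r hr hvar using hlarge
  have hr1 (j : ℕ) : 1 ≤ r j := (one_le_pow₀ one_le_two).trans (hr j)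
  have hr0 (j : ℕ) : 0 < r j := one_pos.trans_le (hr1 j)
  obtain ⟨Φ, hΦ⟩ := exists_schwartzMap_forall_le_norm (V := Ed d) (c := fun j => (r j ^ j)⁻¹) hr1
    (fun j => inv_nonneg.2 (pow_nonneg (hr0 j).le j)) (summable_inv_pow_mul_pow hr)
  obtain ⟨j, hj⟩ := exists_nat_gt (∑' x, ‖μ.mass x * Φ x‖)
  refine absurd ?_ (not_le.2 hj)
  rw [← ENNReal.ofReal_le_ofReal_iff (tsum_nonneg fun x => norm_nonneg _)]
  calc ENNReal.ofReal j = ENNReal.ofReal (r j ^ j)⁻¹ * ENNReal.ofReal (j * r j ^ j) := by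
        have := hr0 j
        rw [← ENNReal.ofReal_mul (by positivity)]
        congr 1
        field_simp
    _ ≤ ENNReal.ofReal (r j ^ j)⁻¹ * μ.var (ball 0 (r j)) := by
        gcongr
        exact (hvar j).le
    _ ≤ _ := μ.mul_var_le_tsum (ht Φ) fun x hx => hΦ j x (mem_ball_zero_iff.1 hx).le

end TemperateGrowth

/-! ### Pure point measures with pure point Fourier transform -/

section SchwartzDensity

variable {V F : Type*} [NormedAddCommGroup V] [NormedSpace ℝ V] [NormedAddCommGroup F]
  [NormedSpace ℝ F]

lemma norm_schwartzMap_le_mul_inv_one_add_norm_pow (𝕜 : Type*) [NormedField 𝕜] [NormedSpace 𝕜 F]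
    [SMulCommClass ℝ 𝕜 F] (φ : 𝓢(V, F)) (k : ℕ) (x : V) :
    ‖φ x‖ ≤ 2 ^ k * (Finset.Iic (k, 0)).sup (schwartzSeminormFamily 𝕜 V F) φ *
      ((1 + ‖x‖) ^ k)⁻¹ := by
  have hle := φ.one_add_le_sup_seminorm_apply (𝕜 := 𝕜) (m := (k, 0)) le_rfl le_rfl x
  rw [norm_iteratedFDeriv_zero] at hle
  rw [← div_eq_mul_inv, le_div_iff₀ (by positivity), mul_comm]
  exact hle

lemma seminorm_schwartzMap_le_of_forall_mem_ball_eq_zero {φ : 𝓢(V, F)} {R : ℝ} (hR : 0 < R)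
    (h : ∀ x ∈ ball 0 R, φ x = 0) (k n : ℕ) :
    SchwartzMap.seminorm ℝ k n φ ≤ R⁻¹ * SchwartzMap.seminorm ℝ (k + 1) n φ := by
  refine SchwartzMap.seminorm_le_bound ℝ k n φ (by positivity) fun x => ?_
  rcases lt_or_ge ‖x‖ R with hx | hx
  · have hzero : ⇑φ =ᶠ[𝓝 x] fun _ => 0 :=
      eventually_of_mem (isOpen_ball.mem_nhds (mem_ball_zero_iff.2 hx)) h
    rw [(hzero.iteratedFDeriv ℝ n).eq_of_nhds, iteratedFDeriv_fun_zero, Pi.zero_apply, norm_zero,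
      mul_zero]
    positivity
  · calc ‖x‖ ^ k * ‖iteratedFDeriv ℝ n φ x‖
        ≤ R⁻¹ * (‖x‖ * (‖x‖ ^ k * ‖iteratedFDeriv ℝ n φ x‖)) := by
          rw [le_inv_mul_iff₀ hR]
          gcongr
      _ = R⁻¹ * (‖x‖ ^ (k + 1) * ‖iteratedFDeriv ℝ n φ x‖) := by ring
      _ ≤ R⁻¹ * SchwartzMap.seminorm ℝ (k + 1) n φ := by
          gcongr
          exact SchwartzMap.le_seminorm ℝ (k + 1) n φ x

lemma PPM.HasGrowth.continuous_pair {μ : PPM V} {M : ℕ} {C : ℝ} (hμ : μ.HasGrowth M C) :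
    Continuous fun φ : 𝓢(V, ℂ) => μ.pair φ := by
  have hw := (hμ.summable_weighted one_pos le_rfl).1
  simp only [one_mul] at hw
  have hbound (φ : 𝓢(V, ℂ)) (x : V) : ‖μ.mass x * φ x‖ ≤
      2 ^ (M + 1) * (Finset.Iic (M + 1, 0)).sup (schwartzSeminormFamily ℂ V ℂ) φ *
        (‖μ.mass x‖ * ((1 + ‖x‖) ^ (M + 1))⁻¹) := by
    rw [norm_mul]
    exact (mul_le_mul_of_nonneg_left
      (norm_schwartzMap_le_mul_inv_one_add_norm_pow ℂ φ (M + 1) x) (norm_nonneg _)).trans_eq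
      (by ring)
  have hsum (φ : 𝓢(V, ℂ)) : Summable fun x => μ.mass x * φ x :=
    Summable.of_norm_bounded (hw.mul_left _) (hbound φ)
  refine (SchwartzMap.mkCLMtoNormedSpace (σ := RingHom.id ℂ) (fun φ : 𝓢(V, ℂ) => μ.pair φ)
    (fun φ ψ => ?_) (fun a φ => ?_) ⟨Finset.Iic (M + 1, 0),
      2 ^ (M + 1) * ∑' x, ‖μ.mass x‖ * ((1 + ‖x‖) ^ (M + 1))⁻¹, by positivity,
      fun φ => ?_⟩).continuous
  · simp only [PPM.pair, add_apply, mul_add]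
    exact (hsum φ).tsum_add (hsum ψ)
  · simp only [PPM.pair, smul_apply, smul_eq_mul, RingHom.id_apply, mul_left_comm _ a,
      tsum_mul_left]
  · exact (tsum_of_norm_bounded (hw.mul_left _).hasSum (hbound φ)).trans_eq
      (by rw [tsum_mul_left]; ring)

variable [FiniteDimensional ℝ V] {r : ℝ}

lemma smulLeftCLM_cutoff_apply (hr : 0 < r) (φ : 𝓢(V, ℂ)) (x : V) :
    SchwartzMap.smulLeftCLM ℂ (cutoff r) φ x = cutoff r x * φ x :=
  SchwartzMap.smulLeftCLM_apply_apply (schwartzCutoff hr).hasTemperateGrowth φ x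

lemma exists_seminorm_smulLeftCLM_cutoff_le (φ : 𝓢(V, ℂ)) (k n : ℕ) : ∃ B, ∀ r : ℝ, 1 ≤ r →
    SchwartzMap.seminorm ℝ k n (SchwartzMap.smulLeftCLM ℂ (cutoff r) φ) ≤ B := by
  choose K hK using exists_norm_iteratedFDeriv_cutoff_le V
  have hK0 (i : ℕ) : 0 ≤ K i := (norm_nonneg _).trans (hK i 1 le_rfl 0)
  refine ⟨∑ i ∈ Finset.range (n + 1),
    (n.choose i : ℝ) * K i * SchwartzMap.seminorm ℝ k (n - i) φ, fun r hr => ?_⟩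
  have hφ0 (i : ℕ) : 0 ≤ SchwartzMap.seminorm ℝ k i φ := apply_nonneg _ φ
  refine SchwartzMap.seminorm_le_bound ℝ k n _
    (Finset.sum_nonneg fun i _ => by have := hK0 i; have := hφ0 (n - i); positivity) fun x => ?_
  rw [funext (smulLeftCLM_cutoff_apply (one_pos.trans_le hr) φ)]
  calc _ ≤ ‖x‖ ^ k * ∑ i ∈ Finset.range (n + 1), (n.choose i : ℝ) *
        ‖iteratedFDeriv ℝ i (cutoff r) x‖ * ‖iteratedFDeriv ℝ (n - i) φ x‖ := by
        gcongr
        exact norm_iteratedFDeriv_mul_le (contDiff_cutoff r) (φ.smooth ⊤) x (mod_cast le_top)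
    _ = ∑ i ∈ Finset.range (n + 1), (n.choose i : ℝ) * ‖iteratedFDeriv ℝ i (cutoff r) x‖ *
        (‖x‖ ^ k * ‖iteratedFDeriv ℝ (n - i) φ x‖) := by
        rw [Finset.mul_sum]
        exact Finset.sum_congr rfl fun i _ => by ring
    _ ≤ _ := by
        gcongr with i
        · exact mul_nonneg (Nat.cast_nonneg _) (hK0 i)
        · exact hK i r hr x
        · exact SchwartzMap.le_seminorm ℝ k (n - i) φ x

lemma tendsto_smulLeftCLM_cutoff (φ : 𝓢(V, ℂ)) :
    Tendsto (fun r : ℝ => SchwartzMap.smulLeftCLM ℂ (cutoff r) φ) atTop (𝓝 φ) := by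
  rw [(schwartz_withSeminorms ℝ V ℂ).tendsto_nhds]
  rintro ⟨k, n⟩ δ hδ
  obtain ⟨B, hB⟩ := exists_seminorm_smulLeftCLM_cutoff_le φ (k + 1) n
  have hlim : Tendsto (fun r : ℝ => (r / 2)⁻¹ * (B + SchwartzMap.seminorm ℝ (k + 1) n φ)) atTop
      (𝓝 0) := by
    simpa only [zero_mul, Function.comp_def, id] using
      (tendsto_inv_atTop_zero.comp (tendsto_id.atTop_div_const (zero_lt_two' ℝ))).mul_const _
  filter_upwards [hlim.eventually (gt_mem_nhds hδ), eventually_ge_atTop 1] with r hr hr1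
  have hr0 : 0 < r := one_pos.trans_le hr1
  refine lt_of_le_of_lt ?_ hr
  refine (seminorm_schwartzMap_le_of_forall_mem_ball_eq_zero (half_pos hr0) (fun x hx => ?_)
    k n).trans ?_
  · rw [sub_apply, smulLeftCLM_cutoff_apply hr0,
      cutoff_eq_one hr0 (mem_ball_zero_iff.1 hx).le, one_mul, sub_self]
  · gcongr
    exact (map_sub_le_add _ _ _).trans (by gcongr; exact hB r hr1)

lemma dense_setOf_schwartzMap_hasCompactSupport : Dense {φ : 𝓢(V, ℂ) | HasCompactSupport φ} := by
  refine fun φ => mem_closure_of_tendsto (tendsto_smulLeftCLM_cutoff φ)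
    ((eventually_gt_atTop 0).mono fun r hr => ?_)
  rw [Set.mem_ofPred, funext (smulLeftCLM_cutoff_apply hr φ)]
  exact (hasCompactSupport_cutoff hr).mul_right

lemma IsFT.pair_eq_pair_fourierInv {μ ν : PPM (Ed d)} (hF : IsFT μ ν) {M N : ℕ} {C D : ℝ}
    (hμ : μ.HasGrowth M C) (hν : ν.HasGrowth N D) (φ : 𝓢(Ed d, ℂ)) :
    μ.pair φ = ν.pair (𝓕⁻ φ : 𝓢(Ed d, ℂ)) := by
  have hext := (hμ.continuous_pair.comp
    (FourierTransform.fourierCLE ℂ 𝓢(Ed d, ℂ)).continuous).ext_on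
    dense_setOf_schwartzMap_hasCompactSupport hν.continuous_pair hF
  simpa using congrFun hext (𝓕⁻ φ)

end SchwartzDensity

/-! ### Smoothings of a measure at small scales -/

section Smoothing

/-- The character `t ↦ e ^ (2πi t·γ)` of a real inner product space. -/
def innerChar {V : Type*} [NormedAddCommGroup V] [InnerProductSpace ℝ V] (γ : V) :
    AddChar V Circle :=
  Real.fourierChar.compAddMonoidHom (innerSL ℝ γ : V →L[ℝ] ℝ)

section InnerProductSpace

variable {V : Type*} [NormedAddCommGroup V] [InnerProductSpace ℝ V]

lemma coe_innerChar_apply (γ t : V) :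
    (innerChar γ t : ℂ) = Complex.exp ((2 * Real.pi * ⟪t, γ⟫ : ℝ) * Complex.I) := by
  rw [real_inner_comm]
  exact Real.fourierChar_apply _

lemma innerChar_add (γ γ' t : V) : innerChar (γ + γ') t = innerChar γ t * innerChar γ' t := by
  simp only [innerChar, AddChar.compAddMonoidHom_apply, AddMonoidHom.coe_coe, map_add,
    add_apply, AddChar.map_add_eq_mul]

lemma innerChar_eq_one_of_inner_eq_intCast {γ t : V} {n : ℤ} (h : ⟪t, γ⟫ = n) :
    innerChar γ t = 1 := by
  refine Circle.ext ?_
  rw [coe_innerChar_apply, h, Circle.coe_one, Complex.exp_eq_one_iff]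
  exact ⟨n, by push_cast; ring⟩

end InnerProductSpace

section FiniteDimensional

variable {V : Type*} [NormedAddCommGroup V] [NormedSpace ℝ V] [FiniteDimensional ℝ V]
  {m : V → ℂ} {ε : ℝ} {t l : V}

/-- The convolution at scale `ε` of the measure with masses `m` and a fixed bump function. -/
def smoothing (m : V → ℂ) (ε : ℝ) (t : V) : ℂ := ∑' x, m x * cutoff ε (x - t)

lemma exists_dist_lt_of_smoothing_ne_zero (hε : 0 < ε) (h : smoothing m ε t ≠ 0) :
    ∃ x ∈ Function.support m, dist x t < ε := by
  contrapose! h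
  refine (tsum_congr fun x => ?_).trans tsum_zero
  by_cases hx : m x = 0
  · rw [hx, zero_mul]
  · rw [cutoff_eq_zero hε ((h x hx).trans_eq (dist_eq_norm x t)), mul_zero]

lemma smoothing_eq_of_forall_dist_lt (hε : 0 < ε) (hl : dist l t ≤ ε / 2)
    (h : ∀ x ∈ Function.support m, dist x t < ε → x = l) : smoothing m ε t = m l := by
  rw [smoothing, tsum_eq_single l, cutoff_eq_one hε (by rwa [← dist_eq_norm]), mul_one]
  intro x hxl
  by_cases hx : m x = 0
  · rw [hx, zero_mul]
  · rw [cutoff_eq_zero hε, mul_zero]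
    rw [← dist_eq_norm]
    exact le_of_not_gt fun hlt => hxl (h x hx hlt)

lemma tendsto_smoothing {μ : PPM V} (hμ : ∀ r, μ.var (ball 0 r) < ⊤) (t : V) :
    Tendsto (fun ε => smoothing μ.mass ε t) (𝓝[>] 0) (𝓝 (μ.mass t)) := by
  classical
  have hsum : Summable ((ball 0 (‖t‖ + 1)).indicator fun x => ‖μ.mass x‖) := by
    refine (ENNReal.summable_toReal
      ((μ.var_eq_tsum_indicator _).symm.trans_lt (hμ (‖t‖ + 1))).ne).congr fun x => ?_
    simp only [Set.indicator_apply, apply_ite ENNReal.toReal, ENNReal.coe_toReal, coe_nnnorm,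
      ENNReal.toReal_zero]
  rw [← tsum_ite_eq t fun _ => μ.mass t]
  refine tendsto_tsum_of_dominated_convergence hsum (fun x => ?_) ?_
  · split_ifs with hx
    · subst hx
      refine tendsto_const_nhds.congr' (eventually_mem_nhdsWithin.mono fun ε hε => ?_)
      simp only [sub_self]
      rw [cutoff_eq_one hε (by simpa only [norm_zero] using (half_pos hε).le), mul_one]
    · refine tendsto_const_nhds.congr' ?_
      filter_upwards [Ioc_mem_nhdsGT (norm_pos_iff.2 (sub_ne_zero.2 hx))] with ε hε
      rw [cutoff_eq_zero hε.1 hε.2, mul_zero]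
  · filter_upwards [Ioc_mem_nhdsGT (zero_lt_one' ℝ)] with ε hε x
    by_cases hx : x ∈ ball (0 : V) (‖t‖ + 1)
    · rw [Set.indicator_of_mem hx, norm_mul]
      exact mul_le_of_le_one_right (norm_nonneg _) (norm_cutoff_le_one _ _)
    · rw [Set.indicator_of_notMem hx, cutoff_eq_zero hε.1, mul_zero, norm_zero]
      rw [mem_ball_zero_iff, not_lt] at hx
      linarith [hε.2, norm_sub_norm_le x t]

end FiniteDimensional

lemma fourierInv_cutoff_sub {ε : ℝ} (hε : 0 < ε) (t γ : Ed d) :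
    𝓕⁻ (fun x => cutoff ε (x - t)) γ =
      (ε ^ d : ℝ) * 𝓕⁻ (cutoff 1 : Ed d → ℂ) (ε • γ) * innerChar γ t := by
  rw [Real.fourierInv_eq', Real.fourierInv_eq']
  set F : Ed d → ℂ := fun y =>
    Complex.exp ((2 * Real.pi * ⟪ε • y + t, γ⟫ : ℝ) * I) * cutoff 1 y with hF
  calc _ = ∫ x, (fun z => F (ε⁻¹ • z)) (x - t) := by
        refine integral_congr_ae (ae_of_all _ fun x => ?_)
        simp only [hF, cutoff, smul_inv_smul₀ hε.ne', sub_add_cancel, inv_one, one_smul,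
          smul_eq_mul]
    _ = (ε ^ d : ℝ) * ∫ y, F y := by
        rw [integral_sub_right_eq_self fun z => F (ε⁻¹ • z), Measure.integral_comp_inv_smul,
          finrank_euclideanSpace_fin, abs_of_pos (by positivity), Complex.real_smul]
    _ = (ε ^ d : ℝ) * ∫ y, (Complex.exp ((2 * Real.pi * ⟪y, ε • γ⟫ : ℝ) * I) • cutoff 1 y) *
          innerChar γ t := by
        congr 2 with y
        rw [coe_innerChar_apply, smul_eq_mul, mul_right_comm, ← Complex.exp_add]
        simp only [hF]
        rw [inner_add_left, real_inner_smul_left, real_inner_smul_right]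
        push_cast
        ring_nf
    _ = _ := by rw [integral_mul_const, mul_assoc]

open scoped ContDiff in
lemma IsFT.smoothing_eq_tsum {μ ν : PPM (Ed d)} (hF : IsFT μ ν) {M N : ℕ} {C D : ℝ}
    (hμ : μ.HasGrowth M C) (hν : ν.HasGrowth N D) {ε : ℝ} (hε : 0 < ε) (t : Ed d) :
    smoothing μ.mass ε t =
      ∑' γ, ν.mass γ * ((ε ^ d : ℝ) * 𝓕⁻ (cutoff 1 : Ed d → ℂ) (ε • γ)) * innerChar γ t := by
  have hcompact : HasCompactSupport fun x : Ed d => cutoff ε (x - t) :=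
    (hasCompactSupport_cutoff hε).comp_homeomorph (Homeomorph.subRight t)
  have hsmooth : ContDiff ℝ ∞ fun x : Ed d => cutoff ε (x - t) :=
    (contDiff_cutoff ε).comp (contDiff_id.sub contDiff_const)
  refine (hF.pair_eq_pair_fourierInv hμ hν (hcompact.toSchwartzMap hsmooth)).trans
    (tsum_congr fun γ => ?_)
  rw [SchwartzMap.fourierInv_coe, mul_assoc]
  exact congrArg (ν.mass γ * ·) (fourierInv_cutoff_sub hε t γ)

/-- Since `ν` grows like `r ^ d`, the factor `ε ^ d` in front of the Fourier transform of the bump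
function makes the bound uniform in `ε`. -/
lemma IsFT.exists_isFourierSeries_smoothing {μ ν : PPM (Ed d)} (hF : IsFT μ ν) {M : ℕ} {C D : ℝ}
    (hμ : μ.HasGrowth M C) (hν : ν.HasGrowth d D) :
    ∃ B, 0 ≤ B ∧ ∀ ε ∈ Set.Ioc (0 : ℝ) 1, IsFourierSeries innerChar (smoothing μ.mass ε) B := by
  set Ψ : 𝓢(Ed d, ℂ) := 𝓕⁻ (schwartzCutoff one_pos : 𝓢(Ed d, ℂ))
  set K := 2 ^ (d + 1) *
    (Finset.Iic (d + 1, 0)).sup (schwartzSeminormFamily ℂ (Ed d) ℂ) Ψ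
  have : 0 ≤ K := mul_nonneg (by positivity) (apply_nonneg _ _)
  have hD := hν.1
  refine ⟨K * (2 ^ (d + 1) * D), by positivity, fun ε ⟨hε, hε1⟩ =>
    ⟨fun γ => ν.mass γ * ((ε ^ d : ℝ) * 𝓕⁻ (cutoff 1 : Ed d → ℂ) (ε • γ)), ?_⟩⟩
  obtain ⟨hsum, hle⟩ := hν.summable_weighted hε hε1
  have hbound (γ : Ed d) : ‖ν.mass γ * ((ε ^ d : ℝ) * 𝓕⁻ (cutoff 1 : Ed d → ℂ) (ε • γ))‖ ≤
      K * ε ^ d * (‖ν.mass γ‖ * ((1 + ε * ‖γ‖) ^ (d + 1))⁻¹) := by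
    have hΨ : ‖𝓕⁻ (cutoff 1 : Ed d → ℂ) (ε • γ)‖ ≤ K * ((1 + ε * ‖γ‖) ^ (d + 1))⁻¹ := by
      have h := norm_schwartzMap_le_mul_inv_one_add_norm_pow ℂ Ψ (d + 1) (ε • γ)
      rwa [SchwartzMap.fourierInv_coe, norm_smul, Real.norm_of_nonneg hε.le] at h
    rw [norm_mul, norm_mul, norm_real, Real.norm_of_nonneg (by positivity)]
    calc _ ≤ ‖ν.mass γ‖ * (ε ^ d * (K * ((1 + ε * ‖γ‖) ^ (d + 1))⁻¹)) := by gcongr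
      _ = _ := by ring
  have hcoeff := (hsum.mul_left (K * ε ^ d)).of_nonneg_of_le (fun _ => norm_nonneg _) hbound
  refine ⟨hcoeff, ?_, hF.smoothing_eq_tsum hμ hν hε⟩
  calc _ ≤ K * ε ^ d * ∑' γ, ‖ν.mass γ‖ * ((1 + ε * ‖γ‖) ^ (d + 1))⁻¹ := by
        rw [← tsum_mul_left]
        exact hcoeff.tsum_le_tsum hbound (hsum.mul_left _)
    _ ≤ K * ε ^ d * (2 ^ (d + 1) * D * (ε ^ d)⁻¹) := by gcongr
    _ = K * (2 ^ (d + 1) * D) := by field_simp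

end Smoothing

/-! ### Finite unions of cosets -/

section CosetUnion

variable {V : Type*} [AddCommGroup V]

lemma mem_vadd_coe_addSubgroup {H : AddSubgroup V} {a x : V} :
    x ∈ a +ᵥ (H : Set V) ↔ x - a ∈ H := by
  rw [mem_leftAddCoset_iff, neg_add_eq_sub, SetLike.mem_coe]

/-- The union of the cosets `a + H` with `(H, a) ∈ P`. -/
def cosetUnion (P : Set (AddSubgroup V × V)) : Set V :=
  ⋃ p ∈ P, p.2 +ᵥ (p.1 : Set V)

lemma mem_cosetUnion {P : Set (AddSubgroup V × V)} {x : V} :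
    x ∈ cosetUnion P ↔ ∃ p ∈ P, x - p.2 ∈ p.1 := by
  simp only [cosetUnion, Set.mem_iUnion, mem_vadd_coe_addSubgroup, exists_prop]

lemma exists_finite_cosetUnion_eq {S : Set V}
    (hS : ∀ s : ℕ → V, (∀ k, s k ∈ S) → ∃ j k, j < k ∧ s k - s j ∈ AddAction.stabilizer V S) :
    ∃ P : Set (AddSubgroup V × V), P.Finite ∧ cosetUnion P = S := by
  set H := AddAction.stabilizer V S
  have hfinite : ((QuotientAddGroup.mk : V → V ⧸ H) '' S).Finite := by
    by_contra hinf
    let e := Set.Infinite.natEmbedding _ hinf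
    choose s hsS hse using fun k => (e k).2
    obtain ⟨j, k, hjk, hmem⟩ := hS s hsS
    have heq : (s j : V ⧸ H) = s k := by rwa [QuotientAddGroup.eq, neg_add_eq_sub]
    rw [hse, hse] at heq
    exact hjk.ne (e.injective (Subtype.ext heq))
  obtain ⟨A, hAS, hA⟩ := Set.exists_subset_bijOn S (QuotientAddGroup.mk : V → V ⧸ H)
  refine ⟨(fun a => (H, a)) '' A, (hA.finite_iff_finite.2 hfinite).image _, ?_⟩
  ext x
  rw [mem_cosetUnion, Set.exists_mem_image]
  constructor
  · rintro ⟨a, ha, hxa⟩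
    simpa using (AddAction.mem_stabilizer_set.1 hxa a).2 (hAS ha)
  · intro hx
    obtain ⟨a, ha, hax⟩ := hA.surjOn ⟨x, hx, rfl⟩
    rw [QuotientAddGroup.eq, neg_add_eq_sub] at hax
    exact ⟨a, ha, hax⟩

lemma exists_finite_cosetUnion_eq_support_sum {M : Type*} [AddMonoid M] (l : List (V → M))
    (hl : ∀ f ∈ l, Function.support f ⊆ Function.support l.sum ∧
      ∀ s : ℕ → V, (∀ k, s k ∈ Function.support f) →
        ∃ j k, j < k ∧ s k - s j ∈ AddAction.stabilizer V (Function.support f)) :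
    ∃ P : Set (AddSubgroup V × V), P.Finite ∧ cosetUnion P = Function.support l.sum := by
  choose! P hPfin hP using fun f hf => exists_finite_cosetUnion_eq (hl f hf).2
  refine ⟨⋃ f ∈ {f | f ∈ l}, P f, l.finite_toSet.biUnion hPfin, ?_⟩
  have hunion : cosetUnion (⋃ f ∈ {f | f ∈ l}, P f) = ⋃ f ∈ {f | f ∈ l}, Function.support f := by
    simp only [cosetUnion, Set.biUnion_iUnion]
    exact Set.iUnion₂_congr hP
  rw [hunion]
  refine (Set.iUnion₂_subset fun f hf => (hl f hf).1).antisymm fun x hx => ?_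
  by_contra hnone
  simp only [Set.mem_iUnion, Function.mem_support, not_exists, not_not] at hnone
  refine hx ?_
  rw [Pi.list_sum_apply]
  exact List.sum_eq_zero fun _ hy => by
    obtain ⟨f, hf, rfl⟩ := List.mem_map.1 hy
    exact hnone f hf

end CosetUnion

section FullRankCosets

variable {V : Type*} [NormedAddCommGroup V]

/-- A set is almost periodic if for every `ε > 0` the vectors `τ` for which `Λ` and `τ + Λ` are
within Hausdorff distance `ε` are relatively dense. -/
def IsAlmostPeriodicSet (Λ : Set V) : Prop :=
  ∀ ε > 0, ∃ ρ : ℝ, ∀ x, ∃ τ : V, dist x τ ≤ ρ ∧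
    τ +ᵥ Λ ⊆ thickening ε Λ ∧ -τ +ᵥ Λ ⊆ thickening ε Λ

lemma exists_tendsto_sub_of_vadd_subset_thickening {ι : Type*} {l : Filter ι} {Λ : Set V}
    {τ : ι → V} {ε : ι → ℝ} (hτ : ∀ k, τ k +ᵥ Λ ⊆ thickening (ε k) Λ) (hε : Tendsto ε l (𝓝 0))
    {x : V} (hx : x ∈ Λ) :
    ∃ y : ι → V, (∀ k, y k ∈ Λ) ∧ Tendsto (fun k => y k - τ k) l (𝓝 x) := by
  choose y hyΛ hy using fun k => mem_thickening_iff.1 (hτ k (Set.vadd_mem_vadd_set hx))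
  refine ⟨y, hyΛ, tendsto_iff_dist_tendsto_zero.2
    (squeeze_zero (fun _ => dist_nonneg) (fun k => ?_) hε)⟩
  rw [dist_comm, dist_eq_norm, sub_sub_eq_add_sub, add_comm, ← dist_eq_norm]
  exact (hy k).le

lemma vadd_subset_of_tendsto {ι : Type*} {l : Filter ι} [l.NeBot] {Λ : Set V} (hΛ : IsClosed Λ)
    {H : AddSubgroup V} {a b : V} (ha : a +ᵥ (H : Set V) ⊆ Λ) {τ g : ι → V} {ε : ι → ℝ}
    (hτ : ∀ k, τ k +ᵥ Λ ⊆ thickening (ε k) Λ) (hε : Tendsto ε l (𝓝 0)) (hg : ∀ k, g k ∈ H)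
    (hb : Tendsto (fun k => a + τ k - g k) l (𝓝 b)) : b +ᵥ (H : Set V) ⊆ Λ := by
  intro x hx
  rw [mem_vadd_coe_addSubgroup] at hx
  have hne : Λ.Nonempty := ⟨a, ha (mem_vadd_coe_addSubgroup.2 (by simp))⟩
  have hlt (k : ι) : infDist (x - b + (a + τ k - g k)) Λ < ε k := by
    refine (infDist_lt_iff hne).2 (mem_thickening_iff.1 (hτ k ⟨a + (x - b - g k), ha ?_, ?_⟩))
    · rw [mem_vadd_coe_addSubgroup, add_sub_cancel_left]
      exact sub_mem hx (hg k)
    · simp only [vadd_eq_add]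
      abel
  have hlim : Tendsto (fun k => infDist (x - b + (a + τ k - g k)) Λ) l (𝓝 (infDist x Λ)) := by
    conv => enter [3, 1]; rw [← sub_add_cancel x b]
    exact (continuous_infDist_pt Λ).continuousAt.tendsto.comp (hb.const_add _)
  exact (hΛ.mem_iff_infDist_zero hne).2
    (le_antisymm (le_of_tendsto_of_tendsto' hlim hε fun k => (hlt k).le) infDist_nonneg)

lemma exists_mem_vadd_of_tendsto {ι : Type*} {l : Ultrafilter ι} {G : Set (AddSubgroup V × V)}
    (hG : G.Finite) {b : AddSubgroup V × V → V} {g : AddSubgroup V × V → ι → V} {τ y : ι → V}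
    {x : V} (hclosed : ∀ p ∈ G, IsClosed (b p +ᵥ (p.1 : Set V))) (hg : ∀ p ∈ G, ∀ k, g p k ∈ p.1)
    (hb : ∀ p ∈ G, Tendsto (fun k => p.2 - τ k - g p k) l (𝓝 (b p)))
    (hy : Tendsto (fun k => y k - τ k) l (𝓝 x)) (hyG : ∀ᶠ k in l, y k ∈ cosetUnion G) :
    ∃ p ∈ G, x ∈ b p +ᵥ (p.1 : Set V) := by
  simp only [mem_cosetUnion] at hyG
  obtain ⟨p, hp, hyp⟩ := (Ultrafilter.eventually_exists_mem_iff hG).1 hyG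
  refine ⟨p, hp, (hclosed p hp).mem_of_tendsto (b := (l : Filter ι))
    (f := fun k => b p + (y k - p.2 + g p k)) ?_ ?_⟩
  · have hlim := (hy.sub (hb p hp)).const_add (b p)
    rw [add_sub_cancel] at hlim
    refine hlim.congr fun k => ?_
    abel
  · filter_upwards [hyp] with k hk
    rw [mem_vadd_coe_addSubgroup, add_sub_cancel_left]
    exact add_mem hk (hg p hp k)

variable [NormedSpace ℝ V]

lemma exists_norm_sub_le_of_span_eq_top [FiniteDimensional ℝ V] {H : AddSubgroup V}
    (hH : Submodule.span ℝ (H : Set V) = ⊤) : ∃ D : ℝ, ∀ x : V, ∃ g ∈ H, ‖x - g‖ ≤ D := by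
  have hrange : Set.range (Module.Basis.ofSpan hH.ge) ⊆ H := Module.Basis.ofSpan_subset hH.ge
  generalize Module.Basis.ofSpan hH.ge = b at hrange
  have := Module.Finite.finite_basis b
  have := Fintype.ofFinite
    ((linearIndepOn_empty ℝ (id : V → V)).extend (Set.empty_subset (H : Set V)))
  have hspan : Submodule.span ℤ (Set.range b) ≤ AddSubgroup.toIntSubmodule H :=
    Submodule.span_le.2 hrange
  exact ⟨∑ i, ‖b i‖, fun x => ⟨ZSpan.floor b x, hspan (ZSpan.floor b x).2, ZSpan.norm_fract_le b x⟩⟩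

lemma exists_forall_notMem_of_ne_top {P : Set (Submodule ℝ V)} (hP : P.Finite)
    (htop : ∀ W ∈ P, W ≠ ⊤) : ∃ v : V, ∀ W ∈ P, v ∉ W := by
  have hne : ⋃ W ∈ hP.toFinset, (W : Set V) ≠ Set.univ :=
    Subspace.biUnion_ne_univ_of_top_notMem fun h => htop ⊤ (hP.mem_toFinset.1 h) rfl
  obtain ⟨v, hv⟩ := (Set.ne_univ_iff_exists_notMem _).1 hne
  exact ⟨v, fun W hW hvW => hv (Set.mem_biUnion (hP.mem_toFinset.2 hW) hvW)⟩

lemma tendsto_infDist_smul_atTop {W : Submodule ℝ V} (hW : IsClosed (W : Set V)) {v : V}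
    (hv : v ∉ W) : Tendsto (fun t : ℝ => infDist (t • v) (W : Set V)) atTop atTop := by
  have hpos : 0 < infDist v (W : Set V) := (hW.notMem_iff_infDist_pos ⟨0, W.zero_mem⟩).1 hv
  refine tendsto_atTop_mono' _ ?_ (tendsto_id.atTop_mul_const hpos)
  filter_upwards [eventually_gt_atTop 0] with t ht
  refine (le_infDist ⟨0, W.zero_mem⟩).2 fun w hw => ?_
  calc t * infDist v (W : Set V) ≤ t * dist v (t⁻¹ • w) := by
        gcongr
        exact infDist_le_dist_of_mem (W.smul_mem _ hw)
    _ = dist (t • v) (t • t⁻¹ • w) := by rw [dist_smul₀, Real.norm_of_nonneg ht.le]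
    _ = dist (t • v) w := by rw [smul_inv_smul₀ ht.ne']

lemma exists_forall_mem_cosetUnion_lt_dist [FiniteDimensional ℝ V]
    {P : Set (AddSubgroup V × V)} (hP : P.Finite)
    (hspan : ∀ p ∈ P, Submodule.span ℝ (p.1 : Set V) ≠ ⊤) (r : ℝ) :
    ∃ z : V, ∀ x ∈ cosetUnion P, r < dist x z := by
  obtain ⟨v, hv⟩ := exists_forall_notMem_of_ne_top
    (hP.image fun p => Submodule.span ℝ (p.1 : Set V)) (Set.forall_mem_image.2 hspan)
  have hfar : ∀ᶠ t : ℝ in atTop, ∀ p ∈ P,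
      r + ‖p.2‖ < infDist (t • v) (Submodule.span ℝ (p.1 : Set V) : Set V) :=
    (eventually_all_finite hP).2 fun p hp =>
      (tendsto_infDist_smul_atTop (Submodule.closed_of_finiteDimensional _)
        (hv _ ⟨p, hp, rfl⟩)).eventually_gt_atTop _
  obtain ⟨t, ht⟩ := hfar.exists
  refine ⟨t • v, fun x hx => ?_⟩
  obtain ⟨p, hp, hxp⟩ := mem_cosetUnion.1 hx
  have hle := (ht p hp).trans_le (infDist_le_dist_of_mem (Submodule.subset_span hxp))
  have htri := dist_triangle (t • v) x (x - p.2)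
  rw [dist_self_sub_right, dist_comm _ x] at htri
  linarith

lemma IsAlmostPeriodicSet.exists_seq_inter_closedBall_subset [FiniteDimensional ℝ V]
    {P : Set (AddSubgroup V × V)} (hP : P.Finite) (h : IsAlmostPeriodicSet (cosetUnion P))
    {ε : ℕ → ℝ} (hε : ∀ k, 0 < ε k) :
    ∃ τ : ℕ → V, ∀ k, τ k +ᵥ cosetUnion P ⊆ thickening (ε k) (cosetUnion P) ∧
      -τ k +ᵥ cosetUnion P ⊆ thickening (ε k) (cosetUnion P) ∧
      cosetUnion P ∩ closedBall (τ k) k ⊆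
        cosetUnion {p ∈ P | Submodule.span ℝ (p.1 : Set V) = ⊤} := by
  choose ρ hρ using fun k => h (ε k) (hε k)
  choose z hz using fun k : ℕ => exists_forall_mem_cosetUnion_lt_dist
    (hP.subset (Set.sep_subset P fun p => Submodule.span ℝ (p.1 : Set V) ≠ ⊤))
    (fun p hp => hp.2) (k + ρ k)
  choose τ hτdist hτ hτneg using fun k => hρ k (z k)
  refine ⟨τ, fun k => ⟨hτ k, hτneg k, fun x hx => ?_⟩⟩
  obtain ⟨p, hp, hxp⟩ := mem_cosetUnion.1 hx.1
  by_cases hspan : Submodule.span ℝ (p.1 : Set V) = ⊤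
  · exact mem_cosetUnion.2 ⟨p, ⟨hp, hspan⟩, hxp⟩
  · have hfar := hz k x (mem_cosetUnion.2 ⟨p, ⟨hp, hspan⟩, hxp⟩)
    have hnear := mem_closedBall.1 hx.2
    linarith [dist_triangle_right x (z k) (τ k), hτdist k]

lemma exists_tendsto_sub_hyperfilter_of_span_eq_top [FiniteDimensional ℝ V] {H : AddSubgroup V}
    (hH : Submodule.span ℝ (H : Set V) = ⊤) (s : ℕ → V) :
    ∃ (b : V) (g : ℕ → V), (∀ k, g k ∈ H) ∧
      Tendsto (fun k => s k - g k) (hyperfilter ℕ : Filter ℕ) (𝓝 b) := by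
  obtain ⟨D, hD⟩ := exists_norm_sub_le_of_span_eq_top hH
  choose g hgH hg using fun k => hD (s k)
  have := FiniteDimensional.proper_real V
  obtain ⟨b, -, hb⟩ := (isCompact_closedBall (0 : V) D).ultrafilter_le_nhds'
    ((hyperfilter ℕ).map fun k => s k - g k)
    (Eventually.of_forall (f := (hyperfilter ℕ : Filter ℕ)) fun k => by simpa using hg k)
  exact ⟨b, g, hgH, hb⟩

/-- Translate the union by almost periods that move the cosets of smaller rank to infinity: what is
left in the limit is a union of translates of the cosets of full rank. -/
lemma exists_finite_span_eq_top_and_cosetUnion_eq [FiniteDimensional ℝ V]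
    {P : Set (AddSubgroup V × V)} (hP : P.Finite) {β : ℝ} (hβ : 0 < β)
    (hsep : (cosetUnion P).Pairwise fun x y => β ≤ dist x y)
    (hperiodic : IsAlmostPeriodicSet (cosetUnion P)) :
    ∃ Q : Set (AddSubgroup V × V), Q.Finite ∧ (∀ p ∈ Q, Submodule.span ℝ (p.1 : Set V) = ⊤) ∧
      cosetUnion Q = cosetUnion P := by
  set G := {p ∈ P | Submodule.span ℝ (p.1 : Set V) = ⊤}
  have hGfin : G.Finite := hP.subset (Set.sep_subset P _)
  obtain ⟨τ, hτ⟩ := hperiodic.exists_seq_inter_closedBall_subset hP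
    fun k => Nat.one_div_pos_of_nat (α := ℝ) (n := k)
  choose! b g hg hb using fun (p : AddSubgroup V × V) (hp : p ∈ G) =>
    exists_tendsto_sub_hyperfilter_of_span_eq_top hp.2 fun k => p.2 - τ k
  have hε : Tendsto (fun k : ℕ => 1 / ((k : ℝ) + 1)) (hyperfilter ℕ : Filter ℕ) (𝓝 0) :=
    tendsto_one_div_add_atTop_nhds_zero_nat.mono_left Nat.hyperfilter_le_atTop
  have hsub (p) (hp : p ∈ G) : b p +ᵥ (p.1 : Set V) ⊆ cosetUnion P :=
    vadd_subset_of_tendsto (isClosed_of_pairwise_le_dist hβ hsep)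
      (Set.subset_biUnion_of_mem (u := fun p => p.2 +ᵥ (p.1 : Set V)) hp.1)
      (fun k => (hτ k).2.1) hε (hg p hp) (by simpa only [sub_eq_add_neg] using hb p hp)
  refine ⟨(fun p => (p.1, b p)) '' G, hGfin.image _, ?_, ?_⟩
  · rintro _ ⟨p, hp, rfl⟩
    exact hp.2
  rw [cosetUnion, Set.biUnion_image]
  refine (Set.iUnion₂_subset hsub).antisymm fun x hx => ?_
  obtain ⟨y, hyP, hy⟩ := exists_tendsto_sub_of_vadd_subset_thickening (fun k => (hτ k).1)
    (tendsto_one_div_add_atTop_nhds_zero_nat (𝕜 := ℝ)) hx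
  have hlarge : ∀ᶠ k : ℕ in atTop, y k ∈ cosetUnion G := by
    filter_upwards [hy.norm.eventually_le_const (lt_add_one ‖x‖),
      tendsto_natCast_atTop_atTop.eventually_ge_atTop (‖x‖ + 1)] with k hk hk'
    exact (hτ k).2.2 ⟨hyP k, mem_closedBall_iff_norm.2 (hk.trans hk')⟩
  obtain ⟨p, hp, hxp⟩ := exists_mem_vadd_of_tendsto hGfin
    (fun p hp => isClosed_of_pairwise_le_dist hβ (hsep.mono (hsub p hp))) hg hb
    (hy.mono_left Nat.hyperfilter_le_atTop) (hlarge.filter_mono Nat.hyperfilter_le_atTop)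
  exact Set.mem_biUnion hp hxp

end FullRankCosets

section CommonRefinement

variable {V : Type*} [AddCommGroup V]

lemma finite_image_vadd_of_relIndex_ne_zero {M H : AddSubgroup V}
    (h : M.relIndex H ≠ 0) (a : V) :
    ((fun x => x +ᵥ (M : Set V)) '' (a +ᵥ (H : Set V))).Finite := by
  have : Finite (H ⧸ M.addSubgroupOf H) := Nat.finite_of_card_ne_zero h
  refine (Set.finite_range fun z : H ⧸ M.addSubgroupOf H =>
    (a + (z.out : H)) +ᵥ (M : Set V)).subset ?_
  rintro _ ⟨_, ⟨v, hv, rfl⟩, rfl⟩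
  refine ⟨((⟨v, hv⟩ : H) : H ⧸ M.addSubgroupOf H), (leftAddCoset_eq_iff M).2 ?_⟩
  have hout := QuotientAddGroup.eq.1 (Quotient.out_eq' ((⟨v, hv⟩ : H) : H ⧸ M.addSubgroupOf H))
  rw [AddSubgroup.mem_addSubgroupOf] at hout
  simpa [neg_add_rev, add_assoc] using hout

/-- The intersection of the subgroups occurring in `Q` which are commensurable with `H`. Two
commensurable subgroups have the same refinement, so that its cosets cut the cosets of both
into disjoint pieces. -/
def commonRefinement (Q : Set (AddSubgroup V × V)) (H : AddSubgroup V) : AddSubgroup V :=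
  ⨅ q : {q // q ∈ Q ∧ AddSubgroup.Commensurable H q.1}, q.1.1

lemma commonRefinement_congr (Q : Set (AddSubgroup V × V))
    {H K : AddSubgroup V} (h : AddSubgroup.Commensurable H K) :
    commonRefinement Q H = commonRefinement Q K :=
  le_antisymm (le_iInf fun q => iInf_le_of_le ⟨q.1, q.2.1, h.trans q.2.2⟩ le_rfl)
    (le_iInf fun q => iInf_le_of_le ⟨q.1, q.2.1, h.symm.trans q.2.2⟩ le_rfl)

lemma commonRefinement_le {Q : Set (AddSubgroup V × V)} {p : AddSubgroup V × V}
    (hp : p ∈ Q) : commonRefinement Q p.1 ≤ p.1 :=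
  iInf_le_of_le ⟨p, hp, AddSubgroup.Commensurable.refl _⟩ le_rfl

lemma relIndex_commonRefinement_ne_zero {Q : Set (AddSubgroup V × V)} (hQ : Q.Finite)
    (H : AddSubgroup V) : (commonRefinement Q H).relIndex H ≠ 0 := by
  have : Finite {q // q ∈ Q ∧ AddSubgroup.Commensurable H q.1} :=
    (hQ.subset (Set.sep_subset Q fun q => AddSubgroup.Commensurable H q.1)).to_subtype
  exact AddSubgroup.relIndex_iInf_ne_zero fun q => q.2.2.2

end CommonRefinement

section DisjointCosets

variable {V : Type*} [NormedAddCommGroup V] [NormedSpace ℝ V]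

lemma span_eq_top_of_relIndex_ne_zero {M H : AddSubgroup V} (h : M.relIndex H ≠ 0)
    (hH : Submodule.span ℝ (H : Set V) = ⊤) : Submodule.span ℝ (M : Set V) = ⊤ := by
  rw [eq_top_iff, ← hH, Submodule.span_le]
  intro a ha
  obtain ⟨n, hn, -, hna⟩ := AddSubgroup.exists_nsmul_mem_of_relIndex_ne_zero h ha
  have hn' : (n : ℝ) ≠ 0 := by exact_mod_cast hn.ne'
  rw [SetLike.mem_coe, ← Submodule.smul_mem_iff _ hn', Nat.cast_smul_eq_nsmul]
  exact Submodule.subset_span hna.1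

/-- Modulo bounded vectors every element of `H` lies in `K`; by compactness two elements of `H` in
distinct cosets of `K` would come closer than `β` to one another modulo `K`. -/
lemma relIndex_ne_zero_of_le_dist [FiniteDimensional ℝ V] {H K : AddSubgroup V} {β : ℝ}
    (hβ : 0 < β) (hsep : ∀ h ∈ H, ∀ g ∈ K, h ≠ g → β ≤ dist h g)
    (hK : Submodule.span ℝ (K : Set V) = ⊤) : K.relIndex H ≠ 0 := by
  obtain ⟨D, hD⟩ := exists_norm_sub_le_of_span_eq_top hK
  choose g hgK hg using hD
  have := FiniteDimensional.proper_real V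
  obtain ⟨A, hA, hcover⟩ := Metric.totallyBounded_iff.1
    (isCompact_closedBall (0 : V) D).totallyBounded (β / 2) (half_pos hβ)
  have hnear (x : V) : ∃ a ∈ A, dist (x - g x) a < β / 2 := by
    simpa using hcover (mem_closedBall_zero_iff.2 (hg x))
  choose a haA ha using hnear
  have hsame {h h' : H} (hhh' : a h = a h') : (h' - h : V) ∈ K := by
    have hclose : dist (h' - h : V) (g h' - g h) < β := by
      rw [dist_eq_norm, sub_sub_sub_comm, ← dist_eq_norm]
      linarith [dist_triangle_right ((h' : V) - g h') (h - g h) (a h'), ha h', hhh' ▸ ha h]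
    by_contra hnot
    have hmem := sub_mem (hgK h') (hgK h)
    exact hclose.not_ge
      (hsep _ (sub_mem h'.2 h.2) _ hmem fun heq => hnot (heq ▸ hmem))
  have := hA.to_subtype
  have hfinite : Finite (H ⧸ K.addSubgroupOf H) := by
    refine Finite.of_injective (fun z : H ⧸ K.addSubgroupOf H => (⟨a z.out, haA _⟩ : A))
      fun z w hzw => ?_
    rw [← Quotient.out_eq' z, ← Quotient.out_eq' w]
    refine QuotientAddGroup.eq.2 (AddSubgroup.mem_addSubgroupOf.2 ?_)
    simpa [neg_add_eq_sub] using hsame (Subtype.ext_iff.1 hzw)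
  exact Nat.card_pos.ne'

lemma vadd_commonRefinement_eq [FiniteDimensional ℝ V] {Q : Set (AddSubgroup V × V)} {β : ℝ}
    (hβ : 0 < β) (hsep : (cosetUnion Q).Pairwise fun x y => β ≤ dist x y)
    (hspan : ∀ p ∈ Q, Submodule.span ℝ (p.1 : Set V) = ⊤)
    {p q : AddSubgroup V × V} (hp : p ∈ Q) (hq : q ∈ Q) {x y z : V} (hx : x - p.2 ∈ p.1)
    (hy : y - q.2 ∈ q.1) (hzx : z ∈ x +ᵥ (commonRefinement Q p.1 : Set V))
    (hzy : z ∈ y +ᵥ (commonRefinement Q q.1 : Set V)) :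
    x +ᵥ (commonRefinement Q p.1 : Set V) = y +ᵥ (commonRefinement Q q.1 : Set V) := by
  rw [mem_vadd_coe_addSubgroup] at hzx hzy
  have hsub {r : AddSubgroup V × V} (hr : r ∈ Q) {w : V} (hw : w - r.2 ∈ r.1)
      (hzw : z - w ∈ commonRefinement Q r.1) {h : V} (hh : h ∈ r.1) : z + h ∈ cosetUnion Q := by
    refine mem_cosetUnion.2 ⟨r, hr, ?_⟩
    rw [show z + h - r.2 = z - w + (w - r.2) + h by abel]
    exact add_mem (add_mem (commonRefinement_le hr hzw) hw) hh
  have hdist : ∀ h ∈ p.1, ∀ g ∈ q.1, h ≠ g → β ≤ dist h g := fun h hh g hg hne => by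
    simpa using hsep (hsub hp hx hzx hh) (hsub hq hy hzy hg) (by simpa using hne)
  have hcomm : AddSubgroup.Commensurable p.1 q.1 :=
    ⟨relIndex_ne_zero_of_le_dist hβ (fun g hg h hh hne =>
      (hdist h hh g hg hne.symm).trans_eq (dist_comm _ _)) (hspan p hp),
      relIndex_ne_zero_of_le_dist hβ hdist (hspan q hq)⟩
  rw [← commonRefinement_congr Q hcomm] at hzy ⊢
  rw [leftAddCoset_eq_iff, neg_add_eq_sub, ← sub_sub_sub_cancel_left _ _ z]
  exact sub_mem hzx hzy

theorem exists_finite_pairwiseDisjoint_sUnion_eq_cosetUnion [FiniteDimensional ℝ V]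
    {Q : Set (AddSubgroup V × V)} (hQ : Q.Finite) {β : ℝ} (hβ : 0 < β)
    (hsep : (cosetUnion Q).Pairwise fun x y => β ≤ dist x y)
    (hspan : ∀ p ∈ Q, Submodule.span ℝ (p.1 : Set V) = ⊤) :
    ∃ F : Set (Set V), F.Finite ∧ F.PairwiseDisjoint id ∧ ⋃₀ F = cosetUnion Q ∧
      ∀ S ∈ F, ∃ (a : V) (M : AddSubgroup V), Submodule.span ℝ (M : Set V) = ⊤ ∧
        S = a +ᵥ (M : Set V) := by
  refine ⟨⋃ p ∈ Q, (fun x => x +ᵥ (commonRefinement Q p.1 : Set V)) '' (p.2 +ᵥ (p.1 : Set V)),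
    hQ.biUnion fun p _ => finite_image_vadd_of_relIndex_ne_zero
      (relIndex_commonRefinement_ne_zero hQ p.1) p.2, ?_, ?_, ?_⟩
  · intro S hS S' hS' hne
    simp only [Set.mem_iUnion, Set.mem_image, mem_vadd_coe_addSubgroup] at hS hS'
    obtain ⟨p, hp, x, hx, rfl⟩ := hS
    obtain ⟨q, hq, y, hy, rfl⟩ := hS'
    exact Set.disjoint_left.2 fun z hzx hzy =>
      hne (vadd_commonRefinement_eq hβ hsep hspan hp hq hx hy hzx hzy)
  · ext x
    simp only [Set.mem_sUnion, Set.mem_iUnion, Set.mem_image, mem_vadd_coe_addSubgroup,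
      mem_cosetUnion]
    constructor
    · rintro ⟨_, ⟨p, hp, y, hy, rfl⟩, hxy⟩
      refine ⟨p, hp, ?_⟩
      rw [← sub_add_sub_cancel x y]
      exact add_mem (commonRefinement_le hp (mem_vadd_coe_addSubgroup.1 hxy)) hy
    · rintro ⟨p, hp, hx⟩
      exact ⟨_, ⟨p, hp, x, hx, rfl⟩, mem_vadd_coe_addSubgroup.2 (by simp)⟩
  · intro S hS
    simp only [Set.mem_iUnion, Set.mem_image] at hS
    obtain ⟨p, hp, x, -, rfl⟩ := hS
    exact ⟨x, _, span_eq_top_of_relIndex_ne_zero (relIndex_commonRefinement_ne_zero hQ p.1)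
      (hspan p hp), rfl⟩

end DisjointCosets

/-! ### Bohr almost periodicity of the masses -/

section AlmostPeriod

variable {V ι : Type*} [NormedAddCommGroup V] {χ : ι → AddChar V Circle} {m : V → ℂ} {B β : ℝ}

lemma exists_mem_ball_subset_iUnion_ball {x : ℕ → V} {R : ℕ → ℝ} (hR : Tendsto R atTop atTop)
    {U : Set V} (hU : U ∈ bohrNhdsZero χ) (ρ : ℝ) :
    ∃ s ∈ U, ball s ρ ⊆ ⋃ n, ball (x n) (R n) := by
  obtain ⟨X, hX, hXU⟩ := exists_finite_forall_sub_mem_of_mem_bohrNhdsZero hU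
  obtain ⟨C, hC⟩ := hX.isBounded.exists_norm_le
  obtain ⟨n, hn⟩ := (hR.eventually_ge_atTop (ρ + C)).exists
  obtain ⟨y, hy, hs⟩ := hXU (x n)
  refine ⟨x n - y, hs, (ball_subset_ball' ?_).trans
    (Set.subset_iUnion (fun n => ball (x n) (R n)) n)⟩
  rw [dist_self_sub_left]
  linarith [hC y hy]

/-- The translation by `s` moves every atom `l` of `m` to within `δ` of an atom whose mass is within
`δ` of `m l`. -/
def IsAlmostPeriod (m : V → ℂ) (δ : ℝ) (s : V) : Prop :=
  ∀ l ∈ Function.support m, ∃ l' ∈ Function.support m, dist l' (l + s) < δ ∧ dist (m l') (m l) < δ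

lemma isAlmostPeriodicSet_support
    (hm : ∀ δ, 0 < δ → ∀ᶠ s in bohrNhdsZero χ, IsAlmostPeriod m δ s) :
    IsAlmostPeriodicSet (Function.support m) := by
  have hthick {δ : ℝ} {s : V} (hs : IsAlmostPeriod m δ s) :
      s +ᵥ Function.support m ⊆ thickening δ (Function.support m) := by
    rintro _ ⟨l, hl, rfl⟩
    obtain ⟨l', hl', hdist, -⟩ := hs l hl
    refine mem_thickening_iff.2 ⟨l', hl', ?_⟩
    change dist (s + l) l' < δ
    rwa [add_comm, dist_comm]
  intro δ hδ
  obtain ⟨X, hX, hXm⟩ := exists_finite_forall_sub_mem_of_mem_bohrNhdsZero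
    ((hm δ hδ).and (tendsto_neg_bohrNhdsZero.eventually (hm δ hδ)))
  obtain ⟨ρ, hρ⟩ := hX.isBounded.exists_norm_le
  refine ⟨ρ, fun x => ?_⟩
  obtain ⟨y, hy, hs, hs'⟩ := hXm x
  exact ⟨x - y, (dist_self_sub_right x y).trans_le (hρ y hy), hthick hs, hthick hs'⟩

lemma exists_forall_dist_lt_imp_eq {S : Set V} (hβ : 0 < β)
    (hsep : S.Pairwise fun x y => β ≤ dist x y) (t : V) :
    ∃ δ > 0, ∀ l ∈ S, dist l t < δ → l = t := by
  have hclosed : IsClosed (S \ {t}) :=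
    isClosed_of_pairwise_le_dist hβ (hsep.mono Set.sdiff_subset)
  obtain ⟨δ, hδ, hball⟩ :=
    Metric.mem_nhds_iff.1 (hclosed.isOpen_compl.mem_nhds fun h : t ∈ S \ {t} => h.2 rfl)
  exact ⟨δ, hδ, fun l hl hlt => by_contra fun hne => hball hlt ⟨hl, hne⟩⟩

lemma limitDifference_eq_zero_or_eq (hB : ∀ t, ‖m t‖ ≤ B) (hβ : 0 < β)
    (hsep : (Function.support m).Pairwise fun x y => β ≤ dist x y)
    (hm : ∀ δ, 0 < δ → ∀ᶠ s in bohrNhdsZero χ, IsAlmostPeriod m δ s) (s : ℕ → V) (t : V) :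
    limitDifference m s t = 0 ∨ limitDifference m s t = m t := by
  refine or_iff_not_imp_left.2 fun ha => eq_of_forall_dist_le fun η hη => ?_
  set a := limitDifference m s t
  obtain ⟨r, hr, hiso⟩ := exists_forall_dist_lt_imp_eq hβ hsep t
  set δ := min r (min ‖a‖ (η / 2))
  have hδ : 0 < δ := lt_min hr (lt_min (norm_pos_iff.2 ha) (half_pos hη))
  have hnear : ∀ᶠ k in (hyperfilter ℕ : Filter ℕ), ∀ᶠ j in (hyperfilter ℕ : Filter ℕ),
      m (-s j + (s k + t)) ∈ ball a δ :=
    ((tendsto_limitTranslate (norm_limitTranslate_le hB _) s t).eventually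
      (ball_mem_nhds a hδ)).mono fun k hk =>
        (tendsto_limitTranslate hB (fun k => -s k) (s k + t)).eventually
          (isOpen_ball.mem_nhds hk)
  obtain ⟨k, hk, hk'⟩ := (hnear.and (eventually_eventually_sub_mem_of_mem_bohrNhdsZero
    (tendsto_neg_bohrNhdsZero (hm δ hδ)) s)).exists
  obtain ⟨j, hj, hperiod⟩ := (hk.and hk').exists
  have hne : m (-s j + (s k + t)) ≠ 0 := by
    intro h
    rw [h, mem_ball, dist_zero_left] at hj
    exact (min_le_right _ _ |>.trans (min_le_left _ _)).not_gt hj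
  obtain ⟨l, hl, hlt, hml⟩ := hperiod _ hne
  rw [show -s j + (s k + t) + -(s k - s j) = t by abel] at hlt
  obtain rfl := hiso l hl (hlt.trans_le (min_le_left _ _))
  have hδη : δ ≤ η / 2 := (min_le_right _ _).trans (min_le_right _ _)
  linarith [dist_triangle_left a (m l) (m (-s j + (s k + l))), mem_ball.1 hj, dist_comm (m l)
    (m (-s j + (s k + l)))]

end AlmostPeriod

section AlmostPeriodicMasses

variable {V ι : Type*} [NormedAddCommGroup V] [NormedSpace ℝ V] [FiniteDimensional ℝ V]
  {χ : ι → AddChar V Circle} {m : V → ℂ} {E : Set V} {B β c η δ ε ρ : ℝ} {t u v : V}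

lemma exists_smoothing_eq_of_smoothing_half_ne_zero
    (hsep : (E ∩ Function.support m).Pairwise fun x y => β ≤ dist x y) (hε : 0 < ε)
    (hεβ : ε ≤ β / 2) (hball : ball t ε ⊆ E) (h : smoothing m (ε / 2) t ≠ 0) :
    ∃ l ∈ E ∩ Function.support m, dist l t < ε ∧ smoothing m ε t = m l := by
  obtain ⟨l, hl, hlt⟩ := exists_dist_lt_of_smoothing_ne_zero (half_pos hε) h
  have hltε : dist l t < ε := by linarith
  refine ⟨l, ⟨hball hltε, hl⟩, hltε, smoothing_eq_of_forall_dist_lt hε hlt.le fun x hx hxt => ?_⟩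
  by_contra hne
  linarith [hsep ⟨hball hxt, hx⟩ ⟨hball hltε, hl⟩ hne, dist_triangle_right x l t]

lemma smoothing_eq_self (hsep : (Function.support m).Pairwise fun x y => β ≤ dist x y)
    (hε : 0 < ε) (hεβ : ε ≤ β) (ht : t ∈ Function.support m) : smoothing m ε t = m t :=
  smoothing_eq_of_forall_dist_lt hε (by rw [dist_self]; positivity) fun _ hx hxt =>
    by_contra fun hne => (hxt.trans_le hεβ).not_ge (hsep hx ht hne)

lemma eventually_exists_dist_lt_of_ball_subset
    (hFS : ∀ ε ∈ Set.Ioc (0 : ℝ) 1, IsFourierSeries χ (smoothing m ε) B)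
    (hsep : (E ∩ Function.support m).Pairwise fun x y => β ≤ dist x y) (hβ : 0 < β)
    (hlim : Tendsto (fun ε => smoothing m ε u) (𝓝[>] 0) (𝓝 (m u)))
    (hu : u ∈ Function.support m) (hη : 0 < η) :
    ∀ᶠ s in bohrNhdsZero χ, ball (u + s) 1 ⊆ E →
      ∃ p ∈ E ∩ Function.support m, dist p (u + s) < η ∧ dist (m p) (m u) < η := by
  set δ := min (η / 2) (‖m u‖ / 2)
  have hδ : 0 < δ := lt_min (half_pos hη) (half_pos (norm_pos_iff.2 hu))
  have hhalf : Tendsto (fun ε : ℝ => ε / 2) (𝓝[>] 0) (𝓝[>] 0) := by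
    refine tendsto_nhdsWithin_iff.2
      ⟨?_, eventually_mem_nhdsWithin.mono fun ε hε => half_pos (Set.mem_Ioi.1 hε)⟩
    exact ((continuous_id.div_const 2).tendsto' 0 0 (zero_div 2)).mono_left nhdsWithin_le_nhds
  obtain ⟨ε, ⟨hε, hε'⟩, hεu, hεu'⟩ := ((eventually_mem_set.2 (Ioc_mem_nhdsGT
    (show 0 < min 1 (min (β / 2) η) by positivity))).and ((hlim.eventually (ball_mem_nhds _ hδ)).and
    ((hlim.comp hhalf).eventually (ball_mem_nhds _ hδ)))).exists
  obtain ⟨hε1, hεβ, hεη⟩ : ε ≤ 1 ∧ ε ≤ β / 2 ∧ ε ≤ η := by simpa only [le_min_iff] using hε'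
  filter_upwards [(hFS ε ⟨hε, hε1⟩).eventually_forall_dist_lt hδ,
    (hFS (ε / 2) ⟨half_pos hε, by linarith⟩).eventually_forall_dist_lt hδ] with s hs hs' hball
  have hdist : dist (smoothing m ε (u + s)) (m u) < 2 * δ :=
    (dist_triangle _ _ _).trans_lt ((add_lt_add (hs u) hεu).trans_eq (two_mul δ).symm)
  have hdist' : dist (smoothing m (ε / 2) (u + s)) (m u) < 2 * δ :=
    (dist_triangle _ _ _).trans_lt ((add_lt_add (hs' u) hεu').trans_eq (two_mul δ).symm)
  have hne : smoothing m (ε / 2) (u + s) ≠ 0 := by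
    intro h
    rw [h, dist_zero_left] at hdist'
    linarith [min_le_right (η / 2) (‖m u‖ / 2)]
  obtain ⟨p, hp, hpu, hpm⟩ := exists_smoothing_eq_of_smoothing_half_ne_zero hsep hε hεβ
    ((ball_subset_ball hε1).trans hball) hne
  refine ⟨p, hp, hpu.trans_le hεη, ?_⟩
  rw [← hpm]
  linarith [min_le_left (η / 2) (‖m u‖ / 2)]

lemma exists_dist_add_lt_of_mem_support
    (hFS : ∀ ε ∈ Set.Ioc (0 : ℝ) 1, IsFourierSeries χ (smoothing m ε) B)
    (hlim : ∀ t, Tendsto (fun ε => smoothing m ε t) (𝓝[>] 0) (𝓝 (m t)))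
    (hE : ∀ U ∈ bohrNhdsZero χ, ∀ ρ, ∃ s ∈ U, ball s ρ ⊆ E)
    (hsep : (E ∩ Function.support m).Pairwise fun x y => β ≤ dist x y) (hβ : 0 < β)
    (hu : u ∈ Function.support m) (hv : v ∈ Function.support m) (hη : 0 < η) :
    ∃ s, ∃ p ∈ E ∩ Function.support m, ∃ q ∈ E ∩ Function.support m,
      dist p (u + s) < η ∧ dist q (v + s) < η ∧ dist (m p) (m u) < η := by
  obtain ⟨s, ⟨hus, hvs⟩, hs⟩ := hE _
    ((eventually_exists_dist_lt_of_ball_subset hFS hsep hβ (hlim u) hu hη).and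
      (eventually_exists_dist_lt_of_ball_subset hFS hsep hβ (hlim v) hv hη))
    (1 + max ‖u‖ ‖v‖)
  have hball {w : V} (hw : ‖w‖ ≤ max ‖u‖ ‖v‖) : ball (w + s) 1 ⊆ E :=
    (ball_subset_ball' (by rw [dist_add_self_left]; gcongr)).trans hs
  obtain ⟨p, hp, hpu, hpm⟩ := hus (hball (le_max_left _ _))
  obtain ⟨q, hq, hqv, -⟩ := hvs (hball (le_max_right _ _))
  exact ⟨s, p, hp, q, hq, hpu, hqv, hpm⟩

lemma le_norm_of_mem_support
    (hFS : ∀ ε ∈ Set.Ioc (0 : ℝ) 1, IsFourierSeries χ (smoothing m ε) B)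
    (hlim : ∀ t, Tendsto (fun ε => smoothing m ε t) (𝓝[>] 0) (𝓝 (m t)))
    (hE : ∀ U ∈ bohrNhdsZero χ, ∀ ρ, ∃ s ∈ U, ball s ρ ⊆ E)
    (hsep : (E ∩ Function.support m).Pairwise fun x y => β ≤ dist x y) (hβ : 0 < β)
    (hmass : ∀ l ∈ E ∩ Function.support m, c ≤ ‖m l‖) (hu : u ∈ Function.support m) :
    c ≤ ‖m u‖ := by
  refine le_of_forall_pos_le_add fun η hη => ?_
  obtain ⟨s, p, hp, -, -, -, -, hpm⟩ :=
    exists_dist_add_lt_of_mem_support hFS hlim hE hsep hβ hu hu hη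
  rw [dist_eq_norm] at hpm
  linarith [hmass p hp, norm_sub_norm_le (m p) (m u)]

lemma pairwise_support_le_dist
    (hFS : ∀ ε ∈ Set.Ioc (0 : ℝ) 1, IsFourierSeries χ (smoothing m ε) B)
    (hlim : ∀ t, Tendsto (fun ε => smoothing m ε t) (𝓝[>] 0) (𝓝 (m t)))
    (hE : ∀ U ∈ bohrNhdsZero χ, ∀ ρ, ∃ s ∈ U, ball s ρ ⊆ E)
    (hsep : (E ∩ Function.support m).Pairwise fun x y => β ≤ dist x y) (hβ : 0 < β) :
    (Function.support m).Pairwise fun x y => β ≤ dist x y := by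
  intro u hu v hv huv
  have hd : 0 < dist u v := dist_pos.2 huv
  refine le_of_forall_pos_le_add fun η hη => ?_
  obtain ⟨s, p, hp, q, hq, hpu, hqv, -⟩ := exists_dist_add_lt_of_mem_support hFS hlim hE hsep hβ
    hu hv (lt_min (half_pos hη) (half_pos hd))
  obtain ⟨hpη, hpd⟩ := lt_min_iff.1 hpu
  obtain ⟨hqη, hqd⟩ := lt_min_iff.1 hqv
  have huv' : dist (u + s) (v + s) = dist u v := dist_add_right u v s
  have hpq : p ≠ q := by
    rintro rfl
    linarith [dist_triangle_left (u + s) (v + s) p]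
  linarith [hsep hp hq hpq, dist_triangle4_right p q (u + s) (v + s)]

lemma eventually_isAlmostPeriod
    (hFS : ∀ ε ∈ Set.Ioc (0 : ℝ) 1, IsFourierSeries χ (smoothing m ε) B)
    (hsep : (Function.support m).Pairwise fun x y => β ≤ dist x y) (hβ : 0 < β)
    (hmass : ∀ l ∈ Function.support m, c ≤ ‖m l‖) (hc : 0 < c) (hδ : 0 < δ) :
    ∀ᶠ s in bohrNhdsZero χ, IsAlmostPeriod m δ s := by
  obtain ⟨ε, hε, hε'⟩ := exists_between (show 0 < min 1 (min (β / 2) δ) by positivity)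
  obtain ⟨hε1, hεβ, hεδ⟩ : ε < 1 ∧ ε < β / 2 ∧ ε < δ := by simpa only [lt_min_iff] using hε'
  filter_upwards [(hFS ε ⟨hε, hε1.le⟩).eventually_forall_dist_lt hδ,
    (hFS (ε / 2) ⟨half_pos hε, by linarith⟩).eventually_forall_dist_lt hc] with s hs hs' l hl
  have hsl := hs l
  have hsl' := hs' l
  rw [smoothing_eq_self hsep hε (by linarith) hl] at hsl
  rw [smoothing_eq_self hsep (half_pos hε) (by linarith) hl] at hsl'
  have hne : smoothing m (ε / 2) (l + s) ≠ 0 := by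
    intro h
    rw [h, dist_zero_left] at hsl'
    exact (hmass l hl).not_gt hsl'
  obtain ⟨l', hl', hdist, hml'⟩ := exists_smoothing_eq_of_smoothing_half_ne_zero
    (by rwa [Set.univ_inter]) hε hεβ.le (Set.subset_univ _) hne
  exact ⟨l', hl'.2, hdist.trans hεδ, hml' ▸ hsl⟩

end AlmostPeriodicMasses

/-! ### Dirichlet series on a shifted lattice -/

section Lattice

variable {V : Type*} [NormedAddCommGroup V]

lemma exists_basis_span_int_range_eq [NormedSpace ℝ V] [FiniteDimensional ℝ V] {n : ℕ}
    (hn : Module.finrank ℝ V = n) {M : AddSubgroup V} {β : ℝ} (hβ : 0 < β)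
    (hM : ∀ h ∈ M, h ≠ 0 → β ≤ ‖h‖) (hspan : Submodule.span ℝ (M : Set V) = ⊤) :
    ∃ b : Module.Basis (Fin n) ℝ V,
      (Submodule.span ℤ (Set.range b) : Set V) = M := by
  set L := AddSubgroup.toIntSubmodule M
  have : DiscreteTopology L := DiscreteTopology.of_forall_le_norm hβ fun h hne =>
    hM h h.2 (by simpa using hne)
  have : IsZLattice ℝ L := ⟨hspan⟩
  have := ZLattice.module_free ℝ L
  have := ZLattice.module_finite ℝ L
  have b := Module.finBasisOfFinrankEq ℤ L ((ZLattice.rank ℝ L).trans hn)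
  exact ⟨b.ofZLatticeBasis ℝ L, congrArg _ (b.ofZLatticeBasis_span ℝ L)⟩

/-- Reduction modulo the dual lattice moves all frequencies into a bounded set. -/
lemma exists_isBounded_range_forall_inner_sub_eq_intCast [InnerProductSpace ℝ V] {ι : Type*}
    [Finite ι] (b : Module.Basis ι ℝ V) :
    ∃ g : V → V, IsBounded (Set.range g) ∧
      ∀ t ∈ Submodule.span ℤ (Set.range b), ∀ γ, ∃ n : ℤ, ⟪t, γ - g γ⟫ = n := by
  classical
  have := Fintype.ofFinite ι
  let B : LinearMap.BilinForm ℝ V := innerₗ V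
  have hB : B.Nondegenerate := ⟨fun v hv => inner_self_eq_zero.1 (hv v),
    fun v hv => inner_self_eq_zero.1 (hv v)⟩
  set b' := B.dualBasis hB b
  refine ⟨ZSpan.fract b', isBounded_iff_forall_norm_le.2 ⟨∑ i, ‖b' i‖, ?_⟩, fun t ht γ => ?_⟩
  · rintro _ ⟨γ, rfl⟩
    exact ZSpan.norm_fract_le b' γ
  · have hfloor : (ZSpan.floor b' γ : V) ∈ B.dualSubmodule (Submodule.span ℤ (Set.range b)) := by
      rw [LinearMap.BilinForm.dualSubmodule_span_of_basis B hB]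
      exact (ZSpan.floor b' γ).2
    obtain ⟨n, hn⟩ := Submodule.mem_one.1 (hfloor t ht)
    refine ⟨n, ?_⟩
    rw [ZSpan.fract_apply, sub_sub_cancel, real_inner_comm]
    exact hn.symm

end Lattice

lemma latt_equivFun_symm (b : Module.Basis (Fin d) ℝ (Ed d)) (l : Ed d) :
    latt ((WithLp.linearEquiv 2 ℝ (Fin d → ℝ)).trans b.equivFun.symm) l =
      l +ᵥ (Submodule.span ℤ (Set.range b) : Set (Ed d)) := by
  have hT (k : Fin d → ℤ) : (WithLp.linearEquiv 2 ℝ (Fin d → ℝ)).trans b.equivFun.symm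
      ((WithLp.equiv 2 (Fin d → ℝ)).symm fun i => (k i : ℝ)) = ∑ i, k i • b i :=
    (b.equivFun_symm_apply _).trans
      (Finset.sum_congr rfl fun i _ => Int.cast_smul_eq_zsmul ℝ (k i) (b i))
  ext y
  simp only [latt, hT, Set.mem_ofPred_eq, Set.mem_vadd_set, SetLike.mem_coe,
    Submodule.mem_span_range_iff_exists_fun, vadd_eq_add, exists_exists_eq_and,
    eq_comm (a := y), add_comm l]

lemma exists_dser_eq_tsum {ι : Type*} {a : ι → ℂ} {g : ι → Ed d} (ha : Summable fun i => ‖a i‖)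
    (hg : IsBounded (Set.range g)) :
    ∃ (q : ℕ → ℂ) (ω : ℕ → Ed d), (Summable fun n => ‖q n‖) ∧ IsBounded (Set.range ω) ∧
      ∀ t, dser q ω t = ∑' i, a i * innerChar (g i) t := by
  have hcountable : (Function.support a).Countable := by
    simpa only [Function.support, ne_eq, norm_eq_zero] using ha.countable_support
  obtain ⟨e, he⟩ := Set.countable_iff_exists_injective.1 hcountable
  have hq (i : Function.support a) : Function.extend e (fun i => a i) 0 (e i) = a i :=
    he.extend_apply _ _ i
  have hω (i : Function.support a) : Function.extend e (fun i => g i) 0 (e i) = g i :=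
    he.extend_apply _ _ i
  have hq0 (n : ℕ) (hn : n ∉ Set.range e) : Function.extend e (fun i => a i) 0 n = 0 :=
    Function.extend_apply' _ _ _ hn
  refine ⟨Function.extend e (fun i => a i) 0, Function.extend e (fun i => g i) 0, ?_, ?_,
    fun t => ?_⟩
  · rw [← he.summable_iff fun n hn => by rw [hq0 n hn, norm_zero]]
    exact (ha.subtype (Function.support a)).congr fun i => congrArg norm (hq i).symm
  · refine (hg.union (isBounded_singleton (x := 0))).subset ?_
    rintro _ ⟨n, rfl⟩
    by_cases hn : n ∈ Set.range e
    · obtain ⟨i, rfl⟩ := hn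
      exact Or.inl ⟨i, (hω i).symm⟩
    · exact Or.inr (Function.extend_apply' _ _ _ hn)
  · simp only [dser, ← coe_innerChar_apply]
    rw [← he.tsum_eq, ← tsum_subtype_eq_of_support_subset (s := Function.support a)]
    · simp only [hq, hω]
    · exact fun i hi => left_ne_zero_of_mul hi
    · exact fun n hn => by_contra fun h => left_ne_zero_of_mul hn (hq0 n h)

lemma exists_dser_eqOn_vadd_span (b : Module.Basis (Fin d) ℝ (Ed d)) (l : Ed d) {a : Ed d → ℂ}
    (ha : Summable fun γ => ‖a γ‖) :
    ∃ (q : ℕ → ℂ) (ω : ℕ → Ed d), (Summable fun n => ‖q n‖) ∧ IsBounded (Set.range ω) ∧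
      Set.EqOn (dser q ω) (fun t => ∑' γ, a γ * innerChar γ t)
        (l +ᵥ (Submodule.span ℤ (Set.range b) : Set (Ed d))) := by
  obtain ⟨g, hg, hint⟩ := exists_isBounded_range_forall_inner_sub_eq_intCast b
  obtain ⟨q, ω, hq, hω, hd⟩ := exists_dser_eq_tsum
    (a := fun γ => a γ * innerChar (γ - g γ) l)
    (by simpa only [norm_mul, Circle.norm_coe, mul_one]) hg
  refine ⟨q, ω, hq, hω, ?_⟩
  rintro _ ⟨t, ht, rfl⟩
  refine (hd _).trans (tsum_congr fun γ => ?_)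
  obtain ⟨n, hn⟩ := hint t ht γ
  have hγ : innerChar γ (l + t) = innerChar (γ - g γ) l * innerChar (g γ) (l + t) := by
    conv_lhs => rw [← sub_add_cancel γ (g γ), innerChar_add]
    rw [AddChar.map_add_eq_mul (innerChar (γ - g γ)), innerChar_eq_one_of_inner_eq_intCast hn,
      mul_one]
  change _ = a γ * innerChar γ (l + t)
  rw [hγ, Circle.coe_mul, mul_assoc]
  rfl

lemma exists_latt_eq_and_dser_eqOn {S : Set (Ed d)} {β : ℝ} (hβ : 0 < β)
    (hsep : S.Pairwise fun x y => β ≤ dist x y)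
    (hS : ∃ (l : Ed d) (M : AddSubgroup (Ed d)), Submodule.span ℝ (M : Set (Ed d)) = ⊤ ∧
      S = l +ᵥ (M : Set (Ed d)))
    {a : Ed d → ℂ} (ha : Summable fun γ => ‖a γ‖) :
    ∃ l ∈ S, ∃ (T : Ed d ≃ₗ[ℝ] Ed d) (q : ℕ → ℂ) (ω : ℕ → Ed d), latt T l = S ∧
      (Summable fun n => ‖q n‖) ∧ IsBounded (Set.range ω) ∧
      Set.EqOn (dser q ω) (fun t => ∑' γ, a γ * innerChar γ t) S := by
  obtain ⟨l, M, hspan, hS⟩ := hS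
  have hmem {k : Ed d} (hk : k ∈ M) : l + k ∈ S := hS ▸ Set.vadd_mem_vadd_set hk
  have hM : ∀ h ∈ M, h ≠ 0 → β ≤ ‖h‖ := fun h hh hne => by
    simpa only [dist_add_left, dist_zero_right] using hsep (hmem hh) (hmem M.zero_mem)
      ((add_right_injective l).ne hne)
  obtain ⟨b, hb⟩ := exists_basis_span_int_range_eq finrank_euclideanSpace_fin hβ hM hspan
  obtain ⟨q, ω, hq, hω, hd⟩ := exists_dser_eqOn_vadd_span b l ha
  have hlatt := latt_equivFun_symm b l
  rw [hb, ← hS] at hd hlatt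
  exact ⟨l, add_zero l ▸ hmem M.zero_mem, _, q, ω, hlatt, hq, hω, hd⟩

lemma exists_fin_sum_indicator_eq {α M : Type*} [AddCommMonoid M] {m : α → M} {F : Set (Set α)}
    (hF : F.Finite) (hdisj : F.PairwiseDisjoint id) (hm : ⋃₀ F = Function.support m) :
    ∃ (N : ℕ) (S : Fin N → Set α), (∀ j, S j ∈ F) ∧ Function.support m = ⋃ j, S j ∧
      ∀ y, m y = ∑ j, (S j).indicator m y := by
  have := hF.fintype
  set S : Fin (Fintype.card F) → Set α := fun j => ((Fintype.equivFin F).symm j : Set α)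
  have hunion : Function.support m = ⋃ j, S j := by
    rw [← hm, Set.sUnion_eq_iUnion, (Fintype.equivFin F).symm.surjective.iUnion_comp Subtype.val]
  refine ⟨_, S, fun j => Subtype.prop _, hunion, fun y => ?_⟩
  have hdisj' : Set.PairwiseDisjoint ((Finset.univ : Finset (Fin (Fintype.card F))) : Set _) S :=
    fun i _ j _ hij => hdisj (Subtype.prop _) (Subtype.prop _) fun h =>
      hij ((Fintype.equivFin F).symm.injective (Subtype.ext h))
  have h := congrFun (Finset.indicator_biUnion Finset.univ S hdisj' (f := m)) y
  simpa [← hunion, Set.indicator_support] using h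

theorem exists_finite_pairwiseDisjoint_sUnion_eq_support {V ι : Type*} [NormedAddCommGroup V]
    [NormedSpace ℝ V] [FiniteDimensional ℝ V] {χ : ι → AddChar V Circle} {m : V → ℂ} {B β c : ℝ}
    (hB : 0 ≤ B) (hFS : ∀ ε ∈ Set.Ioc (0 : ℝ) 1, IsFourierSeries χ (smoothing m ε) B)
    (hlim : ∀ t, Tendsto (fun ε => smoothing m ε t) (𝓝[>] 0) (𝓝 (m t))) (hβ : 0 < β)
    (hsep : (Function.support m).Pairwise fun x y => β ≤ dist x y) (hc : 0 < c)
    (hmass : ∀ l ∈ Function.support m, c ≤ ‖m l‖) :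
    ∃ F : Set (Set V), F.Finite ∧ F.PairwiseDisjoint id ∧ ⋃₀ F = Function.support m ∧
      ∀ S ∈ F, ∃ (l : V) (M : AddSubgroup V), Submodule.span ℝ (M : Set V) = ⊤ ∧
        S = l +ᵥ (M : Set V) := by
  have hfs : HasFSBound χ m B := hasFSBound_of_tendsto hB
    (Filter.mem_of_superset (Ioc_mem_nhdsGT one_pos) hFS) hlim
  have hperiod : ∀ δ, 0 < δ → ∀ᶠ s in bohrNhdsZero χ, IsAlmostPeriod m δ s := fun δ hδ =>
    eventually_isAlmostPeriod hFS hsep hβ hmass hc hδ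
  obtain ⟨l, rfl, hl⟩ := exists_list_sum_eq_forall_sub_mem_stabilizer_support hfs hc
    (fun t => or_iff_not_imp_left.2 (hmass t))
    (limitDifference_eq_zero_or_eq hfs.norm_apply_le hβ hsep hperiod)
  obtain ⟨P, hP, hPl⟩ := exists_finite_cosetUnion_eq_support_sum l hl
  have hap := isAlmostPeriodicSet_support hperiod
  rw [← hPl] at hsep hap ⊢
  obtain ⟨Q, hQ, hspan, hQP⟩ := exists_finite_span_eq_top_and_cosetUnion_eq hP hβ hsep hap
  rw [← hQP] at hsep ⊢
  exact exists_finite_pairwiseDisjoint_sUnion_eq_cosetUnion hQ hβ hsep hspan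

/-- Let `μ` be a complex Poisson measure on `ℝ^d` with Fourier transform
`μh`, let `E = ∪_n B(x_n,R_n)` with `R_n → ∞`, and assume `|μ{λ}| ≥ c > 0` and
`|λ-λ'| ≥ β > 0` for all distinct `λ, λ' ∈ E ∩ supp μ`, and `|μ̂|(B(0,r)) = O(r^d)`.
Then `supp μ` is a finite union of translated lattices `T_j ℤ^d + λ_j` with `λ_j ∈ supp μ`,
and `μ = Σ_j Σ_{λ ∈ T_j ℤ^d + λ_j} Q_j(λ) δ_λ` with `Q_j` Dirichlet series with absolutely
summable coefficients and bounded spectrum. -/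
theorem statement6 {d : ℕ} (μ μh : PPM (Ed d))
    (hμlf : μ.locFinite) (hμt : μ.temperate)
    (hμhlf : μh.locFinite) (hF : IsFT μ μh)
    (x : ℕ → Ed d) (R : ℕ → ℝ) (hR : Tendsto R atTop atTop)
    (E : Set (Ed d)) (hE : E = ⋃ n : ℕ, ball (x n) (R n))
    (c β : ℝ) (hc : 0 < c) (hβ : 0 < β)
    (hmass : ∀ l ∈ E ∩ Function.support μ.mass, c ≤ ‖μ.mass l‖)
    (hsep : ∀ l ∈ E ∩ Function.support μ.mass, ∀ l' ∈ E ∩ Function.support μ.mass,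
      l ≠ l' → β ≤ ‖l - l'‖)
    (hgrow : ∃ C : ℝ, ∀ᶠ r : ℝ in atTop,
      μh.var (ball 0 r) ≤ ENNReal.ofReal (C * r ^ d)) :
    ∃ (N : ℕ) (lam : Fin N → Ed d) (T : Fin N → (Ed d ≃ₗ[ℝ] Ed d))
      (q : Fin N → ℕ → ℂ) (ω : Fin N → ℕ → Ed d),
      (∀ j, lam j ∈ Function.support μ.mass) ∧
      Function.support μ.mass = ⋃ j : Fin N, latt (T j) (lam j) ∧
      (∀ j, Summable fun i => ‖q j i‖) ∧
      (∀ j, IsBounded (Set.range (ω j))) ∧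
      (∀ y : Ed d, μ.mass y =
        ∑ j : Fin N, Set.indicator (latt (T j) (lam j)) (dser (q j) (ω j)) y) := by
  obtain ⟨M, C, hμ⟩ := hμt.exists_hasGrowth hμlf
  obtain ⟨C', hC'⟩ := hgrow
  obtain ⟨D, hμh⟩ := PPM.exists_hasGrowth hμhlf hC'
  obtain ⟨B, hB, hFS⟩ := hF.exists_isFourierSeries_smoothing hμ hμh
  have hlim := tendsto_smoothing hμlf
  have hballs : ∀ U ∈ bohrNhdsZero innerChar, ∀ ρ, ∃ s ∈ U, ball s ρ ⊆ E :=
    fun U hU ρ => hE ▸ exists_mem_ball_subset_iUnion_ball hR hU ρ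
  have hsepE : (E ∩ Function.support μ.mass).Pairwise fun x y => β ≤ dist x y :=
    fun l hl l' hl' hne => (hsep l hl l' hl' hne).trans_eq (dist_eq_norm l l').symm
  have hsupp := pairwise_support_le_dist hFS hlim hballs hsepE hβ
  obtain ⟨F, hFfin, hFdisj, hFsupp, hFcoset⟩ :=
    exists_finite_pairwiseDisjoint_sUnion_eq_support hB hFS hlim hβ hsupp hc
      fun l hl => le_norm_of_mem_support hFS hlim hballs hsepE hβ hmass hl
  obtain ⟨a, ha, -, hma⟩ := hFS (min 1 β) ⟨lt_min one_pos hβ, min_le_left 1 β⟩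
  obtain ⟨N, S, hSF, hS, hsum⟩ := exists_fin_sum_indicator_eq hFfin hFdisj hFsupp
  have hSsub (j : Fin N) : S j ⊆ Function.support μ.mass := hS ▸ Set.subset_iUnion S j
  choose lam hlam T q ω hT hq hω hd using fun j =>
    exists_latt_eq_and_dser_eqOn hβ (hsupp.mono (hSsub j)) (hFcoset _ (hSF j)) ha
  refine ⟨N, lam, T, q, ω, fun j => hSsub j (hlam j), by simpa only [hT], hq, hω, fun y => ?_⟩
  simp only [hT, hsum y]
  refine Finset.sum_congr rfl fun j _ => congrFun (Set.indicator_congr fun t ht => ?_) y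
  rw [hd j ht, ← smoothing_eq_self hsupp (lt_min one_pos hβ) (min_le_right 1 β) (hSsub j ht)]
  exact hma t

end
end

section
/- Let A = {a_n}_{n∈ℤ} ⊂ ℝ be an almost periodic set of density D, numbered so that a_n ≤ a_{n+1} for all n ∈ ℤ. Then a_n = n/D + φ(n) for all n, where φ : ℤ → ℝ is an almost periodic function on ℤ. -/
open MeasureTheory Metric Filter Topology Complex
open scoped ENNReal

noncomputable section

/-- The counting measure `μ_A = Σ_{n∈ℤ} δ_{a_n}` of the multiset `A = {a_n}_{n∈ℤ}`,
evaluated on a set `S` (counting with multiplicity). -/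
def cntZ (a : ℤ → ℝ) (S : Set ℝ) : ℝ≥0∞ :=
  ∑' n : ℤ, S.indicator (fun _ => (1 : ℝ≥0∞)) (a n)

/-- `A = {a_n}_{n∈ℤ}` is an almost periodic set: it is locally finite and the convolution of
`μ_A = Σ_n δ_{a_n}` with every `C^∞` compactly supported function is Bohr almost periodic. -/
def IsAPSeqZ (a : ℤ → ℝ) : Prop :=
  (∀ r : ℝ, cntZ a (ball 0 r) < ⊤) ∧
    ∀ ψ : ℝ → ℂ, ContDiff ℝ (⊤ : ℕ∞) ψ → HasCompactSupport ψ →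
      IsBohrAP fun t : ℝ => ∑' n : ℤ, ψ (t - a n)

/-- `A = {a_n}_{n∈ℤ}` has density `D`: `#(A ∩ (x,x+l))/l → D` as `l → ∞`, uniformly in `x`. -/
def HasDensityZ (a : ℤ → ℝ) (D : ℝ) : Prop :=
  ∀ ε : ℝ, 0 < ε → ∃ l₀ : ℝ, ∀ l : ℝ, l₀ ≤ l → ∀ x : ℝ,
    |(cntZ a (Set.Ioo x (x + l))).toReal / l - D| < ε

/-- `φ : ℤ → ℝ` is a (Bohr) almost periodic function on `ℤ`. -/
def IsAPZfun (φ : ℤ → ℝ) : Prop :=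
  ∀ ε : ℝ, 0 < ε → ∃ L : ℤ, 0 < L ∧ ∀ m : ℤ, ∃ τ : ℤ, |τ - m| ≤ L ∧
    ∀ n : ℤ, |φ (n + τ) - φ n| < ε

/-!
For `e > 0`, cut the line into windows of length `e`. Boundedly many points lie in each, so each
window contains a point `c i` that stays a fixed distance away from `A`. Convolve `μ_A` with a bump
of integral `1` and very small support: over an interval between two such gaps the convolution has
integral equal to the number of points there. If `τ` is an almost period of the convolution, the
points `c i + τ` still lie in gaps, and the counts in `(c i, c (i + 1))` and in its translate by `τ`
are integers at distance less than `1`, hence equal. So the translation by `τ` shifts the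
numbering by one constant `p`, that is `|a (n + p) - a n - τ| ≤ 2e` for all `n`. Iterating this
and comparing with the density gives `|p / D - τ| ≤ 2e`, and therefore `p` is a `4e`-almost period
of `a n - n / D`.
-/
section Counting

variable {a : ℤ → ℝ}

lemma cntZ_eq_encard_preimage (a : ℤ → ℝ) (S : Set ℝ) :
    cntZ a S = ((a ⁻¹' S).encard : ℝ≥0∞) := by
  rw [← ENNReal.tsum_set_one, tsum_subtype (a ⁻¹' S) fun _ ↦ (1 : ℝ≥0∞)]
  rfl

lemma toReal_cntZ (a : ℤ → ℝ) (S : Set ℝ) : (cntZ a S).toReal = (a ⁻¹' S).ncard := by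
  rw [cntZ_eq_encard_preimage, Set.ncard_def]
  cases (a ⁻¹' S).encard <;> simp

lemma tendsto_cocompact_of_cntZ_ball_lt_top (h : ∀ r, cntZ a (ball 0 r) < ⊤) :
    Tendsto a cofinite (cocompact ℝ) := by
  refine tendsto_cofinite_cocompact_iff.2 fun K hK ↦ ?_
  obtain ⟨r, hr⟩ := hK.isBounded.subset_ball 0
  have hfin : (a ⁻¹' ball 0 r).Finite := by
    simpa [cntZ_eq_encard_preimage, Set.encard_lt_top_iff] using h r
  exact hfin.subset (Set.preimage_mono hr)

lemma finite_preimage_Icc (ha : Tendsto a cofinite (cocompact ℝ)) (x y : ℝ) :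
    (a ⁻¹' Set.Icc x y).Finite :=
  tendsto_cofinite_cocompact_iff.1 ha _ isCompact_Icc

lemma exists_lt_apply (hmono : Monotone a) (ha : Tendsto a cofinite (cocompact ℝ)) (x : ℝ) :
    ∃ n, x < a n := by
  by_contra! h
  exact Set.Ici_infinite (0 : ℤ)
    ((finite_preimage_Icc ha (a 0) x).subset fun n hn ↦ ⟨hmono hn, h n⟩)

lemma exists_apply_le (hmono : Monotone a) (ha : Tendsto a cofinite (cocompact ℝ)) (x : ℝ) :
    ∃ n, a n ≤ x := by
  by_contra! h
  exact Set.Iic_infinite (0 : ℤ)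
    ((finite_preimage_Icc ha x (a 0)).subset fun n hn ↦ ⟨(h n).le, hmono hn⟩)

/-- The counting function of the nondecreasing sequence `a`, normalised by the numbering of `a`:
the least index whose term exceeds `x`, so that `countingIndex a y - countingIndex a x` is the
number of terms in `(x, y]`. -/
def countingIndex (a : ℤ → ℝ) (x : ℝ) : ℤ :=
  sInf {n | x < a n}

lemma lt_countingIndex_iff (hmono : Monotone a) (ha : Tendsto a cofinite (cocompact ℝ))
    {n : ℤ} {x : ℝ} : n < countingIndex a x ↔ a n ≤ x := by
  have hbdd : BddBelow {k | x < a k} := by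
    obtain ⟨k, hk⟩ := exists_apply_le hmono ha x
    exact ⟨k, fun j hj ↦ (hmono.reflect_lt (hk.trans_lt hj)).le⟩
  constructor
  · intro hn
    exact not_lt.1 fun h ↦ hn.not_ge (csInf_le hbdd h)
  · intro hn
    have hmem : x < a (countingIndex a x) := Int.csInf_mem (exists_lt_apply hmono ha x) hbdd
    exact hmono.reflect_lt (hn.trans_lt hmem)

lemma countingIndex_le_iff (hmono : Monotone a) (ha : Tendsto a cofinite (cocompact ℝ))
    {n : ℤ} {x : ℝ} : countingIndex a x ≤ n ↔ x < a n := by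
  rw [← not_lt, lt_countingIndex_iff hmono ha, not_le]

lemma countingIndex_mono (hmono : Monotone a) (ha : Tendsto a cofinite (cocompact ℝ)) :
    Monotone (countingIndex a) := fun _ _ hxy ↦
  (countingIndex_le_iff hmono ha).2
    (hxy.trans_lt ((countingIndex_le_iff hmono ha).1 le_rfl))

end Counting

section Density

variable {a : ℤ → ℝ} {D ε : ℝ}

lemma intCast_card_Ico {n m : ℤ} (hnm : n ≤ m) : ((Finset.Ico n m).card : ℝ) = m - n := by
  rw [← Int.cast_natCast, Int.card_Ico_of_le n m hnm, Int.cast_sub]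

lemma ncard_preimage_Ioo_le (hmono : Monotone a) {n m : ℤ} (hnm : n ≤ m) :
    ((a ⁻¹' Set.Ioo (a n) (a m)).ncard : ℝ) ≤ m - n := by
  have hsub : a ⁻¹' Set.Ioo (a n) (a m) ⊆ Finset.Ico n m := fun i hi ↦
    Finset.mem_coe.2 (Finset.mem_Ico.2
      ⟨(hmono.reflect_lt hi.1).le, hmono.reflect_lt hi.2⟩)
  rw [← intCast_card_Ico hnm, ← Set.ncard_coe_finset]
  exact_mod_cast Set.ncard_le_ncard hsub (Finset.finite_toSet _)

lemma sub_le_ncard_preimage_Ioo (hmono : Monotone a) (ha : Tendsto a cofinite (cocompact ℝ))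
    {n m : ℤ} (hnm : n ≤ m) {x y : ℝ} (hx : x < a n) (hy : a m < y) :
    (m : ℝ) - n ≤ (a ⁻¹' Set.Ioo x y).ncard := by
  have hsub : (Finset.Ico n m : Set ℤ) ⊆ a ⁻¹' Set.Ioo x y := fun i hi ↦ by
    have hi := Finset.mem_Ico.1 (Finset.mem_coe.1 hi)
    exact ⟨hx.trans_le (hmono hi.1), (hmono hi.2.le).trans_lt hy⟩
  rw [← intCast_card_Ico hnm, ← Set.ncard_coe_finset]
  exact_mod_cast Set.ncard_le_ncard hsub
    ((finite_preimage_Icc ha x y).subset (Set.preimage_mono Set.Ioo_subset_Icc_self))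

lemma HasDensityZ.exists_abs_ncard_sub_le (hden : HasDensityZ a D) (hε : 0 < ε) :
    ∃ L : ℝ, 0 < L ∧ ∀ l, L ≤ l → ∀ x,
      |((a ⁻¹' Set.Ioo x (x + l)).ncard : ℝ) - D * l| ≤ ε * l := by
  obtain ⟨l₀, hl₀⟩ := hden ε hε
  refine ⟨max l₀ 1, by positivity, fun l hl x ↦ ?_⟩
  have hl0 : 0 < l := one_pos.trans_le ((le_max_right _ _).trans hl)
  have h := (hl₀ l ((le_max_left _ _).trans hl) x).le
  rwa [toReal_cntZ, div_sub' hl0.ne', abs_div, abs_of_pos hl0, div_le_iff₀ hl0,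
    mul_comm l D] at h

lemma HasDensityZ.exists_abs_index_sub_le (hden : HasDensityZ a D) (hD : 0 ≤ D)
    (hmono : Monotone a) (ha : Tendsto a cofinite (cocompact ℝ)) (hε : 0 < ε) :
    ∃ C : ℝ, ∀ n m : ℤ, |((m : ℝ) - n) - D * (a m - a n)| ≤ ε * |a m - a n| + C := by
  obtain ⟨L, hL, hcount⟩ := hden.exists_abs_ncard_sub_le hε
  refine ⟨2 * L * (D + ε), fun n m ↦ ?_⟩
  wlog hnm : n ≤ m generalizing n m
  · have h := this m n (le_of_not_ge hnm)
    rw [abs_sub_comm (a n)] at h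
    rwa [← abs_neg, show -((m : ℝ) - n - D * (a m - a n)) = n - m - D * (a n - a m) by ring]
  have hd : 0 ≤ a m - a n := sub_nonneg.2 (hmono hnm)
  rw [abs_of_nonneg hd, abs_le]
  constructor
  · rcases le_total L (a m - a n) with hdL | hdL
    · have hupper := ncard_preimage_Ioo_le hmono hnm
      have hlower := (abs_le.1 (hcount _ hdL (a n))).1
      rw [add_sub_cancel] at hlower
      have hC : 0 ≤ 2 * L * (D + ε) := by positivity
      linarith
    · have hnm' : (n : ℝ) ≤ m := mod_cast hnm
      have hDd : D * (a m - a n) ≤ D * L := by gcongr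
      have hεd : 0 ≤ ε * (a m - a n) := by positivity
      have hLε : 0 ≤ L * ε := by positivity
      have hDL : 0 ≤ D * L := by positivity
      linarith
  · have hlower := sub_le_ncard_preimage_Ioo hmono ha hnm (x := a n - L)
      (y := a n - L + (a m - a n + 2 * L)) (by linarith) (by linarith)
    have hupper := (abs_le.1 (hcount (a m - a n + 2 * L) (by linarith) (a n - L))).2
    linarith

lemma HasDensityZ.exists_index_sub_lt_of_sub_le_one (hden : HasDensityZ a D) (hD : 0 ≤ D)
    (hmono : Monotone a) (ha : Tendsto a cofinite (cocompact ℝ)) :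
    ∃ M : ℕ, ∀ n m : ℤ, a m - a n ≤ 1 → m - n < M := by
  obtain ⟨C, hC⟩ := hden.exists_abs_index_sub_le hD hmono ha one_pos
  obtain ⟨M, hM⟩ := exists_nat_gt (D + 1 + C)
  refine ⟨M, fun n m h ↦ ?_⟩
  rcases le_total m n with hmn | hnm
  · have hC0 : 0 ≤ C := by simpa using (abs_nonneg _).trans (hC 0 0)
    have hM0 : (0 : ℝ) < M := by linarith
    exact (sub_nonpos.2 hmn).trans_lt (mod_cast hM0)
  · have hbound := (abs_le.1 (hC n m)).2
    rw [abs_of_nonneg (sub_nonneg.2 (hmono hnm))] at hbound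
    have hDd : D * (a m - a n) ≤ D * 1 := by gcongr
    have : ((m - n : ℤ) : ℝ) < (M : ℤ) := by
      push_cast
      linarith
    exact_mod_cast this

end Density

section Gaps

variable {a : ℤ → ℝ} {δ : ℝ}

/-- The point `c` lies in a gap of the sequence `a`: no term is at distance less than `δ`. -/
def IsGap (a : ℤ → ℝ) (δ c : ℝ) : Prop :=
  ∀ n, δ ≤ |a n - c|

lemma IsGap.anti {δ' c : ℝ} (hc : IsGap a δ c) (h : δ' ≤ δ) : IsGap a δ' c :=
  fun n ↦ h.trans (hc n)

lemma IsGap.add_le_apply {c : ℝ} (hc : IsGap a δ c) {n : ℤ} (h : c ≤ a n) : c + δ ≤ a n := by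
  have := hc n
  rw [abs_of_nonneg (sub_nonneg.2 h)] at this
  linarith

lemma IsGap.apply_add_le {c : ℝ} (hc : IsGap a δ c) {n : ℤ} (h : a n ≤ c) : a n + δ ≤ c := by
  have := hc n
  rw [abs_of_nonpos (sub_nonpos.2 h)] at this
  linarith

lemma apply_zero_add_le_apply_last {M : ℕ} {f : Fin (M + 1) → ℤ} (hf : StrictMono f) :
    f 0 + M ≤ f (Fin.last M) := by
  have hsub : Finset.univ.image f ⊆ Finset.Icc (f 0) (f (Fin.last M)) := by
    intro k hk
    obtain ⟨j, -, rfl⟩ := Finset.mem_image.1 hk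
    exact Finset.mem_Icc.2 ⟨hf.monotone (Fin.zero_le j), hf.monotone (Fin.le_last j)⟩
  have hcard := Finset.card_le_card hsub
  rw [Finset.card_image_of_injective _ hf.injective, Finset.card_univ, Fintype.card_fin,
    Int.card_Icc] at hcard
  omega

/-- Pigeonhole: at most `M` terms cannot meet all of `M + 1` disjoint intervals of length `2δ`. -/
lemma exists_isGap_mem_Icc (hmono : Monotone a) {M : ℕ}
    (hM : ∀ n m : ℤ, a m - a n ≤ 1 → m - n < M) (hδ : 0 ≤ δ) (hδM : 2 * δ * (M + 1) ≤ 1) (x : ℝ) :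
    ∃ c ∈ Set.Icc x (x + 2 * δ * (M + 1)), IsGap a δ c := by
  by_contra! h
  have hhit : ∀ j : Fin (M + 1), ∃ n, |a n - (x + (2 * (j : ℕ) + 1) * δ)| < δ := by
    intro j
    have hj : ((j : ℕ) : ℝ) ≤ M := mod_cast Fin.is_le j
    simpa only [IsGap, not_forall, not_le] using
      h _ ⟨le_add_of_nonneg_right (by positivity), by nlinarith⟩
  choose f hf using hhit
  have hfmono : StrictMono f := by
    intro j k hjk
    have hjk' : ((j : ℕ) : ℝ) + 1 ≤ (k : ℕ) := mod_cast hjk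
    have hj := (abs_lt.1 (hf j)).2
    have hk := (abs_lt.1 (hf k)).1
    exact hmono.reflect_lt (by nlinarith)
  have hfirst := (abs_lt.1 (hf 0)).1
  have hlast := (abs_lt.1 (hf (Fin.last M))).2
  simp only [Fin.val_zero, Fin.val_last, CharP.cast_eq_zero] at hfirst hlast
  have hclose := hM (f 0) (f (Fin.last M)) (by linarith)
  have hfar := apply_zero_add_le_apply_last hfmono
  omega

end Gaps

section Mollification

variable {a : ℤ → ℝ} {ψ : ℝ → ℝ} {δ η τ : ℝ}

/-- The convolution of `∑ δ_{a n}` with the real-valued test function `ψ`. -/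
def mollifiedCount (ψ : ℝ → ℝ) (a : ℤ → ℝ) (t : ℝ) : ℝ :=
  ∑' n, ψ (t - a n)

lemma IsAPSeqZ.isBohrAP_mollifiedCount (hap : IsAPSeqZ a) (hψ : ContDiff ℝ (⊤ : ℕ∞) ψ)
    (hcomp : HasCompactSupport ψ) : IsBohrAP fun t ↦ (mollifiedCount ψ a t : ℂ) := by
  simpa only [mollifiedCount, Complex.ofReal_tsum] using
    hap.2 (fun t ↦ (ψ t : ℂ)) (Complex.ofRealCLM.contDiff.comp hψ)
      (hcomp.comp_left Complex.ofReal_zero)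

lemma IsAPSeqZ.continuous_mollifiedCount (hap : IsAPSeqZ a) (hψ : ContDiff ℝ (⊤ : ℕ∞) ψ)
    (hcomp : HasCompactSupport ψ) : Continuous (mollifiedCount ψ a) :=
  Complex.continuous_re.comp (hap.isBohrAP_mollifiedCount hψ hcomp).1

lemma IsAPSeqZ.exists_almostPeriod (hap : IsAPSeqZ a) (hψ : ContDiff ℝ (⊤ : ℕ∞) ψ)
    (hcomp : HasCompactSupport ψ) (hη : 0 < η) :
    ∃ L : ℝ, 0 < L ∧ ∀ x, ∃ τ, |τ - x| < L ∧
      ∀ y, |mollifiedCount ψ a (y + τ) - mollifiedCount ψ a y| < η := by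
  simpa only [← Complex.ofReal_sub, Complex.norm_real, Real.norm_eq_abs, Real.dist_eq] using
    (hap.isBohrAP_mollifiedCount hψ hcomp).2 η hη

lemma apply_eq_zero_of_le_abs (hsupp : Function.support ψ ⊆ ball 0 δ) {t : ℝ} (ht : δ ≤ |t|) :
    ψ t = 0 := by
  by_contra h
  exact ht.not_gt (by simpa using hsupp h)

lemma IsGap.mollifiedCount_eq_zero {c : ℝ} (hc : IsGap a δ c)
    (hsupp : Function.support ψ ⊆ ball 0 δ) : mollifiedCount ψ a c = 0 := by
  have hzero : ∀ n, ψ (c - a n) = 0 := fun n ↦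
    apply_eq_zero_of_le_abs hsupp (by rw [abs_sub_comm]; exact hc n)
  simp only [mollifiedCount, hzero, tsum_zero]

lemma summable_mollifiedCount (ha : Tendsto a cofinite (cocompact ℝ))
    (hsupp : Function.support ψ ⊆ ball 0 δ) (t : ℝ) : Summable fun n ↦ ψ (t - a n) := by
  refine summable_of_hasFiniteSupport
    ((finite_preimage_Icc ha (t - δ) (t + δ)).subset fun n hn ↦ ?_)
  obtain ⟨h1, h2⟩ := abs_lt.1 (mem_ball_zero_iff.1 (hsupp hn))
  constructor <;> linarith

lemma apply_zero_le_mollifiedCount (ha : Tendsto a cofinite (cocompact ℝ))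
    (hsupp : Function.support ψ ⊆ ball 0 δ) (hψ0 : 0 ≤ ψ) (n : ℤ) :
    ψ 0 ≤ mollifiedCount ψ a (a n) := by
  simpa only [mollifiedCount, sub_self] using
    (summable_mollifiedCount ha hsupp (a n)).le_tsum n fun j _ ↦ hψ0 (a n - a j)

/-- The mollified count vanishes on a gap and is at least `ψ 0` at a term, so an almost period of
accuracy `ψ 0` cannot carry the gap to a term. -/
lemma IsGap.add_almostPeriod {c : ℝ} (hc : IsGap a (2 * δ) c)
    (ha : Tendsto a cofinite (cocompact ℝ)) (hψ0 : 0 ≤ ψ)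
    (hsupp : Function.support ψ ⊆ ball 0 δ)
    (hτ : ∀ y, |mollifiedCount ψ a (y + τ) - mollifiedCount ψ a y| < ψ 0) :
    IsGap a δ (c + τ) := by
  intro n
  by_contra! hn
  have hgap : IsGap a δ (a n - τ) := by
    intro m
    have htri := abs_sub_abs_le_abs_sub (a m - c) (a n - (c + τ))
    rw [show a m - c - (a n - (c + τ)) = a m - (a n - τ) by ring] at htri
    linarith [hc m]
  have hsmall := hτ (a n - τ)
  rw [hgap.mollifiedCount_eq_zero hsupp, sub_add_cancel, sub_zero] at hsmall
  exact ((apply_zero_le_mollifiedCount ha hsupp hψ0 n).trans (le_abs_self _)).not_gt hsmall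

lemma intervalIntegral_comp_sub_eq_integral {E : Type*} [NormedAddCommGroup E] [NormedSpace ℝ E]
    {f : ℝ → E} (hsupp : Function.support f ⊆ ball 0 δ) {b c x : ℝ} (hb : b + δ ≤ x)
    (hc : x + δ ≤ c) : ∫ t in b..c, f (t - x) = ∫ t, f t := by
  rw [intervalIntegral.integral_comp_sub_right,
    intervalIntegral.integral_eq_integral_of_support_subset]
  intro t ht
  obtain ⟨h1, h2⟩ := abs_lt.1 (mem_ball_zero_iff.1 (hsupp ht))
  constructor <;> linarith

lemma mollifiedCount_eq_sum_of_isGap (hmono : Monotone a)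
    (ha : Tendsto a cofinite (cocompact ℝ)) (hsupp : Function.support ψ ⊆ ball 0 δ) {b c t : ℝ}
    (hb : IsGap a δ b) (hc : IsGap a δ c) (ht : t ∈ Set.Icc b c) :
    mollifiedCount ψ a t =
      ∑ n ∈ Finset.Ico (countingIndex a b) (countingIndex a c), ψ (t - a n) := by
  refine tsum_eq_sum fun n hn ↦ apply_eq_zero_of_le_abs hsupp ?_
  rw [Finset.mem_Ico, countingIndex_le_iff hmono ha, lt_countingIndex_iff hmono ha,
    not_and_or, not_lt, not_le] at hn
  rcases hn with hnb | hnc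
  · exact le_abs.2 (.inl (by linarith [hb.apply_add_le hnb, ht.1]))
  · exact le_abs.2 (.inr (by linarith [hc.add_le_apply hnc.le, ht.2]))

lemma integral_mollifiedCount_of_isGap (hmono : Monotone a)
    (ha : Tendsto a cofinite (cocompact ℝ)) (hψ : Continuous ψ)
    (hsupp : Function.support ψ ⊆ ball 0 δ) (hint : ∫ t, ψ t = 1) {b c : ℝ} (hbc : b ≤ c)
    (hb : IsGap a δ b) (hc : IsGap a δ c) :
    ∫ t in b..c, mollifiedCount ψ a t = countingIndex a c - countingIndex a b := by
  have hone : ∀ n ∈ Finset.Ico (countingIndex a b) (countingIndex a c),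
      ∫ t in b..c, ψ (t - a n) = 1 := by
    intro n hn
    rw [Finset.mem_Ico, countingIndex_le_iff hmono ha, lt_countingIndex_iff hmono ha] at hn
    rw [intervalIntegral_comp_sub_eq_integral hsupp (hb.add_le_apply hn.1.le)
      (hc.apply_add_le hn.2), hint]
  calc ∫ t in b..c, mollifiedCount ψ a t
      = ∫ t in b..c, ∑ n ∈ Finset.Ico (countingIndex a b) (countingIndex a c), ψ (t - a n) :=
        intervalIntegral.integral_congr fun t ht ↦
          mollifiedCount_eq_sum_of_isGap hmono ha hsupp hb hc (Set.uIcc_of_le hbc ▸ ht)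
    _ = ∑ n ∈ Finset.Ico (countingIndex a b) (countingIndex a c), ∫ t in b..c, ψ (t - a n) :=
        intervalIntegral.integral_finsetSum fun n _ ↦
          Continuous.intervalIntegrable (by fun_prop) _ _
    _ = countingIndex a c - countingIndex a b := by
        rw [Finset.sum_congr rfl hone, Finset.sum_const, nsmul_one,
          intCast_card_Ico (countingIndex_mono hmono ha hbc)]

/-- Both sides are integrals of the mollified count over intervals that differ by the translation
`τ`; they are integers at distance less than `1`. -/
lemma countingIndex_add_sub_eq (hmono : Monotone a) (ha : Tendsto a cofinite (cocompact ℝ))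
    (hψ : Continuous ψ) (hsupp : Function.support ψ ⊆ ball 0 δ) (hint : ∫ t, ψ t = 1)
    (hcont : Continuous (mollifiedCount ψ a)) {b c : ℝ} (hbc : b ≤ c)
    (hb : IsGap a δ b) (hc : IsGap a δ c) (hbτ : IsGap a δ (b + τ)) (hcτ : IsGap a δ (c + τ))
    (hτ : ∀ y, |mollifiedCount ψ a (y + τ) - mollifiedCount ψ a y| ≤ η) (hη : η * (c - b) < 1) :
    countingIndex a (c + τ) - countingIndex a (b + τ) =
      countingIndex a c - countingIndex a b := by
  have hclose : ‖∫ t in b..c, (mollifiedCount ψ a (t + τ) - mollifiedCount ψ a t)‖ < 1 := by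
    refine (intervalIntegral.norm_integral_le_of_norm_le_const fun t _ ↦ hτ t).trans_lt ?_
    rwa [abs_of_nonneg (sub_nonneg.2 hbc)]
  rw [intervalIntegral.integral_sub (Continuous.intervalIntegrable (by fun_prop) _ _)
      (hcont.intervalIntegrable _ _), intervalIntegral.integral_comp_add_right,
    integral_mollifiedCount_of_isGap hmono ha hψ hsupp hint hbc hb hc,
    integral_mollifiedCount_of_isGap hmono ha hψ hsupp hint (by gcongr) hbτ hcτ,
    Real.norm_eq_abs] at hclose
  exact sub_eq_zero.1 (Int.abs_lt_one_iff.1 (mod_cast hclose))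

end Mollification

section AlmostShift

variable {a : ℤ → ℝ} {ψ : ℝ → ℝ} {D δ e τ : ℝ} {p : ℤ}

/-- Moving the index by `p` translates the sequence `a` by `τ`, up to an error `e`. -/
def IsAlmostShift (a : ℤ → ℝ) (e τ : ℝ) (p : ℤ) : Prop :=
  ∀ n, |a (n + p) - a n - τ| ≤ e

lemma isAlmostShift_of_countingIndex_add (hmono : Monotone a)
    (ha : Tendsto a cofinite (cocompact ℝ)) (he : 0 < e) {c : ℤ → ℝ}
    (hc : ∀ i : ℤ, c i ∈ Set.Icc (i * e) (i * e + e))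
    (hp : ∀ i, countingIndex a (c i + τ) - countingIndex a (c i) = p) :
    IsAlmostShift a (2 * e) τ p := by
  intro n
  obtain ⟨i, hi1, hi2⟩ : ∃ i : ℤ, i * e < a n ∧ a n ≤ (i + 1) * e := by
    refine ⟨⌈a n / e⌉ - 1, ?_, ?_⟩
    · rw [← lt_div_iff₀ he]
      push_cast
      linarith [Int.ceil_lt_add_one (a n / e)]
    · rw [← div_le_iff₀ he]
      push_cast
      linarith [Int.le_ceil (a n / e)]
  have hprev := hc (i - 1)
  have hnext := hc (i + 1)
  push_cast at hprev hnext
  have hn1 : countingIndex a (c (i - 1)) ≤ n :=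
    (countingIndex_le_iff hmono ha).2 (by linarith [hprev.2])
  have hn2 : n < countingIndex a (c (i + 1)) :=
    (lt_countingIndex_iff hmono ha).2 (hi2.trans hnext.1)
  have hlower : c (i - 1) + τ < a (n + p) :=
    (countingIndex_le_iff hmono ha).1 (by linarith [hp (i - 1)])
  have hupper : a (n + p) ≤ c (i + 1) + τ :=
    (lt_countingIndex_iff hmono ha).1 (by linarith [hp (i + 1)])
  exact abs_le.2 ⟨by linarith [hprev.1], by linarith [hnext.2]⟩

lemma exists_normed_bump (hδ : 0 < δ) :
    ∃ ψ : ℝ → ℝ, ContDiff ℝ (⊤ : ℕ∞) ψ ∧ HasCompactSupport ψ ∧ 0 ≤ ψ ∧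
      Function.support ψ = ball 0 δ ∧ ∫ t, ψ t = 1 := by
  let b : ContDiffBump (0 : ℝ) := ⟨δ / 2, δ, half_pos hδ, half_lt_self hδ⟩
  exact ⟨b.normed volume, b.contDiff_normed, b.hasCompactSupport_normed,
    b.nonneg_normed, b.support_normed_eq, b.integral_normed⟩

/-- The almost period `τ` moves the gaps `c i` to gaps without changing the number of terms between
consecutive ones, so it moves all the counting indices `countingIndex a (c i)` by the same `p`. -/
lemma exists_isAlmostShift_of_almostPeriod (hmono : Monotone a)
    (ha : Tendsto a cofinite (cocompact ℝ)) (hψ : Continuous ψ) (hψ0 : 0 ≤ ψ)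
    (hsupp : Function.support ψ ⊆ ball 0 δ) (hint : ∫ t, ψ t = 1)
    (hcont : Continuous (mollifiedCount ψ a)) (hδ : 0 ≤ δ) (he : 0 < e) {c : ℤ → ℝ}
    (hc : ∀ i : ℤ, c i ∈ Set.Icc (i * e) (i * e + e)) (hgap : ∀ i, IsGap a (2 * δ) (c i))
    (hτ : ∀ y, |mollifiedCount ψ a (y + τ) - mollifiedCount ψ a y| < min (ψ 0) (1 / (4 * e))) :
    ∃ p, IsAlmostShift a (2 * e) τ p := by
  have hgapδ : ∀ i, IsGap a δ (c i) := fun i ↦ (hgap i).anti (by linarith)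
  have hgapτ : ∀ i, IsGap a δ (c i + τ) := fun i ↦
    (hgap i).add_almostPeriod ha hψ0 hsupp fun y ↦ (hτ y).trans_le (min_le_left _ _)
  have hstep : Function.Periodic
      (fun i ↦ countingIndex a (c i + τ) - countingIndex a (c i)) 1 := by
    intro i
    have hi := hc i
    have hi' := hc (i + 1)
    push_cast at hi'
    have hshort : 1 / (4 * e) * (c (i + 1) - c i) < 1 := by
      rw [one_div_mul_eq_div, div_lt_one (by positivity)]
      linarith [hi.1, hi'.2]
    have := countingIndex_add_sub_eq hmono ha hψ hsupp hint hcont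
      (by linarith [hi.2, hi'.1]) (hgapδ i) (hgapδ (i + 1)) (hgapτ i) (hgapτ (i + 1))
      (fun y ↦ (hτ y).le.trans (min_le_right _ _)) hshort
    dsimp only
    linarith
  refine ⟨countingIndex a (c 0 + τ) - countingIndex a (c 0),
    isAlmostShift_of_countingIndex_add hmono ha he hc fun i ↦ ?_⟩
  simpa using hstep.int_mul_eq i

lemma IsAPSeqZ.exists_isAlmostShift (hap : IsAPSeqZ a) (hmono : Monotone a)
    {M : ℕ} (hM : ∀ n m : ℤ, a m - a n ≤ 1 → m - n < M) (he : 0 < e) (he1 : e ≤ 1) :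
    ∃ L : ℝ, 0 < L ∧ ∀ x : ℝ, ∃ (τ : ℝ) (p : ℤ), |τ - x| < L ∧ IsAlmostShift a (2 * e) τ p := by
  have ha := tendsto_cocompact_of_cntZ_ball_lt_top hap.1
  obtain ⟨δ, hδ, heδ⟩ : ∃ δ : ℝ, 0 < δ ∧ 2 * (2 * δ) * (M + 1) = e :=
    ⟨e / (4 * (M + 1)), by positivity, by field_simp; norm_num⟩
  choose c hc hgap using fun i : ℤ ↦
    exists_isGap_mem_Icc hmono hM (by positivity) (heδ.trans_le he1) (i * e)
  rw [heδ] at hc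
  obtain ⟨ψ, hψ, hcomp, hψ0, hsupp, hint⟩ := exists_normed_bump hδ
  have hψ0_ne : ψ 0 ≠ 0 := by
    rw [← Function.mem_support, hsupp]
    exact mem_ball_self hδ
  have hψ0_pos : 0 < ψ 0 := (hψ0 0).lt_of_ne' hψ0_ne
  obtain ⟨L, hL, hperiod⟩ := hap.exists_almostPeriod hψ hcomp
    (η := min (ψ 0) (1 / (4 * e))) (by positivity)
  refine ⟨L, hL, fun x ↦ ?_⟩
  obtain ⟨τ, hτx, hτ⟩ := hperiod x
  obtain ⟨p, hp⟩ := exists_isAlmostShift_of_almostPeriod hmono ha hψ.continuous hψ0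
    hsupp.subset hint (hap.continuous_mollifiedCount hψ hcomp) hδ.le he hc hgap hτ
  exact ⟨τ, p, hτx, hp⟩

lemma IsAlmostShift.abs_iterate_le (h : IsAlmostShift a e τ p) (k : ℕ) :
    |a (k * p) - a 0 - k * τ| ≤ k * e := by
  induction k with
  | zero => simp
  | succ k ih =>
    have hstep := h (k * p)
    rw [show ((k + 1 : ℕ) : ℤ) * p = k * p + p by push_cast; ring]
    push_cast
    calc |a (k * p + p) - a 0 - (k + 1) * τ|
        = |(a (k * p) - a 0 - k * τ) + (a (k * p + p) - a (k * p) - τ)| := by ring_nf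
      _ ≤ |a (k * p) - a 0 - k * τ| + |a (k * p + p) - a (k * p) - τ| := abs_add_le _ _
      _ ≤ (k + 1) * e := by linarith

lemma le_of_forall_natCast_mul_le_add {x y C : ℝ} (h : ∀ k : ℕ, k * x ≤ k * y + C) : x ≤ y := by
  by_contra! hxy
  obtain ⟨k, hk⟩ := exists_nat_gt (C / (x - y))
  rw [div_lt_iff₀ (sub_pos.2 hxy)] at hk
  linarith [h k]

/-- Iterating the shift `k` times and letting `k → ∞` compares `τ` with the mean displacement
`p / D`. -/
lemma IsAlmostShift.abs_div_density_sub_le (h : IsAlmostShift a e τ p)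
    (hden : HasDensityZ a D) (hD : 0 < D) (hmono : Monotone a)
    (ha : Tendsto a cofinite (cocompact ℝ)) : |p / D - τ| ≤ e := by
  have hbound : ∀ ε > 0, |p - D * τ| ≤ D * e + ε * (|τ| + e) := by
    intro ε hε
    obtain ⟨C, hC⟩ := hden.exists_abs_index_sub_le hD.le hmono ha hε
    refine le_of_forall_natCast_mul_le_add (C := C) fun k ↦ ?_
    have hiter := h.abs_iterate_le k
    have hdisp : |a (k * p) - a 0| ≤ k * (|τ| + e) := by
      have htri := abs_sub_abs_le_abs_sub (a (k * p) - a 0) (k * τ)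
      rw [abs_mul, Nat.abs_cast] at htri
      linarith
    have hindex := hC 0 (k * p)
    push_cast at hindex
    rw [sub_zero] at hindex
    calc k * |p - D * τ|
        = |(k * p - D * (a (k * p) - a 0)) + D * (a (k * p) - a 0 - k * τ)| := by
          rw [← Nat.abs_cast k, ← abs_mul, Nat.abs_cast]
          ring_nf
      _ ≤ |k * p - D * (a (k * p) - a 0)| + D * |a (k * p) - a 0 - k * τ| := by
          simpa only [abs_mul, abs_of_pos hD] using
            abs_add_le (k * p - D * (a (k * p) - a 0)) (D * (a (k * p) - a 0 - k * τ))
      _ ≤ (ε * (k * (|τ| + e)) + C) + D * (k * e) := by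
          gcongr
          exact hindex.trans (by gcongr)
      _ = k * (D * e + ε * (|τ| + e)) + C := by ring
  have htendsto : Tendsto (fun ε ↦ D * e + ε * (|τ| + e)) (𝓝[>] 0) (𝓝 (D * e)) := by
    have hcont : Continuous fun ε ↦ D * e + ε * (|τ| + e) := by fun_prop
    simpa using (hcont.tendsto 0).mono_left nhdsWithin_le_nhds
  have hlim : |p - D * τ| ≤ D * e :=
    ge_of_tendsto htendsto (eventually_mem_nhdsWithin.mono hbound)
  rwa [div_sub' hD.ne', abs_div, abs_of_pos hD, div_le_iff₀ hD, mul_comm e]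

lemma IsAlmostShift.abs_sub_div_density_le (h : IsAlmostShift a e τ p)
    (hden : HasDensityZ a D) (hD : 0 < D) (hmono : Monotone a)
    (ha : Tendsto a cofinite (cocompact ℝ)) (n : ℤ) :
    |(a (n + p) - (n + p : ℤ) / D) - (a n - n / D)| ≤ 2 * e := by
  calc |(a (n + p) - (n + p : ℤ) / D) - (a n - n / D)|
      = |(a (n + p) - a n - τ) - (p / D - τ)| := by push_cast; ring_nf
    _ ≤ |a (n + p) - a n - τ| + |p / D - τ| := abs_sub _ _
    _ ≤ 2 * e := by linarith [h n, h.abs_div_density_sub_le hden hD hmono ha]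

end AlmostShift

/-- Let `A = {a_n}_{n∈ℤ} ⊂ ℝ` be an almost periodic set of density `D`,
numbered so that `a_n ≤ a_{n+1}`. Then `a_n = n/D + φ(n)` for an almost periodic function
`φ : ℤ → ℝ`. -/
theorem statement10 (a : ℤ → ℝ) (D : ℝ) (hD : 0 < D) (hmono : Monotone a)
    (hap : IsAPSeqZ a) (hden : HasDensityZ a D) :
    ∃ φ : ℤ → ℝ, IsAPZfun φ ∧ ∀ n : ℤ, a n = (n : ℝ) / D + φ n := by
  have ha := tendsto_cocompact_of_cntZ_ball_lt_top hap.1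
  refine ⟨fun n ↦ a n - n / D, fun ε hε ↦ ?_, fun n ↦ (add_sub_cancel _ _).symm⟩
  obtain ⟨e, he, he1, heε⟩ : ∃ e : ℝ, 0 < e ∧ e ≤ 1 ∧ 4 * e < ε :=
    ⟨min 1 (ε / 5), by positivity, min_le_left _ _, by linarith [min_le_right 1 (ε / 5)]⟩
  obtain ⟨M, hM⟩ := hden.exists_index_sub_lt_of_sub_le_one hD.le hmono ha
  obtain ⟨L, hL, hshift⟩ := hap.exists_isAlmostShift hmono hM he he1
  refine ⟨⌈D * (2 * e + L)⌉, Int.ceil_pos.2 (by positivity), fun m ↦ ?_⟩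
  obtain ⟨τ, p, hτ, hp⟩ := hshift (m / D)
  have hpm : |(p : ℝ) - m| ≤ D * (2 * e + L) := by
    calc |(p : ℝ) - m| = D * |(p / D - τ) + (τ - m / D)| := by
          rw [← abs_of_pos hD, ← abs_mul, abs_of_pos hD]
          congr 1
          field_simp
          ring
      _ ≤ D * (2 * e + L) := by
          gcongr
          exact (abs_add_le _ _).trans
            (add_le_add (hp.abs_div_density_sub_le hden hD hmono ha) hτ.le)
  refine ⟨p, mod_cast hpm.trans (Int.le_ceil _), fun n ↦ ?_⟩
  linarith [hp.abs_sub_div_density_le hden hD hmono ha n]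

end
end
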